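/- If x ∈ (0,1) is an irrational algebraic number, then for every integer base q ≥ 2 the complexity function p(n) of its base-q digit sequence satisfies liminf_{n→∞} p(n)/n = +∞ (Adamczewski–Bugeaud). -/

import Mathlib

open Filter MeasureTheory Topology
open scoped Classical

/-- The `(n+1)`-st digit (i.e. `ε_{n+1}`, `0`-indexed by `n`) of the base-`q` expansion of `x`,
chosen as the greedy expansion (never eventually equal to `q - 1`). -/
noncomputable def qdigit (q : ℕ) (x : ℝ) (n : ℕ) : ℕ :=
  (⌊x * (q : ℝ) ^ (n + 1)⌋).toNat % q

/-- The complexity function of `x` to base `q`: the number of distinct words of length `n`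
occurring as blocks of consecutive digits in the base-`q` digit sequence of `x`. -/
noncomputable def qComplexity (q : ℕ) (x : ℝ) (n : ℕ) : ℕ :=
  Set.ncard {w : Fin n → ℕ | ∃ k : ℕ, ∀ i : Fin n, qdigit q x (k + (i : ℕ)) = w i}

/-!
If `p n ≤ C * n`, the pigeonhole principle gives two equal blocks of `n` digits near the start of
the expansion, hence a long repetition: `x * q ^ r * (q ^ t - 1)` is within `q ^ (-2 * κ * t)` of an
integer `p`, where `r ≤ 4 * C * t` and `κ = 1 / (4 * C)`. That this is impossible for large `t` is
the case of the `p`-adic subspace theorem behind Adamczewski and Bugeaud's argument; here it is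
obtained from the Thue–Siegel–Roth–Schmidt method for planes.

Rational approximations `n / d` of `x * q ^ r` yield two points `(X, Y, Z)` of `ℤ[1/q]³` spanning
the plane `X = q ^ (-t) * Y + p * q ^ (-(r + t)) * Z`, on which the product of the sizes of the
forms `X - x * Z`, `Y - x * Z`, `Z` and of the denominators of `X`, `Y`, `Z` is too small. Suppose
that there are infinitely many such planes, and choose `m` of them with rapidly growing `t`.
Siegel's lemma gives a nonzero integral form in `m` triples of variables which, written in terms of
the three linear forms, only involves monomials with balanced exponents; by Chebyshev's inequality
these are almost all the monomials. Its low-order Hasse derivatives on the `m` planes then become,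
once powers of `q` are cleared, integral polynomials with coefficients smaller than `1`, so they
vanish. Restricting the form to the planes turns this into a polynomial of large index at the slopes
`p * q ^ (-(r + t))`. These slopes approach the irrational algebraic number `x`, so by Liouville's
inequality their heights grow with `t`, and Roth's lemma is contradicted.
-/

namespace AdamczewskiBugeaud

open MvPolynomial Finset

section HasseDerivative

variable {σ R S : Type*} [CommSemiring R] [CommSemiring S]

/-- The multi-index binomial coefficient `∏ i, (A i choose J i)`. -/
noncomputable def multiBinom (A J : σ →₀ ℕ) : ℕ := J.prod fun i j => (A i).choose j

lemma multiBinom_eq_prod_univ [Fintype σ] (A J : σ →₀ ℕ) :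
    multiBinom A J = ∏ i, (A i).choose (J i) :=
  Finsupp.prod_fintype _ _ fun _ => Nat.choose_zero_right _

lemma multiBinom_eq_prod_of_support_subset {A J : σ →₀ ℕ} {s : Finset σ} (hs : J.support ⊆ s) :
    multiBinom A J = ∏ i ∈ s, (A i).choose (J i) :=
  Finsupp.prod_of_support_subset J hs _ fun _ _ => Nat.choose_zero_right _

lemma multiBinom_eq_zero {A J : σ →₀ ℕ} (h : ¬ J ≤ A) : multiBinom A J = 0 := by
  obtain ⟨i, hi⟩ := not_forall.1 h
  exact prod_eq_zero (Finsupp.mem_support_iff.2 (by omega))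
    (Nat.choose_eq_zero_of_lt (not_le.1 hi))

lemma multiBinom_add_single (A J : σ →₀ ℕ) (i : σ) :
    multiBinom (A + Finsupp.single i 1) J =
      multiBinom A J + if i ∈ J.support then multiBinom A (J - Finsupp.single i 1) else 0 := by
  have hJ : J.support ⊆ insert i J.support := subset_insert _ _
  have hJ' : (J - Finsupp.single i 1).support ⊆ insert i J.support :=
    Finsupp.support_tsub.trans hJ
  have hmem : i ∈ insert i J.support := mem_insert_self _ _
  rw [multiBinom_eq_prod_of_support_subset hJ, multiBinom_eq_prod_of_support_subset hJ,
    multiBinom_eq_prod_of_support_subset hJ', ← mul_prod_erase _ _ hmem,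
    ← mul_prod_erase _ _ hmem, ← mul_prod_erase _ _ hmem]
  have hleft : ∏ j ∈ (insert i J.support).erase i,
      ((A + Finsupp.single i 1 : σ →₀ ℕ) j).choose (J j) =
      ∏ j ∈ (insert i J.support).erase i, (A j).choose (J j) :=
    prod_congr rfl fun j hj => by simp [(ne_of_mem_erase hj).symm]
  have hright : ∏ j ∈ (insert i J.support).erase i,
      (A j).choose ((J - Finsupp.single i 1 : σ →₀ ℕ) j) =
      ∏ j ∈ (insert i J.support).erase i, (A j).choose (J j) :=
    prod_congr rfl fun j hj => by simp [(ne_of_mem_erase hj).symm]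
  rw [hleft, hright]
  split_ifs with h
  · obtain ⟨c, hc⟩ := Nat.exists_eq_succ_of_ne_zero (Finsupp.mem_support_iff.1 h)
    simp only [Finsupp.add_apply, Finsupp.single_eq_same, Finsupp.tsub_apply, hc,
      Nat.succ_eq_add_one, Nat.choose_succ_succ, add_tsub_cancel_right]
    ring
  · simp [Finsupp.notMem_support_iff.1 h]

lemma multiBinom_mul_multiBinom (B I J : σ →₀ ℕ) :
    multiBinom (B + J) J * multiBinom (B + J + I) I =
      multiBinom (I + J) I * multiBinom (B + (I + J)) (I + J) := by
  have hI : I.support ⊆ I.support ∪ J.support := subset_union_left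
  have hJ : J.support ⊆ I.support ∪ J.support := subset_union_right
  have hIJ : (I + J).support ⊆ I.support ∪ J.support := Finsupp.support_add
  simp only [multiBinom_eq_prod_of_support_subset hI, multiBinom_eq_prod_of_support_subset hJ,
    multiBinom_eq_prod_of_support_subset hIJ, ← prod_mul_distrib]
  refine prod_congr rfl fun i _ => ?_
  have h := Nat.choose_mul (n := B i + J i + I i) (k := I i + J i) (s := I i) (by omega)
  rw [Nat.add_sub_cancel, Nat.add_sub_cancel_left] at h
  simp only [Finsupp.add_apply]
  rw [mul_comm, ← h, mul_comm, add_comm (I i) (J i), ← add_assoc]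

lemma single_le_of_mem_support {A : σ →₀ ℕ} {i : σ} (h : i ∈ A.support) :
    Finsupp.single i 1 ≤ A :=
  Finsupp.single_le_iff.2 (Nat.one_le_iff_ne_zero.2 (Finsupp.mem_support_iff.1 h))

/-- The Taylor expansion `P(X) ↦ P(X + Y)`, as a polynomial in `X` whose coefficients are
polynomials in `Y`. -/
noncomputable def taylorExpansion :
    MvPolynomial σ R →ₐ[R] MvPolynomial σ (MvPolynomial σ R) :=
  aeval fun i => X i + C (X i)

/-- The Hasse derivative `(1 / J!) ∂ᴶ` of a multivariate polynomial, defined without division as a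
coefficient of the Taylor expansion. -/
noncomputable def hasseDeriv (J : σ →₀ ℕ) : MvPolynomial σ R →ₗ[R] MvPolynomial σ R :=
  (lcoeff (MvPolynomial σ R) J).restrictScalars R ∘ₗ taylorExpansion.toLinearMap

lemma hasseDeriv_apply (J : σ →₀ ℕ) (P : MvPolynomial σ R) :
    hasseDeriv J P = coeff J (taylorExpansion P) := rfl

lemma hasseDeriv_mul (J : σ →₀ ℕ) (P Q : MvPolynomial σ R) :
    hasseDeriv J (P * Q) = ∑ x ∈ antidiagonal J, hasseDeriv x.1 P * hasseDeriv x.2 Q := by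
  simp only [hasseDeriv_apply, map_mul, coeff_mul]

lemma hasseDeriv_C (J : σ →₀ ℕ) (a : R) :
    hasseDeriv J (C a : MvPolynomial σ R) = if J = 0 then C a else 0 := by
  rw [hasseDeriv_apply, taylorExpansion, aeval_C, IsScalarTower.algebraMap_apply R
    (MvPolynomial σ R), algebraMap_eq, algebraMap_eq, coeff_C]
  simp only [eq_comm]

lemma hasseDeriv_mul_X (J : σ →₀ ℕ) (i : σ) (P : MvPolynomial σ R) :
    hasseDeriv J (P * X i) = hasseDeriv J P * X i +
      if i ∈ J.support then hasseDeriv (J - Finsupp.single i 1) P else 0 := by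
  have hX : taylorExpansion (X i : MvPolynomial σ R) = X i + C (X i) := aeval_X _ _
  rw [hasseDeriv_apply, map_mul, hX, mul_add, coeff_add, coeff_mul_X', mul_comm _ (C _),
    coeff_C_mul, mul_comm (X i), add_comm]
  rfl

lemma coeff_hasseDeriv (J : σ →₀ ℕ) (P : MvPolynomial σ R) (B : σ →₀ ℕ) :
    coeff B (hasseDeriv J P) = (multiBinom (B + J) J : R) * coeff (B + J) P := by
  induction P using MvPolynomial.induction_on generalizing J B with
  | C a =>
    rw [hasseDeriv_C, coeff_C]
    by_cases hJ : J = 0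
    · simp [hJ, multiBinom, coeff_C]
    · have hBJ : ¬ 0 = B + J := fun h => hJ (add_eq_zero.1 h.symm).2
      simp [hJ, hBJ]
  | add p q hp hq => rw [map_add, coeff_add, hp, hq, coeff_add, mul_add]
  | mul_X p i hp =>
    have hP : coeff B (hasseDeriv J (p * X i)) =
        (if i ∈ B.support then coeff (B - Finsupp.single i 1) (hasseDeriv J p) else 0) +
          if i ∈ J.support then coeff B (hasseDeriv (J - Finsupp.single i 1) p) else 0 := by
      rw [hasseDeriv_mul_X, coeff_add, coeff_mul_X', apply_ite (coeff B), coeff_zero]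
    have hB (h : i ∈ B.support) : B - Finsupp.single i 1 + J = B + J - Finsupp.single i 1 :=
      tsub_add_eq_add_tsub (single_le_of_mem_support h)
    have hJ (h : i ∈ J.support) : B + (J - Finsupp.single i 1) = B + J - Finsupp.single i 1 :=
      (add_tsub_assoc_of_le (single_le_of_mem_support h) B).symm
    rw [hP, hp, hp, coeff_mul_X']
    by_cases hBJ : i ∈ (B + J).support
    · have hpascal := multiBinom_add_single (B + J - Finsupp.single i 1) J i
      rw [tsub_add_cancel_of_le (single_le_of_mem_support hBJ)] at hpascal
      rw [if_pos hBJ, hpascal]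
      by_cases hiB : i ∈ B.support <;> by_cases hiJ : i ∈ J.support
      · simp only [hiB, hiJ, if_true, hB, hJ, Nat.cast_add, add_mul]
      · simp only [hiB, hiJ, if_true, if_false, hB, add_zero]
      · have hle : ¬ J ≤ B + J - Finsupp.single i 1 := fun h => by
          have hle := h i
          simp only [Finsupp.tsub_apply, Finsupp.add_apply, Finsupp.single_eq_same,
            Finsupp.notMem_support_iff.1 hiB] at hle
          have := Finsupp.mem_support_iff.1 hiJ
          omega
        simp only [hiB, hiJ, if_true, if_false, hJ, multiBinom_eq_zero hle, zero_add]
      · simp_all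
    · simp_all

lemma hasseDeriv_monomial (J A : σ →₀ ℕ) (a : R) :
    hasseDeriv J (monomial A a) = monomial (A - J) ((multiBinom A J : R) * a) := by
  ext B
  rw [coeff_hasseDeriv, coeff_monomial, coeff_monomial]
  by_cases hJ : J ≤ A
  · simp only [eq_tsub_iff_add_eq_of_le hJ, eq_comm (a := A - J), eq_comm (a := A), mul_ite,
      mul_zero]
    split_ifs with h
    · rw [h]
    · rfl
  · have hA : A ≠ B + J := fun h => hJ (h ▸ le_add_self)
    simp [hA, multiBinom_eq_zero hJ]

lemma hasseDeriv_hasseDeriv (I J : σ →₀ ℕ) (P : MvPolynomial σ R) :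
    hasseDeriv J (hasseDeriv I P) = (multiBinom (I + J) I : R) • hasseDeriv (I + J) P := by
  ext B
  have hB : B + J + I = B + (I + J) := by abel
  have h := congrArg (Nat.cast (R := R)) (multiBinom_mul_multiBinom B I J)
  push_cast at h
  rw [coeff_hasseDeriv, coeff_hasseDeriv, coeff_smul, coeff_hasseDeriv, smul_eq_mul, ← mul_assoc,
    ← mul_assoc, h, hB]

lemma hasseDeriv_map (f : R →+* S) (J : σ →₀ ℕ) (P : MvPolynomial σ R) :
    hasseDeriv J (map f P) = map f (hasseDeriv J P) := by
  ext B
  rw [coeff_hasseDeriv, coeff_map, coeff_map, coeff_hasseDeriv, map_mul, map_natCast]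

lemma degreeOf_hasseDeriv_le (J : σ →₀ ℕ) (P : MvPolynomial σ R) (i : σ) :
    (hasseDeriv J P).degreeOf i ≤ P.degreeOf i := by
  rw [degreeOf_le_iff]
  intro B hB
  rw [mem_support_iff, coeff_hasseDeriv] at hB
  exact le_self_add.trans
    (degreeOf_le_iff.1 le_rfl (B + J) (mem_support_iff.2 (right_ne_zero_of_mul hB)))

end HasseDerivative

section Determinant

variable {n σ R : Type*} [Fintype n] [DecidableEq n]

lemma degreeOf_det_le [CommRing R] (M : Matrix n n (MvPolynomial σ R)) (i : σ) (e : ℕ)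
    (h : ∀ a b, (M a b).degreeOf i ≤ e) : M.det.degreeOf i ≤ Fintype.card n * e := by
  rw [Matrix.det_apply]
  refine (degreeOf_sum_le _ _ _).trans (Finset.sup_le fun p _ => ?_)
  calc degreeOf i (Equiv.Perm.sign p • ∏ a, M (p a) a)
      = degreeOf i (∏ a, M (p a) a) := by
        rcases Int.units_eq_one_or (Equiv.Perm.sign p) with h | h <;> simp [h, degreeOf_neg]
    _ ≤ ∑ a, (M (p a) a).degreeOf i := degreeOf_prod_le _ _ _
    _ ≤ ∑ _a : n, e := sum_le_sum fun _ _ => h _ _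
    _ = Fintype.card n * e := by simp

end Determinant

section L1Norm

variable {σ R : Type*} [SeminormedCommRing R]

/-- The `ℓ¹` norm of the coefficient vector of a polynomial, which is submultiplicative. -/
noncomputable def l1Norm (P : MvPolynomial σ R) : ℝ := ∑ A ∈ P.support, ‖coeff A P‖

lemma l1Norm_nonneg (P : MvPolynomial σ R) : 0 ≤ l1Norm P := sum_nonneg fun _ _ => norm_nonneg _

lemma l1Norm_eq_sum_of_support_subset {P : MvPolynomial σ R} {S : Finset (σ →₀ ℕ)}
    (h : P.support ⊆ S) : l1Norm P = ∑ A ∈ S, ‖coeff A P‖ :=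
  sum_subset h fun A _ hA => by rw [notMem_support_iff.1 hA, norm_zero]

lemma norm_coeff_le_l1Norm (P : MvPolynomial σ R) (A : σ →₀ ℕ) : ‖coeff A P‖ ≤ l1Norm P := by
  rw [l1Norm_eq_sum_of_support_subset (subset_insert A P.support)]
  exact single_le_sum (f := fun A => ‖coeff A P‖) (fun _ _ => norm_nonneg _) (mem_insert_self _ _)

lemma l1Norm_zero : l1Norm (0 : MvPolynomial σ R) = 0 := by simp [l1Norm]

lemma l1Norm_neg (P : MvPolynomial σ R) : l1Norm (-P) = l1Norm P := by simp [l1Norm]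

lemma l1Norm_add_le (P Q : MvPolynomial σ R) : l1Norm (P + Q) ≤ l1Norm P + l1Norm Q := by
  rw [l1Norm_eq_sum_of_support_subset (P := P) (S := P.support ∪ Q.support) subset_union_left,
    l1Norm_eq_sum_of_support_subset (P := Q) (S := P.support ∪ Q.support) subset_union_right,
    l1Norm_eq_sum_of_support_subset (P := P + Q) support_add, ← sum_add_distrib]
  exact sum_le_sum fun A _ => by rw [coeff_add]; exact norm_add_le _ _

lemma l1Norm_sum_le {ι : Type*} (S : Finset ι) (f : ι → MvPolynomial σ R) :
    l1Norm (∑ i ∈ S, f i) ≤ ∑ i ∈ S, l1Norm (f i) :=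
  le_sum_of_subadditive l1Norm l1Norm_zero.le l1Norm_add_le S f

lemma l1Norm_monomial_le (A : σ →₀ ℕ) (a : R) : l1Norm (monomial A a) ≤ ‖a‖ := by
  rw [l1Norm_eq_sum_of_support_subset (S := {A}) support_monomial_subset]
  simp

lemma l1Norm_C_le (a : R) : l1Norm (C a : MvPolynomial σ R) ≤ ‖a‖ := l1Norm_monomial_le _ _

lemma l1Norm_mul_le (P Q : MvPolynomial σ R) : l1Norm (P * Q) ≤ l1Norm P * l1Norm Q := by
  have hPQ : P * Q = ∑ A ∈ P.support, ∑ B ∈ Q.support,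
      monomial (A + B) (coeff A P * coeff B Q) := by
    conv_lhs => rw [P.as_sum, Q.as_sum, sum_mul_sum]
    simp_rw [monomial_mul]
  calc l1Norm (P * Q)
      ≤ ∑ A ∈ P.support, ∑ B ∈ Q.support, ‖coeff A P * coeff B Q‖ := by
        rw [hPQ]
        exact (l1Norm_sum_le _ _).trans <| sum_le_sum fun A _ =>
          (l1Norm_sum_le _ _).trans <| sum_le_sum fun B _ => l1Norm_monomial_le _ _
    _ ≤ ∑ A ∈ P.support, ∑ B ∈ Q.support, ‖coeff A P‖ * ‖coeff B Q‖ :=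
        sum_le_sum fun A _ => sum_le_sum fun B _ => norm_mul_le _ _
    _ = l1Norm P * l1Norm Q := (sum_mul_sum _ _ _ _).symm

lemma l1Norm_prod_le [NormOneClass R] {ι : Type*} (S : Finset ι) (f : ι → MvPolynomial σ R) :
    l1Norm (∏ i ∈ S, f i) ≤ ∏ i ∈ S, l1Norm (f i) := by
  induction S using Finset.induction_on with
  | empty => simpa using l1Norm_C_le (σ := σ) (1 : R)
  | insert a S ha ih =>
    rw [prod_insert ha, prod_insert ha]
    exact (l1Norm_mul_le _ _).trans (mul_le_mul_of_nonneg_left ih (l1Norm_nonneg _))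

lemma l1Norm_pow_le [NormOneClass R] (P : MvPolynomial σ R) (n : ℕ) :
    l1Norm (P ^ n) ≤ l1Norm P ^ n := by
  simpa using l1Norm_prod_le (range n) fun _ => P

lemma l1Norm_det_le [NormOneClass R] {n : Type*} [Fintype n] [DecidableEq n]
    (M : Matrix n n (MvPolynomial σ R)) (E : ℝ) (h : ∀ a b, l1Norm (M a b) ≤ E) :
    l1Norm M.det ≤ (Fintype.card n).factorial * E ^ Fintype.card n := by
  have hterm (p : Equiv.Perm n) :
      l1Norm (Equiv.Perm.sign p • ∏ a, M (p a) a) ≤ E ^ Fintype.card n :=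
    calc l1Norm (Equiv.Perm.sign p • ∏ a, M (p a) a)
        = l1Norm (∏ a, M (p a) a) := by
          rcases Int.units_eq_one_or (Equiv.Perm.sign p) with h | h <;> simp [h, l1Norm_neg]
      _ ≤ ∏ a, l1Norm (M (p a) a) := l1Norm_prod_le _ _
      _ ≤ ∏ _a : n, E := prod_le_prod (fun _ _ => l1Norm_nonneg _) fun _ _ => h _ _
      _ = E ^ Fintype.card n := by simp
  rw [Matrix.det_apply]
  refine (l1Norm_sum_le _ _).trans ((sum_le_sum fun p _ => hterm p).trans_eq ?_)
  rw [sum_const, card_univ, Fintype.card_perm, nsmul_eq_mul]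

lemma l1Norm_hasseDeriv_le [Fintype σ] (J : σ →₀ ℕ) (P : MvPolynomial σ R)
    {d : σ → ℕ} (hd : ∀ i, P.degreeOf i ≤ d i) :
    l1Norm (hasseDeriv J P) ≤ 2 ^ (∑ i, d i) * l1Norm P := by
  have hbinom {A : σ →₀ ℕ} (hA : A ∈ P.support) : multiBinom A J ≤ 2 ^ (∑ i, d i) := by
    rw [multiBinom_eq_prod_univ, ← prod_pow_eq_pow_sum]
    exact prod_le_prod' fun i _ => (Nat.choose_le_two_pow _ _).trans
      (Nat.pow_le_pow_right two_pos (degreeOf_le_iff.1 (hd i) A hA))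
  conv_lhs => rw [P.as_sum, map_sum]
  refine (l1Norm_sum_le _ _).trans ?_
  rw [l1Norm, mul_sum]
  refine sum_le_sum fun A hA => ?_
  rw [hasseDeriv_monomial, ← nsmul_eq_mul]
  calc l1Norm (monomial (A - J) (multiBinom A J • coeff A P))
      ≤ ‖multiBinom A J • coeff A P‖ := l1Norm_monomial_le _ _
    _ ≤ multiBinom A J * ‖coeff A P‖ := norm_nsmul_le
    _ ≤ 2 ^ (∑ i, d i) * ‖coeff A P‖ := by gcongr; exact_mod_cast hbinom hA

end L1Norm

section Wronskian

variable {σ R : Type*}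

lemma multiBinom_mul_apply (A I : σ →₀ ℕ) (i : σ) :
    multiBinom A I * A i =
      (I i + 1) * multiBinom A (I + Finsupp.single i 1) + I i * multiBinom A I := by
  have hI : I.support ⊆ insert i I.support := subset_insert _ _
  have hI' : (I + Finsupp.single i 1).support ⊆ insert i I.support :=
    Finsupp.support_add.trans (union_subset hI
      (Finsupp.support_single_subset.trans (singleton_subset_iff.2 (mem_insert_self _ _))))
  have hmem : i ∈ insert i I.support := mem_insert_self _ _
  have hrest : ∏ j ∈ (insert i I.support).erase i,
      (A j).choose ((I + Finsupp.single i 1 : σ →₀ ℕ) j) =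
      ∏ j ∈ (insert i I.support).erase i, (A j).choose (I j) :=
    prod_congr rfl fun j hj => by simp [(ne_of_mem_erase hj).symm]
  have hchoose : (A i).choose (I i) * A i =
      (I i + 1) * (A i).choose (I i + 1) + I i * (A i).choose (I i) := by
    rw [mul_comm (I i + 1), Nat.choose_succ_right_eq, mul_comm (I i), ← mul_add]
    rcases le_or_gt (I i) (A i) with h | h
    · rw [Nat.sub_add_cancel h]
    · rw [Nat.choose_eq_zero_of_lt h, zero_mul, zero_mul]
  rw [multiBinom_eq_prod_of_support_subset hI, multiBinom_eq_prod_of_support_subset hI',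
    ← mul_prod_erase _ _ hmem, ← mul_prod_erase _ _ hmem, hrest]
  simp only [Finsupp.add_apply, Finsupp.single_eq_same]
  linear_combination (∏ j ∈ (insert i I.support).erase i, (A j).choose (I j)) * hchoose

lemma sum_mul_prod_sub_mul_multiBinom_eq_zero [CommRing R] {ι κ : Type*} {S : Finset ι}
    {A : ι → σ →₀ ℕ} {c : ι → R} {k : ℕ}
    (h : ∀ I : σ →₀ ℕ, I.degree < k → ∑ i ∈ S, c i * multiBinom (A i) I = 0)
    (t : κ → σ) (a : κ → R) (T : Finset κ) (I : σ →₀ ℕ) (hI : I.degree + #T < k) :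
    ∑ i ∈ S, c i * (∏ j ∈ T, ((A i (t j) : R) - a j)) * multiBinom (A i) I = 0 := by
  induction T using Finset.induction_on generalizing I with
  | empty => simpa using h I (by simpa using hI)
  | insert b T hb ih =>
    rw [card_insert_of_notMem hb] at hI
    have hI₀ := ih I (by omega)
    have hI₁ := ih (I + Finsupp.single (t b) 1) (by rw [map_add, Finsupp.degree_single]; omega)
    have hstep (i : ι) := congrArg (Nat.cast (R := R)) (multiBinom_mul_apply (A i) I (t b))
    push_cast at hstep
    calc ∑ i ∈ S, c i * (∏ j ∈ insert b T, ((A i (t j) : R) - a j)) * multiBinom (A i) I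
        = (I (t b) + 1) * (∑ i ∈ S, c i * (∏ j ∈ T, ((A i (t j) : R) - a j)) *
              multiBinom (A i) (I + Finsupp.single (t b) 1)) +
            (I (t b) - a b) *
              ∑ i ∈ S, c i * (∏ j ∈ T, ((A i (t j) : R) - a j)) * multiBinom (A i) I := by
          rw [mul_sum, mul_sum, ← sum_add_distrib]
          refine sum_congr rfl fun i _ => ?_
          rw [prod_insert hb]
          linear_combination (c i * ∏ j ∈ T, ((A i (t j) : R) - a j)) * hstep i
      _ = 0 := by rw [hI₀, hI₁, mul_zero, mul_zero, add_zero]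

lemma eq_zero_of_sum_mul_multiBinom_eq_zero [CommRing R] [IsDomain R] [CharZero R] {ι : Type*}
    {S : Finset ι} {A : ι → σ →₀ ℕ} (hA : Set.InjOn A S) {c : ι → R}
    (h : ∀ I : σ →₀ ℕ, I.degree < #S → ∑ i ∈ S, c i * multiBinom (A i) I = 0) :
    ∀ i ∈ S, c i = 0 := by
  intro i₀ hi₀
  have hsep (j : ↥(S.erase i₀)) : ∃ t, A j t ≠ A i₀ t :=
    DFunLike.ne_iff.1 fun e =>
      (mem_erase.1 j.2).1 (hA (mem_of_mem_erase j.2) hi₀ e)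
  choose t ht using hsep
  have hsum := sum_mul_prod_sub_mul_multiBinom_eq_zero h t (fun j => (A j (t j) : R)) univ 0 (by
    rw [card_univ, Fintype.card_coe, card_erase_of_mem hi₀, map_zero]
    have := card_pos.2 ⟨i₀, hi₀⟩
    omega)
  rw [sum_eq_single_of_mem i₀ hi₀ fun j hj hne => by
    rw [prod_eq_zero (mem_univ (⟨j, mem_erase.2 ⟨hne, hj⟩⟩ : ↥(S.erase i₀))) (sub_self _),
      mul_zero, zero_mul]] at hsum
  have hprod : ∏ j, ((A i₀ (t j) : R) - A j (t j)) ≠ 0 :=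
    prod_ne_zero_iff.2 fun j _ => sub_ne_zero.2 (Nat.cast_injective.ne (ht j).symm)
  have hbinom : multiBinom (A i₀) 0 = 1 := Finsupp.prod_zero_index
  rw [hbinom, Nat.cast_one, mul_one] at hsum
  exact (mul_eq_zero.1 hsum).resolve_right hprod

lemma linearIndependent_of_degree_injective [CommRing R] [IsDomain R] (m : MonomialOrder σ)
    {ι : Type*} {F : ι → MvPolynomial σ R} (hF : ∀ i, F i ≠ 0)
    (hdeg : Function.Injective fun i => m.degree (F i)) : LinearIndependent R F := by
  rw [linearIndependent_iff']
  intro S c hc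
  by_contra! hne
  have hT : {i ∈ S | c i ≠ 0}.Nonempty := by simpa [Finset.Nonempty] using hne
  obtain ⟨i₀, hi₀, hmax⟩ := exists_max_image _ (fun i => m.toSyn (m.degree (F i))) hT
  rw [mem_filter] at hi₀
  have hcoeff := congrArg (coeff (m.degree (F i₀))) hc
  rw [coeff_sum, sum_eq_single_of_mem i₀ hi₀.1, coeff_smul, coeff_zero, smul_eq_mul] at hcoeff
  · exact mul_ne_zero hi₀.2 (m.coeff_degree_ne_zero_iff.2 (hF i₀)) hcoeff
  · intro i hi hii₀
    rw [coeff_smul, smul_eq_mul]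
    by_cases hci : c i = 0
    · rw [hci, zero_mul]
    · have hlt := (hmax i (mem_filter.2 ⟨hi, hci⟩)).lt_of_ne
        (m.toSyn.injective.ne (hdeg.ne hii₀))
      rw [m.coeff_eq_zero_of_lt hlt, mul_zero]

variable {ι : Type*} [Fintype ι]

lemma sum_mul_hasseDeriv [CommSemiring R] (g φ : ι → MvPolynomial σ R) (I : σ →₀ ℕ) :
    ∑ l, g l * hasseDeriv I (φ l) =
      ∑ B ∈ univ.biUnion fun l => (g l).support,
        monomial B 1 * hasseDeriv I (∑ l, coeff B (g l) • φ l) := by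
  have hterm (l : ι) : g l * hasseDeriv I (φ l) =
      ∑ B ∈ univ.biUnion fun l => (g l).support,
        monomial B 1 * hasseDeriv I (coeff B (g l) • φ l) := by
    conv_lhs => rw [(g l).as_sum, sum_mul]
    refine (sum_subset (subset_biUnion_of_mem (fun l => (g l).support) (mem_univ l))
      fun B _ hB => ?_).trans (sum_congr rfl fun B _ => ?_)
    · rw [notMem_support_iff.1 hB, monomial_zero, zero_mul]
    · rw [map_smul, mul_smul_comm, ← smul_mul_assoc, smul_monomial, smul_eq_mul, mul_one]
  simp_rw [hterm, map_sum, mul_sum]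
  exact sum_comm

lemma coeff_monomial_mul_hasseDeriv [CommSemiring R] (m : MonomialOrder σ) {F : MvPolynomial σ R}
    {B E : σ →₀ ℕ} (hE : m.toSyn (B + m.degree F) ≤ m.toSyn E) (I : σ →₀ ℕ) :
    coeff E (monomial I 1 * (monomial B 1 * hasseDeriv I F)) =
      if B + m.degree F = E then coeff (m.degree F) F * multiBinom (m.degree F) I else 0 := by
  have hIB : coeff (E - B) (monomial I 1 * hasseDeriv I F) =
      multiBinom (E - B) I * coeff (E - B) F := by
    rw [coeff_monomial_mul', coeff_hasseDeriv]
    split_ifs with h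
    · rw [tsub_add_cancel_of_le h, one_mul]
    · rw [multiBinom_eq_zero h, Nat.cast_zero, zero_mul]
  rw [mul_left_comm, coeff_monomial_mul', hIB, one_mul]
  split_ifs with hBE hEq hEq
  · rw [← hEq, add_tsub_cancel_left, mul_comm]
  · have hlt : m.toSyn (m.degree F) < m.toSyn (E - B) := by
      have h := hE.lt_of_ne (m.toSyn.injective.ne hEq)
      rw [← add_tsub_cancel_of_le hBE, map_add, map_add] at h
      exact lt_of_add_lt_add_left h
    rw [m.coeff_eq_zero_of_lt hlt, mul_zero]
  · exact absurd (hEq ▸ le_self_add) hBE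
  · rfl

lemma exists_sum_mul_hasseDeriv_ne_zero [CommRing R] [IsDomain R] [CharZero R]
    (m : MonomialOrder σ) {φ : ι → MvPolynomial σ R} (hφ : LinearIndependent R φ)
    {g : ι → MvPolynomial σ R} (hg : g ≠ 0) :
    ∃ I : σ →₀ ℕ, I.degree < Fintype.card ι ∧ ∑ l, g l * hasseDeriv I (φ l) ≠ 0 := by
  by_contra! hcon
  set U : Finset (σ →₀ ℕ) := univ.biUnion fun l => (g l).support
  set F : (σ →₀ ℕ) → MvPolynomial σ R := fun B => ∑ l, coeff B (g l) • φ l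
  have hF0 (B) (hB : B ∈ U) : F B ≠ 0 := fun h0 => by
    obtain ⟨l, -, hl⟩ := mem_biUnion.1 hB
    exact mem_support_iff.1 hl (Fintype.linearIndependent_iff.1 hφ _ h0 l)
  have hUne : U.Nonempty := by
    obtain ⟨l, hl⟩ := Function.ne_iff.1 hg
    obtain ⟨B, hB⟩ := nonempty_iff_ne_empty.2 (mt MvPolynomial.support_eq_empty.1 hl)
    exact ⟨B, mem_biUnion.2 ⟨l, mem_univ l, hB⟩⟩
  -- Only the terms whose leading exponent reaches the maximal `E` contribute to the coefficient
  -- of `X ^ E`; their leading exponents are distinct, so there are at most `card ι` of them.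
  obtain ⟨B₀, hB₀, hmax⟩ := exists_max_image U (fun B => m.toSyn (B + m.degree (F B))) hUne
  set E := B₀ + m.degree (F B₀)
  set S := {B ∈ U | B + m.degree (F B) = E} with hS
  have hinj : Set.InjOn (fun B => m.degree (F B)) S := fun B hB B' hB' hEq =>
    add_right_cancel (b := m.degree (F B)) ((mem_filter.1 hB).2.trans
      ((mem_filter.1 hB').2.symm.trans (congrArg (B' + ·) hEq.symm)))
  have hcard : #S ≤ Fintype.card ι := by
    have hli : LinearIndependent R fun B : S => F B :=
      linearIndependent_of_degree_injective m (fun B => hF0 B (mem_filter.1 B.2).1)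
        hinj.injective
    have hspan : Set.range (fun B : S => F B) ≤ Submodule.span R (Set.range φ) := by
      rintro _ ⟨B, rfl⟩
      exact Submodule.sum_mem _ fun l _ =>
        Submodule.smul_mem _ _ (Submodule.subset_span ⟨l, rfl⟩)
    simpa using (linearIndependent_le_span_aux' _ hli _ hspan).trans (Fintype.card_range_le φ)
  have hlead := eq_zero_of_sum_mul_multiBinom_eq_zero hinj
    (c := fun B => coeff (m.degree (F B)) (F B)) fun I hI => by
      have h := congrArg (fun P => coeff E (monomial I 1 * P)) (hcon I (hI.trans_le hcard))
      rw [sum_mul_hasseDeriv, mul_sum, coeff_sum, mul_zero, coeff_zero] at h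
      rw [hS, sum_filter]
      exact (sum_congr rfl fun B hB =>
        (coeff_monomial_mul_hasseDeriv m (hmax B hB) I).symm).trans h
  exact m.coeff_degree_ne_zero_iff.2 (hF0 B₀ hB₀) (hlead B₀ (mem_filter.2 ⟨hB₀, rfl⟩))

/-- The generalized Wronskian matrix of the polynomials `φ`, with differential operators `I`. -/
noncomputable def wronskianMatrix [CommSemiring R] {κ : Type*} (I : κ → σ →₀ ℕ)
    (φ : ι → MvPolynomial σ R) : Matrix κ ι (MvPolynomial σ R) :=
  Matrix.of fun i l => hasseDeriv (I i) (φ l)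

lemma exists_det_wronskianMatrix_ne_zero [CommRing R] [IsDomain R] [CharZero R]
    (m : MonomialOrder σ) {k : ℕ} {φ : Fin k → MvPolynomial σ R} (hφ : LinearIndependent R φ) :
    ∃ I : Fin k → σ →₀ ℕ, (∀ i, (I i).degree < k) ∧ (wronskianMatrix I φ).det ≠ 0 := by
  induction k with
  | zero => exact ⟨fun _ => 0, fun i => i.elim0, by simp⟩
  | succ k ih =>
    obtain ⟨I, hI, hdet⟩ := ih (hφ.comp _ (Fin.succ_injective k))
    let minor (j : Fin (k + 1)) := (wronskianMatrix I fun l => φ (j.succAbove l)).det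
    have hminor : (fun j : Fin (k + 1) => (-1) ^ (j : ℕ) * minor j) ≠ 0 := fun h => by
      have h0 := congrFun h 0
      simp only [Fin.val_zero, pow_zero, one_mul, Pi.zero_apply] at h0
      exact hdet h0
    obtain ⟨I₀, hI₀, hne⟩ := exists_sum_mul_hasseDeriv_ne_zero m hφ hminor
    refine ⟨Fin.cons I₀ I, Fin.cases (by simpa using hI₀) fun i => ?_, ?_⟩
    · rw [Matrix.det_succ_row_zero]
      convert hne using 1
      refine sum_congr rfl fun j _ => ?_
      have hsub : (wronskianMatrix (Fin.cons I₀ I) φ).submatrix Fin.succ j.succAbove =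
          wronskianMatrix I fun l => φ (j.succAbove l) := by
        ext1 i l
        simp [wronskianMatrix]
      rw [hsub]
      simp only [wronskianMatrix, Matrix.of_apply, Fin.cons_zero, minor]
      ring
    · rw [Fin.cons_succ]
      exact (hI i).trans k.lt_succ_self

end Wronskian

section OneVariable

lemma isPrimitive_pow {p : Polynomial ℤ} (hp : p.IsPrimitive) : ∀ n, (p ^ n).IsPrimitive
  | 0 => by simp
  | n + 1 => pow_succ p n ▸ (isPrimitive_pow hp n).mul hp

lemma isPrimitive_den_mul_X_sub_num (ξ : ℚ) :
    (Polynomial.C (ξ.den : ℤ) * Polynomial.X - Polynomial.C ξ.num).IsPrimitive := by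
  have hden : (ξ.den : ℤ) ≠ 0 := mod_cast ξ.den_nz
  have hcop : IsCoprime (ξ.den : ℤ) (-ξ.num) :=
    (Int.isCoprime_iff_gcd_eq_one.2 (show Int.gcd ξ.num ξ.den = 1 from ξ.reduced)).symm.neg_right
  rw [sub_eq_add_neg, ← Polynomial.C_neg]
  refine (Polynomial.irreducible_C_mul_X_add_C hden hcop.isRelPrime).isPrimitive ?_
  rw [Polynomial.natDegree_linear hden]
  exact one_ne_zero

lemma den_mul_X_sub_num_pow_dvd {p : Polynomial ℤ} {ξ : ℚ} {ℓ : ℕ}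
    (h : ∀ j < ℓ, Polynomial.aeval ξ (Polynomial.hasseDeriv j p) = 0) :
    (Polynomial.C (ξ.den : ℤ) * Polynomial.X - Polynomial.C ξ.num) ^ ℓ ∣ p := by
  have hprim : ((Polynomial.C (ξ.den : ℤ) * Polynomial.X - Polynomial.C ξ.num) ^ ℓ).IsPrimitive :=
    isPrimitive_pow (isPrimitive_den_mul_X_sub_num ξ) ℓ
  have hmap : (Polynomial.C (ξ.den : ℤ) * Polynomial.X - Polynomial.C ξ.num).map
      (Int.castRingHom ℚ) = Polynomial.C (ξ.den : ℚ) * (Polynomial.X - Polynomial.C ξ) := by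
    rw [mul_sub, ← Polynomial.C_mul, mul_comm (ξ.den : ℚ) ξ, Rat.mul_den_eq_num]
    simp
  have hroot : (Polynomial.X - Polynomial.C ξ) ^ ℓ ∣ p.map (Int.castRingHom ℚ) := by
    rw [Polynomial.X_sub_C_pow_dvd_iff, ← Polynomial.taylor_apply, Polynomial.X_pow_dvd_iff]
    intro j hj
    have hmap_deriv : Polynomial.hasseDeriv j (p.map (Int.castRingHom ℚ)) =
        (Polynomial.hasseDeriv j p).map (Int.castRingHom ℚ) := by
      ext n
      simp [Polynomial.hasseDeriv_coeff]
    rw [Polynomial.taylor_coeff, hmap_deriv, Polynomial.eval_map]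
    exact h j hj
  rw [Polynomial.IsPrimitive.Int.dvd_iff_map_cast_dvd_map_cast _ _ hprim, Polynomial.map_pow, hmap,
    mul_pow, ← Polynomial.C_pow]
  exact (Polynomial.C_mul_dvd (pow_ne_zero _ (mod_cast ξ.den_nz))).2 hroot

lemma den_pow_le_abs_leadingCoeff {p : Polynomial ℤ} (hp : p ≠ 0) {ξ : ℚ} {ℓ : ℕ}
    (h : ∀ j < ℓ, Polynomial.aeval ξ (Polynomial.hasseDeriv j p) = 0) :
    (ξ.den : ℤ) ^ ℓ ≤ |p.leadingCoeff| := by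
  obtain ⟨r, rfl⟩ := den_mul_X_sub_num_pow_dvd h
  have hlead : (Polynomial.C (ξ.den : ℤ) * Polynomial.X - Polynomial.C ξ.num).leadingCoeff =
      (ξ.den : ℤ) := by
    rw [sub_eq_add_neg, ← Polynomial.C_neg]
    exact Polynomial.leadingCoeff_linear (mod_cast ξ.den_nz)
  have hr : 1 ≤ |r.leadingCoeff| :=
    Int.one_le_abs (Polynomial.leadingCoeff_ne_zero.2 (right_ne_zero_of_mul hp))
  rw [Polynomial.leadingCoeff_mul, Polynomial.leadingCoeff_pow, hlead, abs_mul, abs_pow,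
    Nat.abs_cast]
  exact le_mul_of_one_le_right (by positivity) hr

lemma den_pow_le_l1Norm {σ : Type*} [Unique σ] {V : MvPolynomial σ ℤ} (hV : V ≠ 0) {ξ : σ → ℚ}
    {ℓ : ℕ} (h : ∀ J : σ →₀ ℕ, J.degree < ℓ → aeval ξ (hasseDeriv J V) = 0) :
    ((ξ default).den : ℝ) ^ ℓ ≤ l1Norm V := by
  set p := uniqueAlgEquiv ℤ σ V
  have hderiv (j : ℕ) : uniqueAlgEquiv ℤ σ (hasseDeriv (Finsupp.single default j) V) =
      Polynomial.hasseDeriv j p := by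
    ext n
    rw [coeff_uniqueAlgEquiv, coeff_hasseDeriv, Polynomial.hasseDeriv_coeff, coeff_uniqueAlgEquiv,
      ← Finsupp.single_add]
    simp [multiBinom]
  have heval (P : MvPolynomial σ ℤ) :
      aeval ξ P = Polynomial.aeval (ξ default) (uniqueAlgEquiv ℤ σ P) := eval₂_uniqueAlgEquiv.symm
  have hlead : (((ξ default).den : ℤ) : ℝ) ^ ℓ ≤ |(p.leadingCoeff : ℝ)| := mod_cast
    den_pow_le_abs_leadingCoeff ((map_ne_zero_iff _ (uniqueAlgEquiv ℤ σ).injective).2 hV)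
      fun j hj => by
        rw [← hderiv, ← heval]
        exact h _ (by rwa [Finsupp.degree_single])
  rw [Polynomial.leadingCoeff, coeff_uniqueAlgEquiv, ← Int.norm_eq_abs] at hlead
  exact_mod_cast hlead.trans (norm_coeff_le_l1Norm V _)

end OneVariable

section TensorMul

variable {m : ℕ} {R : Type*}

lemma l1Norm_le_of_injective {σ τ R : Type*} [SeminormedCommRing R] {P : MvPolynomial σ R}
    {Q : MvPolynomial τ R} {f : (σ →₀ ℕ) → (τ →₀ ℕ)} (hf : Function.Injective f)
    (h : ∀ A, coeff A P = coeff (f A) Q) : l1Norm P ≤ l1Norm Q := by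
  calc l1Norm P = ∑ B ∈ P.support.image f, ‖coeff B Q‖ := by
        rw [l1Norm, sum_image hf.injOn]
        exact sum_congr rfl fun A _ => by rw [h A]
    _ ≤ l1Norm Q := by
        refine sum_le_sum_of_subset_of_nonneg (image_subset_iff.2 fun A hA => ?_)
          fun _ _ _ => norm_nonneg _
        rwa [mem_support_iff, ← h A, ← mem_support_iff]

lemma cons_add_cons (n n' : ℕ) (A A' : Fin m →₀ ℕ) :
    Finsupp.cons n A + Finsupp.cons n' A' = Finsupp.cons (n + n') (A + A') := by
  ext i
  refine Fin.cases ?_ (fun i => ?_) i <;> simp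

lemma multiBinom_cons (n j : ℕ) (A J : Fin m →₀ ℕ) :
    multiBinom (Finsupp.cons n A) (Finsupp.cons j J) = n.choose j * multiBinom A J := by
  simp only [multiBinom_eq_prod_univ, Fin.prod_univ_succ, Finsupp.cons_zero, Finsupp.cons_succ]

lemma multiBinom_single_single {σ : Type*} (i : σ) (n j : ℕ) :
    multiBinom (Finsupp.single i n) (Finsupp.single i j) = n.choose j := by
  rw [multiBinom_eq_prod_of_support_subset Finsupp.support_single_subset, prod_singleton,
    Finsupp.single_eq_same, Finsupp.single_eq_same]

lemma ext_coeff_cons [CommSemiring R] {P Q : MvPolynomial (Fin (m + 1)) R}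
    (h : ∀ n A, coeff (Finsupp.cons n A) P = coeff (Finsupp.cons n A) Q) : P = Q := by
  ext B
  simpa only [Finsupp.cons_tail] using h (B 0) B.tail

/-- The product `φ(x₁, …, xₘ) ψ(x₀)` of polynomials in separate variables. -/
noncomputable def tensorMul [CommSemiring R] (φ : MvPolynomial (Fin m) R)
    (ψ : MvPolynomial (Fin 1) R) : MvPolynomial (Fin (m + 1)) R :=
  rename Fin.succ φ * rename (fun _ => 0) ψ

variable [CommSemiring R]

lemma tensorMul_monomial (A : Fin m →₀ ℕ) (n : ℕ) (a b : R) :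
    tensorMul (monomial A a) (monomial (Finsupp.single 0 n) b) =
      monomial (Finsupp.cons n A) (a * b) := by
  rw [tensorMul, rename_monomial, rename_monomial, monomial_mul, Finsupp.mapDomain_single]
  congr 2
  ext i
  refine Fin.cases ?_ (fun i => ?_) i
  · rw [Finsupp.add_apply, Finsupp.mapDomain_of_notMem_range _ _ (by simp)]
    simp
  · rw [Finsupp.add_apply, Finsupp.mapDomain_apply (Fin.succ_injective m)]
    simp

lemma coeff_tensorMul (n : ℕ) (A : Fin m →₀ ℕ) (φ : MvPolynomial (Fin m) R)
    (ψ : MvPolynomial (Fin 1) R) :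
    coeff (Finsupp.cons n A) (tensorMul φ ψ) = coeff A φ * coeff (Finsupp.single 0 n) ψ := by
  induction φ using MvPolynomial.induction_on' with
  | add p q hp hq =>
    rw [tensorMul, map_add, add_mul, coeff_add, coeff_add, add_mul, ← hp, ← hq, tensorMul,
      tensorMul]
  | monomial B b =>
    induction ψ using MvPolynomial.induction_on' with
    | add p q hp hq =>
      rw [tensorMul, map_add, mul_add, coeff_add, coeff_add, mul_add, ← hp, ← hq, tensorMul,
        tensorMul]
    | monomial E e =>
      rw [Finsupp.unique_single E, Fin.default_eq_zero, tensorMul_monomial, coeff_monomial,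
        coeff_monomial, coeff_monomial]
      have hcons : Finsupp.cons (E 0) B = Finsupp.cons n A ↔ B = A ∧
          Finsupp.single (0 : Fin 1) (E 0) = Finsupp.single 0 n := by
        simp [Finsupp.ext_iff, Fin.forall_fin_succ, and_comm]
      rw [if_congr hcons rfl rfl, ← ite_zero_mul_ite_zero]

lemma hasseDeriv_tensorMul (j : ℕ) (J : Fin m →₀ ℕ) (φ : MvPolynomial (Fin m) R)
    (ψ : MvPolynomial (Fin 1) R) :
    hasseDeriv (Finsupp.cons j J) (tensorMul φ ψ) =
      tensorMul (hasseDeriv J φ) (hasseDeriv (Finsupp.single 0 j) ψ) := by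
  refine ext_coeff_cons fun n A => ?_
  rw [coeff_hasseDeriv, coeff_tensorMul, cons_add_cons, coeff_tensorMul, multiBinom_cons,
    coeff_hasseDeriv, coeff_hasseDeriv, ← Finsupp.single_add, multiBinom_single_single,
    Nat.cast_mul]
  ring

lemma aeval_tensorMul {S : Type*} [CommSemiring S] [Algebra R S] (φ : MvPolynomial (Fin m) R)
    (ψ : MvPolynomial (Fin 1) R) (ξ : Fin (m + 1) → S) :
    aeval ξ (tensorMul φ ψ) = aeval (fun i => ξ i.succ) φ * aeval (fun _ => ξ 0) ψ := by
  rw [tensorMul, map_mul, aeval_rename, aeval_rename]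
  rfl

lemma exists_linearIndependent_sum_smul {K V ι : Type*} [Field K] [AddCommGroup V] [Module K V]
    [Fintype ι] (v : ι → V) :
    ∃ (k : ℕ) (b : Fin k → V) (c : Fin k → ι → K), k ≤ Fintype.card ι ∧
      LinearIndependent K b ∧ LinearIndependent K c ∧ ∀ j, v j = ∑ l, c l j • b l := by
  have hfin : Module.Finite K (Submodule.span K (Set.range v)) :=
    FiniteDimensional.span_of_finite K (Set.finite_range v)
  let b := Module.finBasis K (Submodule.span K (Set.range v))
  let w (j : ι) : Submodule.span K (Set.range v) := ⟨v j, Submodule.subset_span ⟨j, rfl⟩⟩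
  have hw : Submodule.span K (Set.range w) = ⊤ := by
    convert Submodule.span_span_coe_preimage (R := K) (s := Set.range v)
    ext x
    simp [w, Subtype.ext_iff]
  refine ⟨_, fun l => b l, fun l j => b.repr (w j) l, finrank_range_le_card v,
    b.linearIndependent.map' _ (Submodule.ker_subtype _), ?_, fun j => ?_⟩
  · refine Fintype.linearIndependent_iff.2 fun a ha l => ?_
    have hcoord : ∑ l, a l • b.coord l = 0 := LinearMap.ext_on_range hw fun j => by
      simpa using congrFun ha j
    simpa [Finsupp.single_apply] using LinearMap.congr_fun hcoord (b l)
  · simpa only [Submodule.coe_sum, Submodule.coe_smul] using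
      (congrArg Subtype.val (b.sum_repr (w j))).symm

lemma exists_eq_sum_tensorMul {K : Type*} [Field K] {d : ℕ} {P : MvPolynomial (Fin (m + 1)) K}
    (hd : P.degreeOf 0 ≤ d) :
    ∃ (k : ℕ) (φ : Fin k → MvPolynomial (Fin m) K) (ψ : Fin k → MvPolynomial (Fin 1) K),
      k ≤ d + 1 ∧ LinearIndependent K φ ∧ LinearIndependent K ψ ∧
        P = ∑ l, tensorMul (φ l) (ψ l) := by
  obtain ⟨k, φ, c, hk, hφ, hc, hv⟩ := exists_linearIndependent_sum_smul (K := K)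
    fun j : Fin (d + 1) => (finSuccEquiv K m P).coeff j
  let T : (Fin (d + 1) → K) →ₗ[K] MvPolynomial (Fin 1) K :=
    ∑ j : Fin (d + 1), monomial (Finsupp.single 0 (j : ℕ)) ∘ₗ LinearMap.proj j
  have hT (x : Fin (d + 1) → K) (n : ℕ) : coeff (Finsupp.single 0 n) (T x) =
      if h : n < d + 1 then x ⟨n, h⟩ else 0 := by
    simp only [T, LinearMap.sum_apply, LinearMap.comp_apply, LinearMap.proj_apply, coeff_sum,
      coeff_monomial, (Finsupp.single_injective _).eq_iff]
    split_ifs with h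
    · simp [← Fin.ext_iff (b := ⟨n, h⟩)]
    · exact sum_eq_zero fun j _ => if_neg (by omega)
  have hker : LinearMap.ker T = ⊥ := LinearMap.ker_eq_bot'.2 fun x hx => funext fun j => by
    simpa only [hx, coeff_zero, Pi.zero_apply, j.2, dite_true, Fin.eta] using (hT x j).symm
  refine ⟨k, φ, fun l => T (c l), by simpa using hk, hφ, hc.map' T hker, ?_⟩
  refine ext_coeff_cons fun n A => ?_
  simp only [coeff_sum, coeff_tensorMul, hT]
  split_ifs with hn
  · rw [← finSuccEquiv_coeff_coeff, hv ⟨n, hn⟩, coeff_sum]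
    exact sum_congr rfl fun l _ => by rw [coeff_smul, smul_eq_mul, mul_comm]
  · by_contra hne
    have := degreeOf_le_iff.1 hd _ (mem_support_iff.2 (by simpa using hne))
    rw [Finsupp.cons_zero] at this
    omega

end TensorMul

section Index

variable {σ R S : Type*}

/-- The index of `P` at `ξ`, relative to the weights `s`, is at least `θ`: every Hasse derivative
of weight less than `θ` vanishes at `ξ`. -/
def IndexGE [CommSemiring R] [CommSemiring S] [Algebra R S] (s : σ → ℝ) (ξ : σ → S)
    (P : MvPolynomial σ R) (θ : ℝ) : Prop :=
  ∀ J : σ →₀ ℕ, Finsupp.weight s J < θ → aeval ξ (hasseDeriv J P) = 0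

namespace IndexGE

variable {s : σ → ℝ} {ξ : σ → S}

section CommSemiring

variable [CommSemiring R] [CommSemiring S] [Algebra R S] {P Q : MvPolynomial σ R} {a b : ℝ}

lemma of_nonpos (hs : ∀ i, 0 ≤ s i) (P : MvPolynomial σ R) (ha : a ≤ 0) : IndexGE s ξ P a :=
  fun J hJ => absurd (hJ.trans_le ha) (not_lt.2 (J.sum_nonneg fun i _ => by
    simpa using mul_nonneg (J i).cast_nonneg (hs i)))

lemma mono (hP : IndexGE s ξ P a) (h : b ≤ a) : IndexGE s ξ P b :=
  fun J hJ => hP J (hJ.trans_le h)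

lemma mul (hP : IndexGE s ξ P a) (hQ : IndexGE s ξ Q b) : IndexGE s ξ (P * Q) (a + b) := by
  intro J hJ
  rw [hasseDeriv_mul, map_sum]
  refine sum_eq_zero fun x hx => ?_
  rw [← mem_antidiagonal.1 hx, map_add] at hJ
  rw [map_mul]
  rcases lt_or_ge (Finsupp.weight s x.1) a with h | h
  · rw [hP _ h, zero_mul]
  · rw [hQ x.2 (by linarith), mul_zero]

lemma prod (hs : ∀ i, 0 ≤ s i) {ι : Type*} (t : Finset ι) {F : ι → MvPolynomial σ R} {c : ι → ℝ}
    (h : ∀ i ∈ t, IndexGE s ξ (F i) (c i)) : IndexGE s ξ (∏ i ∈ t, F i) (∑ i ∈ t, c i) := by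
  induction t using Finset.induction_on with
  | empty => exact of_nonpos hs _ (by simp)
  | insert x t hx ih =>
    rw [prod_insert hx, sum_insert hx]
    exact (h x (mem_insert_self _ _)).mul (ih fun i hi => h i (mem_insert_of_mem hi))

lemma hasseDeriv (hP : IndexGE s ξ P a) (I : σ →₀ ℕ) :
    IndexGE s ξ (hasseDeriv I P) (a - Finsupp.weight s I) := by
  intro J hJ
  rw [hasseDeriv_hasseDeriv, map_smul, hP _ (by rw [map_add]; linarith), smul_zero]

end CommSemiring

lemma det [CommRing R] [CommRing S] [Algebra R S] (hs : ∀ i, 0 ≤ s i) {n : Type*} [Fintype n]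
    [DecidableEq n] {M : Matrix n n (MvPolynomial σ R)} {c : n → ℝ}
    (h : ∀ i j, IndexGE s ξ (M i j) (c j)) :
    IndexGE s ξ M.det (∑ j, c j) := by
  intro J hJ
  rw [Matrix.det_apply, map_sum, map_sum]
  refine sum_eq_zero fun p _ => ?_
  rw [Units.smul_def, map_zsmul, map_zsmul, prod hs univ (fun j _ => h (p j) j) J hJ, smul_zero]

end IndexGE

lemma le_sum_max_sub_mul {k : ℕ} {s D t : ℝ} (hk : 0 < k) (hs : 0 ≤ s) (hD : 0 ≤ D) (ht : 0 ≤ t)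
    (ht1 : t ≤ 1) (hsk : s * (k - 1) ≤ D) :
    k * D * t ^ 2 / 8 ≤ ∑ j ∈ range k, max (t * D - s * j) 0 := by
  have hk1 : (1 : ℝ) ≤ k := by exact_mod_cast hk
  have hnonneg : 0 ≤ (k - 1) * t / 2 := by nlinarith
  set N := ⌊((k : ℝ) - 1) * t / 2⌋₊ + 1 with hN
  have hNk : N ≤ k := by
    have : ⌊((k : ℝ) - 1) * t / 2⌋₊ ≤ k - 1 := Nat.floor_le_of_le <| by
      rw [Nat.cast_pred hk]
      nlinarith
    omega
  have hNt : k * t / 4 ≤ N := by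
    have hfloor : (k - 1) * t / 2 ≤ N := by
      rw [hN, Nat.cast_add_one]
      exact (Nat.lt_floor_add_one _).le
    have hN1 : (1 : ℝ) ≤ N := by exact_mod_cast Nat.le_add_left 1 _
    nlinarith
  calc k * D * t ^ 2 / 8 = k * t / 4 * (t * D / 2) := by ring
    _ ≤ N * (t * D / 2) := by gcongr
    _ = ∑ j ∈ range N, t * D / 2 := by simp
    _ ≤ ∑ j ∈ range N, max (t * D - s * j) 0 := by
        refine sum_le_sum fun j hj => le_max_of_le_left ?_
        have hj : (j : ℝ) ≤ (k - 1) * t / 2 :=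
          (Nat.le_floor_iff hnonneg).1 (Nat.lt_succ_iff.1 (mem_range.1 hj))
        nlinarith [mul_le_mul_of_nonneg_left hj hs]
    _ ≤ ∑ j ∈ range k, max (t * D - s * j) 0 :=
        sum_le_sum_of_subset_of_nonneg (range_subset_range.2 hNk) fun _ _ _ => le_max_right _ _

end Index

section SeparationOfVariables

variable {m k : ℕ}

lemma det_wronskianMatrix_single_ne_zero {R : Type*} [CommRing R] [IsDomain R] [CharZero R]
    {ψ : Fin k → MvPolynomial (Fin 1) R} (hψ : LinearIndependent R ψ) :
    (wronskianMatrix (fun j : Fin k => Finsupp.single 0 (j : ℕ)) ψ).det ≠ 0 := by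
  obtain ⟨I, hI, hdet⟩ := exists_det_wronskianMatrix_ne_zero MonomialOrder.lex hψ
  let N (j : Fin k) : Fin k := ⟨I j 0, (Finsupp.le_degree 0 (I j)).trans_lt (hI j)⟩
  have hN : Function.Injective N := fun j j' h => by
    by_contra hne
    have hIj : I j = I j' := Finsupp.unique_ext (Fin.ext_iff.1 h)
    exact hdet (Matrix.det_zero_of_row_eq hne
      (by ext1 l; simp only [wronskianMatrix, Matrix.of_apply, hIj]))
  have hperm : wronskianMatrix I ψ =
      (wronskianMatrix (fun j : Fin k => Finsupp.single 0 (j : ℕ)) ψ).submatrix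
        (Equiv.ofBijective N (Finite.injective_iff_bijective.1 hN)) id := by
    ext1 j l
    exact congrArg (fun J => hasseDeriv J (ψ l)) (Finsupp.unique_single (I j))
  rw [hperm, Matrix.det_permute] at hdet
  exact right_ne_zero_of_mul hdet

/-- The generalised Wronskian of `P` with respect to the splitting of its variables into `x₀` and
`x₁, …, xₘ`: if `P = ∑ φₗ ψₗ` has rank `k`, it is the product of a generalised Wronskian of the
`φₗ` and the Wronskian of the `ψₗ`. -/
noncomputable def splitWronskian {R : Type*} [CommRing R] (I : Fin k → Fin m →₀ ℕ)
    (P : MvPolynomial (Fin (m + 1)) R) : MvPolynomial (Fin (m + 1)) R :=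
  (Matrix.of fun i j : Fin k => hasseDeriv (Finsupp.cons (j : ℕ) (I i)) P).det

lemma splitWronskian_map {R S : Type*} [CommRing R] [CommRing S] (f : R →+* S)
    (I : Fin k → Fin m →₀ ℕ) (P : MvPolynomial (Fin (m + 1)) R) :
    splitWronskian I (map f P) = map f (splitWronskian I P) := by
  rw [splitWronskian, splitWronskian, RingHom.map_det]
  congr 1
  ext1 i j
  exact hasseDeriv_map f _ P

lemma splitWronskian_sum_tensorMul {R : Type*} [CommRing R] (I : Fin k → Fin m →₀ ℕ)
    (φ : Fin k → MvPolynomial (Fin m) R) (ψ : Fin k → MvPolynomial (Fin 1) R) :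
    splitWronskian I (∑ l, tensorMul (φ l) (ψ l)) = tensorMul (wronskianMatrix I φ).det
      (wronskianMatrix (fun j : Fin k => Finsupp.single 0 (j : ℕ)) ψ).det := by
  have hmul : (Matrix.of fun i j : Fin k =>
        hasseDeriv (Finsupp.cons (j : ℕ) (I i)) (∑ l, tensorMul (φ l) (ψ l))) =
      (rename Fin.succ).mapMatrix (wronskianMatrix I φ) * ((rename fun _ => 0).mapMatrix
        (wronskianMatrix (fun j : Fin k => Finsupp.single 0 (j : ℕ)) ψ)).transpose := by
    ext1 i j
    rw [Matrix.mul_apply, Matrix.of_apply, map_sum]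
    exact sum_congr rfl fun l _ => hasseDeriv_tensorMul _ _ _ _
  rw [splitWronskian, hmul, Matrix.det_mul, Matrix.det_transpose, ← AlgHom.map_det,
    ← AlgHom.map_det, tensorMul]

lemma exists_splitWronskian_eq_tensorMul {K : Type*} [Field K] [CharZero K] {d : ℕ}
    {P : MvPolynomial (Fin (m + 1)) K} (hP : P ≠ 0) (hd : P.degreeOf 0 ≤ d) :
    ∃ (k : ℕ) (I : Fin k → Fin m →₀ ℕ) (U : MvPolynomial (Fin m) K) (V : MvPolynomial (Fin 1) K),
      0 < k ∧ k ≤ d + 1 ∧ (∀ i, (I i).degree < k) ∧ U ≠ 0 ∧ V ≠ 0 ∧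
        splitWronskian I P = tensorMul U V := by
  obtain ⟨k, φ, ψ, hk, hφ, hψ, rfl⟩ := exists_eq_sum_tensorMul hd
  have hk0 : 0 < k := Nat.pos_of_ne_zero fun h => by
    subst h
    exact hP (sum_of_isEmpty _)
  obtain ⟨I, hI, hdet⟩ := exists_det_wronskianMatrix_ne_zero MonomialOrder.lex hφ
  exact ⟨k, I, _, _, hk0, hk, hI, hdet, det_wronskianMatrix_single_ne_zero hψ,
    splitWronskian_sum_tensorMul I φ ψ⟩

lemma exists_coeff_eq_coeff_apply {σ τ R : Type*} [CommSemiring R] {f : (σ →₀ ℕ) → (τ →₀ ℕ)}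
    (hf : Function.Injective f) (P : MvPolynomial τ R) :
    ∃ Q : MvPolynomial σ R, ∀ A, coeff A Q = coeff (f A) P := by
  refine ⟨∑ A ∈ P.support.preimage f hf.injOn, monomial A (coeff (f A) P), fun A => ?_⟩
  simp only [coeff_sum, coeff_monomial, sum_ite_eq', mem_preimage, mem_support_iff]
  exact ite_eq_left_iff.2 fun h => (not_not.1 h).symm

lemma exists_integral_slices {W : MvPolynomial (Fin (m + 1)) ℤ} {U : MvPolynomial (Fin m) ℚ}
    {V : MvPolynomial (Fin 1) ℚ} (hU : U ≠ 0) (hV : V ≠ 0)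
    (hW : map (Int.castRingHom ℚ) W = tensorMul U V) :
    ∃ (U' : MvPolynomial (Fin m) ℤ) (V' : MvPolynomial (Fin 1) ℤ) (u v : ℚ),
      (u ≠ 0 ∧ map (Int.castRingHom ℚ) U' = u • U) ∧ (v ≠ 0 ∧ map (Int.castRingHom ℚ) V' = v • V) ∧
      l1Norm U' ≤ l1Norm W ∧ l1Norm V' ≤ l1Norm W ∧
      ∀ i, U'.degreeOf i ≤ W.degreeOf i.succ := by
  have hcoeff (n : ℕ) (A : Fin m →₀ ℕ) : ((coeff (Finsupp.cons n A) W : ℤ) : ℚ) =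
      coeff A U * coeff (Finsupp.single 0 n) V := by
    rw [← coeff_tensorMul, ← hW, coeff_map, eq_intCast]
  have hsingle (B : Fin 1 →₀ ℕ) : Finsupp.single 0 (B 0) = B := (Finsupp.unique_single B).symm
  obtain ⟨A, hA⟩ := MvPolynomial.ne_zero_iff.1 hU
  obtain ⟨B, hB⟩ := MvPolynomial.ne_zero_iff.1 hV
  have hBinj : Function.Injective fun B : Fin 1 →₀ ℕ => Finsupp.cons (B 0) A :=
    fun B B' h => Finsupp.unique_ext (by simpa using DFunLike.congr_fun h 0)
  obtain ⟨U', hU'⟩ := exists_coeff_eq_coeff_apply (Finsupp.cons_right_injective (B 0)) W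
  obtain ⟨V', hV'⟩ := exists_coeff_eq_coeff_apply hBinj W
  refine ⟨U', V', coeff B V, coeff A U, ⟨hB, ?_⟩, ⟨hA, ?_⟩,
    l1Norm_le_of_injective (Finsupp.cons_right_injective _) hU', l1Norm_le_of_injective hBinj hV',
    fun i => degreeOf_le_iff.2 fun A' hA' => ?_⟩
  · ext A'
    rw [coeff_map, eq_intCast, hU', hcoeff, coeff_smul, smul_eq_mul, mul_comm, hsingle]
  · ext B'
    rw [coeff_map, eq_intCast, hV', hcoeff, coeff_smul, smul_eq_mul, hsingle]
  · rw [mem_support_iff, hU', ← mem_support_iff] at hA'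
    simpa using degreeOf_le_iff.1 (le_refl (W.degreeOf i.succ)) _ hA'

lemma aeval_hasseDeriv_map_intCast {σ : Type*} (P : MvPolynomial σ ℤ) (J : σ →₀ ℕ) (ξ : σ → ℚ) :
    aeval ξ (hasseDeriv J (map (Int.castRingHom ℚ) P)) = aeval ξ (hasseDeriv J P) := by
  rw [hasseDeriv_map]
  exact aeval_map_algebraMap ℚ ξ _

end SeparationOfVariables

section RothLemma

lemma hasseDeriv_zero {σ R : Type*} [CommSemiring R] (P : MvPolynomial σ R) :
    hasseDeriv 0 P = P := by
  ext B
  simp [coeff_hasseDeriv, multiBinom]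

lemma weight_cons {m : ℕ} (s : Fin (m + 1) → ℝ) (j : ℕ) (J : Fin m →₀ ℕ) :
    Finsupp.weight s (Finsupp.cons j J) = s 0 * j + Finsupp.weight (fun i => s i.succ) J := by
  simp [Finsupp.weight_eq_sum, Fin.sum_univ_succ, mul_comm]

lemma weight_le_mul_degree {σ : Type*} {s : σ → ℝ} {c : ℝ} (hs : ∀ i, s i ≤ c) (J : σ →₀ ℕ) :
    Finsupp.weight s J ≤ c * J.degree := by
  rw [Finsupp.weight_apply, Finsupp.degree_apply, Nat.cast_sum, mul_sum]
  exact sum_le_sum fun i _ => by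
    beta_reduce
    rw [nsmul_eq_mul, mul_comm (J i : ℝ)]
    exact mul_le_mul_of_nonneg_right (hs i) (J i).cast_nonneg

lemma l1Norm_det_hasseDeriv_le {σ n : Type*} [Fintype σ] [Fintype n] [DecidableEq n]
    {P : MvPolynomial σ ℤ} {d : σ → ℕ} {A : ℝ} (hd : ∀ i, P.degreeOf i ≤ d i)
    (hdA : ∑ i, (d i : ℝ) ≤ A) (hP : l1Norm P ≤ Real.exp A)
    (hn : (Fintype.card n : ℝ) ≤ A + 1) (J : n → n → σ →₀ ℕ) :
    l1Norm (Matrix.of fun i j => hasseDeriv (J i j) P).det ≤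
      Real.exp (3 * Fintype.card n * A) := by
  have hentry (i j : n) : l1Norm (hasseDeriv (J i j) P) ≤ Real.exp (2 * A) := by
    have htwo : (2 : ℝ) ^ (∑ i, d i) ≤ Real.exp A := by
      calc (2 : ℝ) ^ (∑ i, d i) ≤ Real.exp 1 ^ (∑ i, d i) := by
            gcongr
            linarith [Real.add_one_le_exp (1 : ℝ)]
        _ = Real.exp (∑ i, (d i : ℝ)) := by rw [← Real.exp_nat_mul, mul_one, Nat.cast_sum]
        _ ≤ Real.exp A := Real.exp_le_exp.2 hdA
    calc l1Norm (hasseDeriv (J i j) P) ≤ 2 ^ (∑ i, d i) * l1Norm P := l1Norm_hasseDeriv_le _ _ hd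
      _ ≤ Real.exp A * Real.exp A := mul_le_mul htwo hP (l1Norm_nonneg P) (Real.exp_nonneg A)
      _ = Real.exp (2 * A) := by rw [← Real.exp_add, two_mul]
  calc l1Norm (Matrix.of fun i j => hasseDeriv (J i j) P).det
      ≤ (Fintype.card n).factorial * Real.exp (2 * A) ^ Fintype.card n := l1Norm_det_le _ _ hentry
    _ ≤ Real.exp A ^ Fintype.card n * Real.exp (2 * A) ^ Fintype.card n := by
        gcongr
        calc ((Fintype.card n).factorial : ℝ) ≤ (Fintype.card n : ℝ) ^ Fintype.card n := by
              exact_mod_cast Nat.factorial_le_pow _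
          _ ≤ Real.exp A ^ Fintype.card n := by
              gcongr
              exact hn.trans (Real.add_one_le_exp A)
    _ = Real.exp (3 * Fintype.card n * A) := by
        rw [← mul_pow, ← Real.exp_add, ← Real.exp_nat_mul]
        ring_nf

lemma exists_mul_le_aeval_hasseDeriv_ne_zero {σ : Type*} [Unique σ] {V : MvPolynomial σ ℤ}
    (hV : V ≠ 0) {s B T : ℝ} (hs : 0 < s) (hT : 0 ≤ T) (hVB : l1Norm V ≤ Real.exp B) {ξ : σ → ℚ}
    (hξ : 1 < (ξ default).den) (hB : s * B ≤ T * Real.log (ξ default).den) :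
    ∃ J : σ →₀ ℕ, s * J.degree ≤ T ∧ aeval ξ (hasseDeriv J V) ≠ 0 := by
  by_contra! hcon
  set ℓ := ⌊T / s⌋₊ + 1 with hℓ
  have hden : ((ξ default).den : ℝ) ^ ℓ ≤ l1Norm V := den_pow_le_l1Norm hV fun J hJ =>
    hcon J (by
      rw [← le_div_iff₀' hs]
      exact (Nat.le_floor_iff (by positivity)).1 (Nat.lt_succ_iff.1 hJ))
  have hlog : 0 < Real.log (ξ default).den := Real.log_pos (by exact_mod_cast hξ)
  have hℓB : ℓ * Real.log (ξ default).den ≤ B := by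
    have := Real.log_le_log (by positivity) (hden.trans hVB)
    rwa [Real.log_exp, Real.log_pow] at this
  have hTℓ : T < s * ℓ := by
    rw [← div_lt_iff₀' hs, hℓ, Nat.cast_add_one]
    exact Nat.lt_floor_add_one _
  nlinarith [mul_lt_mul_of_pos_right hTℓ hlog, mul_le_mul_of_nonneg_left hℓB hs.le]

lemma indexGE_splitWronskian {m k : ℕ} {s : Fin (m + 1) → ℝ} {ξ : Fin (m + 1) → ℚ}
    {P : MvPolynomial (Fin (m + 1)) ℤ} {τ δ D : ℝ} (hP : IndexGE s ξ P (τ * D))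
    (hs : ∀ i, 0 ≤ s i) (hsδ : ∀ i : Fin m, s i.succ ≤ δ * s 0) (hδ : 0 ≤ δ) (hδτ : δ ≤ τ / 2)
    (hD : 0 ≤ D) (hτ : τ ≤ 1) {I : Fin k → Fin m →₀ ℕ} (hI : ∀ i, (I i).degree < k) (hk : 0 < k)
    (hsk : s 0 * (k - 1) ≤ D) :
    IndexGE s ξ (splitWronskian I P) (k * D * (τ / 2) ^ 2 / 8) := by
  rw [splitWronskian]
  refine (IndexGE.det (c := fun j : Fin k => max (τ / 2 * D - s 0 * j) 0) hs fun i j => ?_).mono ?_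
  · rcases le_total (τ / 2 * D - s 0 * j) 0 with h | h
    · rw [max_eq_right h]
      exact .of_nonpos hs _ le_rfl
    · rw [max_eq_left h]
      refine (hP.hasseDeriv _).mono ?_
      have hdeg : ((I i).degree : ℝ) ≤ k - 1 :=
        le_sub_iff_add_le.2 (by exact_mod_cast Nat.succ_le_of_lt (hI i))
      have hweight : Finsupp.weight (fun i => s i.succ) (I i) ≤ τ / 2 * D := by
        calc Finsupp.weight (fun i => s i.succ) (I i) ≤ δ * s 0 * (I i).degree :=
              weight_le_mul_degree hsδ _
          _ ≤ δ * s 0 * (k - 1) := mul_le_mul_of_nonneg_left hdeg (mul_nonneg hδ (hs 0))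
          _ = δ * (s 0 * (k - 1)) := mul_assoc _ _ _
          _ ≤ τ / 2 * D := mul_le_mul hδτ hsk
              (mul_nonneg (hs 0) ((Nat.cast_nonneg _).trans hdeg)) (hδ.trans hδτ)
      rw [weight_cons]
      linarith
  · rw [Fin.sum_univ_eq_sum_range fun j : ℕ => max (τ / 2 * D - s 0 * j) 0]
    exact le_sum_max_sub_mul hk (hs 0) hD (by linarith) (by linarith) hsk

/-- The hypotheses of Roth's lemma for `P` at the rational point `ξ`. The weights `s i` play the
role of `D / deg_i P`, and `exp A` bounds the size of `P`; the parameter `δ` measures both how fast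
the weights decrease and how large the heights of the coordinates of `ξ` are. -/
structure RothHypotheses {m : ℕ} (δ : ℝ) (s : Fin m → ℝ) (d : Fin m → ℕ) (D A : ℝ) (ξ : Fin m → ℚ)
    (P : MvPolynomial (Fin m) ℤ) : Prop where
  weight_pos : ∀ i, 0 < s i
  weight_le : ∀ i j, i < j → s j ≤ δ * s i
  pos : 0 < D
  weight_mul_degree_le : ∀ i, s i * d i ≤ D
  sum_degree_le : ∑ i, (d i : ℝ) ≤ A
  ne_zero : P ≠ 0
  degreeOf_le : ∀ i, P.degreeOf i ≤ d i
  l1Norm_le : l1Norm P ≤ Real.exp A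
  one_lt_den : ∀ i, 1 < (ξ i).den
  weight_mul_le_log_den : ∀ i, s i * A ≤ δ * D * Real.log (ξ i).den

namespace RothHypotheses

lemma slice {m k : ℕ} {δ δ' : ℝ} {s : Fin (m + 1) → ℝ} {d : Fin (m + 1) → ℕ} {D A : ℝ}
    {ξ : Fin (m + 1) → ℚ} {P : MvPolynomial (Fin (m + 1)) ℤ} (h : RothHypotheses δ s d D A ξ P)
    (hδ' : 0 ≤ δ') (hδ : δ ≤ δ' / 3) (hk : 0 < k) {U : MvPolynomial (Fin m) ℤ} (hU : U ≠ 0)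
    (hUd : ∀ i, U.degreeOf i ≤ k * d i.succ) (hUA : l1Norm U ≤ Real.exp (3 * k * A)) :
    RothHypotheses δ' (fun i => s i.succ) (fun i => k * d i.succ) (k * D) (3 * k * A)
      (fun i => ξ i.succ) U := by
  have hkR : (0 : ℝ) < k := by exact_mod_cast hk
  refine ⟨fun i => h.weight_pos _, fun i j hij => ?_, mul_pos hkR h.pos, fun i => ?_, ?_, hU, hUd,
    hUA, fun i => h.one_lt_den _, fun i => ?_⟩
  · refine (h.weight_le i.succ j.succ (Fin.succ_lt_succ_iff.2 hij)).trans ?_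
    exact mul_le_mul_of_nonneg_right (by linarith) (h.weight_pos _).le
  · rw [Nat.cast_mul, mul_left_comm]
    exact mul_le_mul_of_nonneg_left (h.weight_mul_degree_le _) hkR.le
  · have hsum := h.sum_degree_le
    rw [Fin.sum_univ_succ] at hsum
    have htail : (0 : ℝ) ≤ ∑ i : Fin m, (d i.succ : ℝ) := sum_nonneg fun _ _ => Nat.cast_nonneg _
    have hd0 : (0 : ℝ) ≤ d 0 := Nat.cast_nonneg _
    simp only [Nat.cast_mul, ← mul_sum]
    nlinarith [hd0]
  · calc s i.succ * (3 * k * A) = 3 * k * (s i.succ * A) := by ring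
      _ ≤ 3 * k * (δ' / 3 * (D * Real.log (ξ i.succ).den)) := by
          refine mul_le_mul_of_nonneg_left ((h.weight_mul_le_log_den _).trans ?_) (by positivity)
          rw [mul_assoc]
          exact mul_le_mul_of_nonneg_right hδ
            (mul_nonneg h.pos.le (Real.log_natCast_nonneg _))
      _ = δ' * (k * D) * Real.log (ξ i.succ).den := by ring

variable {m k : ℕ} {δ : ℝ} {s : Fin (m + 1) → ℝ} {d : Fin (m + 1) → ℕ} {D A : ℝ}
  {ξ : Fin (m + 1) → ℚ} {P : MvPolynomial (Fin (m + 1)) ℤ}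

lemma l1Norm_splitWronskian_le (h : RothHypotheses δ s d D A ξ P) (hk : k ≤ d 0 + 1)
    (I : Fin k → Fin m →₀ ℕ) : l1Norm (splitWronskian I P) ≤ Real.exp (3 * k * A) := by
  have hdA : (d 0 : ℝ) ≤ A := (single_le_sum (f := fun i => (d i : ℝ))
    (fun _ _ => Nat.cast_nonneg _) (mem_univ 0)).trans h.sum_degree_le
  have hkA : (Fintype.card (Fin k) : ℝ) ≤ A + 1 := by
    have : (k : ℝ) ≤ d 0 + 1 := by exact_mod_cast hk
    rw [Fintype.card_fin]
    linarith
  rw [splitWronskian]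
  simpa only [Fintype.card_fin] using l1Norm_det_hasseDeriv_le h.degreeOf_le h.sum_degree_le
    h.l1Norm_le hkA fun i j => Finsupp.cons (j : ℕ) (I i)

lemma exists_aeval_splitWronskian_ne_zero {τ δ' : ℝ} (hτ : 0 ≤ τ) (hδτ : δ ≤ τ / 3)
    (hδ' : 0 ≤ δ') (hδδ' : δ ≤ δ' / 3)
    (ih : ∀ {s : Fin m → ℝ} {d D A ξ P}, RothHypotheses δ' s d D A ξ P →
      ∃ J : Fin m →₀ ℕ, Finsupp.weight s J ≤ τ * D ∧ aeval ξ (hasseDeriv J P) ≠ 0)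
    (h : RothHypotheses δ s d D A ξ P) (hk : 0 < k) (hkd : k ≤ d 0 + 1) {I : Fin k → Fin m →₀ ℕ}
    {U : MvPolynomial (Fin m) ℚ} {V : MvPolynomial (Fin 1) ℚ} (hU : U ≠ 0) (hV : V ≠ 0)
    (hW : map (Int.castRingHom ℚ) (splitWronskian I P) = tensorMul U V) :
    ∃ J : Fin (m + 1) →₀ ℕ, Finsupp.weight s J ≤ 2 * τ * (k * D) ∧
      aeval ξ (hasseDeriv J (splitWronskian I P)) ≠ 0 := by
  obtain ⟨U', V', u, v, ⟨hu, hUU'⟩, ⟨hv, hVV'⟩, hU'W, hV'W, hdeg⟩ := exists_integral_slices hU hV hW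
  have hnorm := h.l1Norm_splitWronskian_le hkd I
  have hU'0 : U' ≠ 0 := fun h0 => smul_ne_zero hu hU (by rw [← hUU', h0, map_zero])
  have hV'0 : V' ≠ 0 := fun h0 => smul_ne_zero hv hV (by rw [← hVV', h0, map_zero])
  have hU'd (i : Fin m) : U'.degreeOf i ≤ k * d i.succ := (hdeg i).trans <| by
    exact le_trans (degreeOf_det_le _ i.succ (d i.succ) fun _ _ =>
      (degreeOf_hasseDeriv_le _ _ _).trans (h.degreeOf_le _)) (by rw [Fintype.card_fin])
  obtain ⟨J, hJ, hUJ⟩ := ih (h.slice hδ' hδδ' hk hU'0 hU'd (hU'W.trans hnorm))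
  have hheight : s 0 * (3 * k * A) ≤ τ * (k * D) * Real.log (ξ 0).den := by
    calc s 0 * (3 * k * A) = 3 * k * (s 0 * A) := by ring
      _ ≤ 3 * k * (τ / 3 * (D * Real.log (ξ 0).den)) := by
          refine mul_le_mul_of_nonneg_left ((h.weight_mul_le_log_den 0).trans ?_) (by positivity)
          rw [mul_assoc]
          exact mul_le_mul_of_nonneg_right hδτ (mul_nonneg h.pos.le (Real.log_natCast_nonneg _))
      _ = τ * (k * D) * Real.log (ξ 0).den := by ring
  obtain ⟨J₀, hJ₀, hVJ⟩ := exists_mul_le_aeval_hasseDeriv_ne_zero hV'0 (h.weight_pos 0)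
    (mul_nonneg hτ (mul_nonneg k.cast_nonneg h.pos.le)) (hV'W.trans hnorm) (ξ := fun _ => ξ 0)
    (h.one_lt_den 0) hheight
  have hJ₀0 : J₀ = Finsupp.single 0 (J₀ 0) := Finsupp.unique_single J₀
  refine ⟨Finsupp.cons (J₀ 0) J, ?_, ?_⟩
  · rw [hJ₀0, Finsupp.degree_single] at hJ₀
    rw [weight_cons]
    linarith
  · rw [← aeval_hasseDeriv_map_intCast, hUU', map_smul, map_smul] at hUJ
    rw [← aeval_hasseDeriv_map_intCast, hVV', map_smul, map_smul] at hVJ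
    rw [← aeval_hasseDeriv_map_intCast, hW, hasseDeriv_tensorMul, aeval_tensorMul, ← hJ₀0]
    exact mul_ne_zero (right_ne_zero_of_mul hUJ) (right_ne_zero_of_mul hVJ)

/-- If the index of `P` were at least `τ`, that of its generalised Wronskian would be too large for
the slices of the latter, which are controlled by Roth's lemma in fewer variables. -/
lemma not_indexGE {τ δ' : ℝ} (hτ : 0 < τ) (hτ1 : τ ≤ 1) (hδ : 0 ≤ δ) (hδτ : δ ≤ τ / 2)
    (hδτ' : δ ≤ τ ^ 2 / 128 / 3) (hδ' : 0 ≤ δ') (hδδ' : δ ≤ δ' / 3)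
    (ih : ∀ {s : Fin m → ℝ} {d D A ξ P}, RothHypotheses δ' s d D A ξ P →
      ∃ J : Fin m →₀ ℕ, Finsupp.weight s J ≤ τ ^ 2 / 128 * D ∧ aeval ξ (hasseDeriv J P) ≠ 0)
    (h : RothHypotheses δ s d D A ξ P) : ¬ IndexGE s ξ P (τ * D) := by
  intro hP
  have hinj := RingHom.injective_int (Int.castRingHom ℚ)
  have hP0 : map (Int.castRingHom ℚ) P ≠ 0 :=
    (map_ne_zero_iff _ (map_injective _ hinj)).2 h.ne_zero
  have hPd : (map (Int.castRingHom ℚ) P).degreeOf 0 ≤ d 0 := by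
    rw [degreeOf_le_iff, support_map_of_injective _ hinj, ← degreeOf_le_iff]
    exact h.degreeOf_le 0
  obtain ⟨k, I, U, V, hk, hkd, hI, hU, hV, hW⟩ := exists_splitWronskian_eq_tensorMul hP0 hPd
  rw [splitWronskian_map] at hW
  obtain ⟨J, hJ, hne⟩ :=
    h.exists_aeval_splitWronskian_ne_zero (by positivity) hδτ' hδ' hδδ' ih hk hkd hU hV hW
  have hsk : s 0 * (k - 1) ≤ D :=
    (mul_le_mul_of_nonneg_left (sub_le_iff_le_add.2 (by exact_mod_cast hkd))
      (h.weight_pos 0).le).trans (h.weight_mul_degree_le 0)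
  refine hne (indexGE_splitWronskian hP (fun i => (h.weight_pos i).le)
    (fun i => h.weight_le 0 i.succ i.succ_pos) hδ hδτ h.pos.le hτ1 hI hk hsk J (hJ.trans_lt ?_))
  have hpos : 0 < τ ^ 2 * (k * D) := by have := h.pos; positivity
  linarith

end RothHypotheses

theorem roth_lemma (m : ℕ) {τ : ℝ} (hτ : 0 < τ) :
    ∃ δ > 0, ∀ {s : Fin m → ℝ} {d D A ξ P}, RothHypotheses δ s d D A ξ P →
      ∃ J : Fin m →₀ ℕ, Finsupp.weight s J ≤ τ * D ∧ aeval ξ (hasseDeriv J P) ≠ 0 := by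
  induction m generalizing τ with
  | zero =>
    refine ⟨1, one_pos, fun {s d D A ξ P} h => ⟨0, ?_, ?_⟩⟩
    · simpa using mul_nonneg hτ.le h.pos.le
    · obtain ⟨a, rfl⟩ := C_surjective (Fin 0) P
      rw [hasseDeriv_zero, aeval_C]
      exact fun ha => h.ne_zero (by simpa using ha)
  | succ m ih =>
    have hτ₁ : 0 < min τ 1 := lt_min hτ one_pos
    obtain ⟨δ', hδ', ih⟩ := ih (τ := min τ 1 ^ 2 / 128) (by positivity)
    refine ⟨min (δ' / 3) (min (min τ 1 / 2) (min τ 1 ^ 2 / 128 / 3)), by positivity,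
      fun {s d D A ξ P} h => ?_⟩
    by_contra! hcon
    refine h.not_indexGE hτ₁ (min_le_right _ _) (by positivity)
      ((min_le_right _ _).trans (min_le_left _ _)) ((min_le_right _ _).trans (min_le_right _ _))
      hδ'.le (min_le_left _ _) ih fun J hJ => hcon J (hJ.le.trans ?_)
    exact mul_le_mul_of_nonneg_right (min_le_left _ _) h.pos.le

end RothLemma

section Siegel

attribute [local instance] Matrix.seminormedAddCommGroup

lemma exists_ne_zero_int_solution {ρ κ : Type*} [Fintype ρ] [Fintype κ] [Nonempty κ]
    (M : Matrix ρ κ ℤ) {B : ℝ} (hB : 1 ≤ B) (hM : ∀ r k, |(M r k : ℝ)| ≤ B)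
    (hcard : 2 * Fintype.card ρ ≤ Fintype.card κ) :
    ∃ p : κ → ℤ, p ≠ 0 ∧ M.mulVec p = 0 ∧ ∀ k, |(p k : ℝ)| ≤ Fintype.card κ * B := by
  have hκ : (1 : ℝ) ≤ Fintype.card κ := by exact_mod_cast Fintype.card_pos (α := κ)
  rcases isEmpty_or_nonempty ρ with hρ | hρ
  · exact ⟨1, one_ne_zero, Subsingleton.elim _ _, fun k => by
      simpa using one_le_mul_of_one_le_of_one_le hκ hB⟩
  have hρpos : 0 < Fintype.card ρ := Fintype.card_pos
  obtain ⟨p, hp, hMp, hnorm⟩ :=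
    Int.Matrix.exists_ne_zero_int_vec_norm_le M (by omega) hρpos
  refine ⟨p, hp, hMp, fun k => ?_⟩
  have hM' : max 1 ‖M‖ ≤ B := max_le hB <| (Matrix.norm_le_iff (by linarith)).2 fun i j => by
    simpa [Int.norm_eq_abs] using hM i j
  have hcard' : 2 * (Fintype.card ρ : ℝ) ≤ Fintype.card κ := by exact_mod_cast hcard
  have hρpos' : (0 : ℝ) < Fintype.card ρ := by exact_mod_cast hρpos
  calc |(p k : ℝ)| = ‖p k‖ := (Int.norm_eq_abs _).symm
    _ ≤ ‖p‖ := norm_le_pi_norm p k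
    _ ≤ _ := hnorm
    _ ≤ ((Fintype.card κ : ℝ) * max 1 ‖M‖) ^ (1 : ℝ) := by
        refine Real.rpow_le_rpow_of_exponent_le
          (one_le_mul_of_one_le_of_one_le hκ (le_max_left _ _)) ?_
        rw [div_le_one (by linarith)]
        linarith
    _ = Fintype.card κ * max 1 ‖M‖ := Real.rpow_one _
    _ ≤ Fintype.card κ * B := by gcongr

end Siegel

section PowerCoordinates

lemma exists_int_matrix_of_isIntegral {A : Type*} [CommRing A] {β : A} (hβ : IsIntegral ℤ β) :
    ∃ (g : ℕ) (w : Fin g → A) (e : Fin g → ℤ) (M : Fin g → Fin g → ℤ),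
      1 = ∑ i, (e i : A) * w i ∧ ∀ i, β * w i = ∑ j, (M i j : A) * w j := by
  obtain ⟨g, w, hw⟩ := Submodule.fg_iff_exists_fin_generating_family.1 hβ.fg_adjoin_singleton
  have exists_coord : ∀ x ∈ Algebra.adjoin ℤ {β}, ∃ c : Fin g → ℤ, x = ∑ i, (c i : A) * w i := by
    intro x hx
    obtain ⟨c, hc⟩ := (Submodule.mem_span_range_iff_exists_fun ℤ).1
      (show x ∈ Submodule.span ℤ (Set.range w) by rwa [hw])
    exact ⟨c, by simp [← hc, zsmul_eq_mul]⟩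
  have exists_mul_coord (i : Fin g) : ∃ c : Fin g → ℤ, β * w i = ∑ j, (c j : A) * w j :=
    exists_coord _ <| Subalgebra.mul_mem _ (Algebra.self_mem_adjoin_singleton ℤ β) <| by
      rw [← Subalgebra.mem_toSubmodule, ← hw]
      exact Submodule.subset_span ⟨i, rfl⟩
  choose M hM using exists_mul_coord
  obtain ⟨e, he⟩ := exists_coord 1 (Subalgebra.one_mem _)
  exact ⟨g, w, e, M, he, hM⟩

lemma exists_int_coordinates_pow {β : ℝ} (hβ : IsIntegral ℤ β) :
    ∃ (g : ℕ) (w : Fin g → ℝ) (C : ℝ), 1 ≤ C ∧ ∀ n : ℕ, ∃ E : Fin g → ℤ,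
      β ^ n = ∑ i, (E i : ℝ) * w i ∧ ∑ i, |(E i : ℝ)| ≤ C ^ (n + 1) := by
  obtain ⟨g, w, e, M, he, hM⟩ := exists_int_matrix_of_isIntegral hβ
  set C : ℝ := 1 + ∑ i, |(e i : ℝ)| + ∑ i, ∑ j, |(M i j : ℝ)|
  have he_nonneg : 0 ≤ ∑ i, |(e i : ℝ)| := by positivity
  have hM_nonneg : 0 ≤ ∑ i, ∑ j, |(M i j : ℝ)| := by positivity
  have row_le (i : Fin g) : ∑ j, |(M i j : ℝ)| ≤ C :=
    (single_le_sum (f := fun i => ∑ j, |(M i j : ℝ)|) (fun _ _ => by positivity)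
      (mem_univ i)).trans (by linarith)
  refine ⟨g, w, C, by linarith, fun n => ?_⟩
  induction n with
  | zero => exact ⟨e, by rw [pow_zero, he], by rw [zero_add, pow_one]; linarith⟩
  | succ n ih =>
    obtain ⟨E, hE, hEC⟩ := ih
    refine ⟨fun j => ∑ i, E i * M i j, ?_, ?_⟩
    · calc β ^ (n + 1) = ∑ i, (E i : ℝ) * (β * w i) := by
            rw [pow_succ, hE, sum_mul]
            exact sum_congr rfl fun i _ => by ring
        _ = ∑ i, ∑ j, (E i : ℝ) * M i j * w j := by simp_rw [hM, mul_sum, mul_assoc]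
        _ = ∑ j, ((∑ i, E i * M i j : ℤ) : ℝ) * w j := by
            rw [sum_comm]
            push_cast
            simp_rw [sum_mul]
    · calc ∑ j, |((∑ i, E i * M i j : ℤ) : ℝ)|
          ≤ ∑ j, ∑ i, |(E i : ℝ)| * |(M i j : ℝ)| := by
            refine sum_le_sum fun j _ => ?_
            push_cast
            simpa only [abs_mul] using abs_sum_le_sum_abs (fun i => (E i : ℝ) * M i j) univ
        _ = ∑ i, |(E i : ℝ)| * ∑ j, |(M i j : ℝ)| := by rw [sum_comm]; simp_rw [mul_sum]
        _ ≤ ∑ i, |(E i : ℝ)| * C := by gcongr with i; exact row_le i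
        _ = (∑ i, |(E i : ℝ)|) * C := by rw [sum_mul]
        _ ≤ C ^ (n + 1 + 1) := by
            rw [pow_succ]
            gcongr

/-- After scaling by `ℓ ^ N`, the powers of `α` up to the `N`-th one have integral coordinates of
size at most `C ^ N` in the fixed finite family `w`. -/
structure PowerCoordinates (α : ℝ) {g : ℕ} (w : Fin g → ℝ) (ℓ : ℤ) (C : ℝ) : Prop where
  ne_zero : ℓ ≠ 0
  one_le : 1 ≤ C
  exists_coord : ∀ N n : ℕ, n ≤ N → 1 ≤ N → ∃ E : Fin g → ℤ,
    (ℓ : ℝ) ^ N * α ^ n = ∑ i, (E i : ℝ) * w i ∧ ∀ i, |(E i : ℝ)| ≤ C ^ N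

lemma exists_powerCoordinates {α : ℝ} (hα : IsAlgebraic ℚ α) :
    ∃ (g : ℕ) (w : Fin g → ℝ) (ℓ : ℤ) (C : ℝ), PowerCoordinates α w ℓ C := by
  obtain ⟨ℓ, hℓ, hint⟩ :=
    ((IsFractionRing.isAlgebraic_iff ℤ ℚ ℝ).2 hα).exists_integral_multiple
  rw [zsmul_eq_mul] at hint
  obtain ⟨g, w, C, hC, hpow⟩ := exists_int_coordinates_pow hint
  set B := max C |(ℓ : ℝ)|
  have hB : 1 ≤ B := hC.trans (le_max_left _ _)
  refine ⟨g, w, ℓ, B ^ 2, hℓ, one_le_pow₀ hB, fun N n hn hN => ?_⟩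
  obtain ⟨E, hE, hEC⟩ := hpow n
  refine ⟨fun i => ℓ ^ (N - n) * E i, ?_, fun i => ?_⟩
  · calc (ℓ : ℝ) ^ N * α ^ n = (ℓ : ℝ) ^ (N - n) * (ℓ * α) ^ n := by
          rw [mul_pow, ← mul_assoc, ← pow_add, Nat.sub_add_cancel hn]
      _ = ∑ i, ((ℓ ^ (N - n) * E i : ℤ) : ℝ) * w i := by
          rw [hE, mul_sum]
          push_cast
          exact sum_congr rfl fun i _ => by ring
  · have hEi : |(E i : ℝ)| ≤ C ^ (n + 1) :=
      (single_le_sum (f := fun i => |(E i : ℝ)|) (fun _ _ => abs_nonneg _) (mem_univ i)).trans hEC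
    calc |((ℓ ^ (N - n) * E i : ℤ) : ℝ)| = |(ℓ : ℝ)| ^ (N - n) * |(E i : ℝ)| := by
          push_cast
          rw [abs_mul, abs_pow]
      _ ≤ B ^ (N - n) * B ^ (n + 1) := by
          gcongr
          · exact le_max_right _ _
          · exact hEi.trans (pow_le_pow_left₀ (by linarith) (le_max_left _ _) _)
      _ = B ^ (N + 1) := by rw [← pow_add]; congr 1; omega
      _ ≤ (B ^ 2) ^ N := by rw [← pow_mul]; exact pow_le_pow_right₀ hB (by omega)

end PowerCoordinates

section Chebyshev

variable {ι X : Type*} [Fintype ι] [DecidableEq ι] {S : ι → Finset X} {f : ι → X → ℝ}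

lemma sum_piFinset_mul_eq_zero (hf : ∀ i, ∑ x ∈ S i, f i x = 0) {i j : ι} (hij : i ≠ j) :
    ∑ t ∈ Fintype.piFinset S, f i (t i) * f j (t j) = 0 := by
  have hprod := prod_univ_sum S
    fun k x => (if k = i then f i x else 1) * if k = j then f j x else 1
  rw [prod_eq_zero (mem_univ i) (by simp [hij, hf])] at hprod
  rw [hprod]
  exact sum_congr rfl fun t _ => by rw [prod_mul_distrib]; simp

lemma sum_piFinset_sq_le (hf : ∀ i, ∑ x ∈ S i, f i x = 0) (hf1 : ∀ i, ∀ x ∈ S i, |f i x| ≤ 1) :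
    ∑ t ∈ Fintype.piFinset S, (∑ i, f i (t i)) ^ 2 ≤
      Fintype.card ι * #(Fintype.piFinset S) := by
  calc ∑ t ∈ Fintype.piFinset S, (∑ i, f i (t i)) ^ 2
      = ∑ i, ∑ j, ∑ t ∈ Fintype.piFinset S, f i (t i) * f j (t j) := by
        simp_rw [sq, sum_mul_sum]
        rw [sum_comm]
        exact sum_congr rfl fun i _ => sum_comm
    _ = ∑ i, ∑ t ∈ Fintype.piFinset S, f i (t i) * f i (t i) :=
        sum_congr rfl fun i _ => sum_eq_single i
          (fun j _ hj => sum_piFinset_mul_eq_zero hf hj.symm) (by simp)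
    _ ≤ ∑ _i : ι, ∑ _t ∈ Fintype.piFinset S, (1 : ℝ) := by
        refine sum_le_sum fun i _ => sum_le_sum fun t ht => ?_
        rw [← abs_mul_abs_self]
        exact mul_le_one₀ (hf1 i _ (Fintype.mem_piFinset.1 ht i)) (abs_nonneg _)
          (hf1 i _ (Fintype.mem_piFinset.1 ht i))
    _ = Fintype.card ι * #(Fintype.piFinset S) := by simp

lemma card_filter_sum_lt_mul_le [Nonempty ι] (hf : ∀ i, ∑ x ∈ S i, f i x = 0)
    (hf1 : ∀ i, ∀ x ∈ S i, |f i x| ≤ 1) {ε : ℝ} (hε : 0 < ε) :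
    #{t ∈ Fintype.piFinset S | ∑ i, f i (t i) < -(Fintype.card ι * ε)} *
      (Fintype.card ι * ε ^ 2) ≤ #(Fintype.piFinset S) := by
  have hι : (0 : ℝ) < Fintype.card ι := by exact_mod_cast Fintype.card_pos (α := ι)
  refine le_of_mul_le_mul_left ?_ hι
  calc _ = ∑ t ∈ Fintype.piFinset S with ∑ i, f i (t i) < -(Fintype.card ι * ε),
            (Fintype.card ι * ε) ^ 2 := by
        rw [sum_const, nsmul_eq_mul]
        ring
    _ ≤ ∑ t ∈ Fintype.piFinset S with ∑ i, f i (t i) < -(Fintype.card ι * ε),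
          (∑ i, f i (t i)) ^ 2 := by
        refine sum_le_sum fun t ht => ?_
        have := (mem_filter.1 ht).2
        have : 0 < Fintype.card ι * ε := by positivity
        nlinarith
    _ ≤ ∑ t ∈ Fintype.piFinset S, (∑ i, f i (t i)) ^ 2 :=
        sum_le_sum_of_subset_of_nonneg (filter_subset _ _) fun _ _ _ => sq_nonneg _
    _ ≤ _ := sum_piFinset_sq_le hf hf1

end Chebyshev

section Multidegrees

lemma card_mul_sum_piAntidiag {κ : Type*} [Fintype κ] [DecidableEq κ] (k : κ) (n : ℕ) :
    Fintype.card κ * ∑ x ∈ piAntidiag univ n, x k = n * #(piAntidiag (univ : Finset κ) n) := by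
  have sum_eq (j : κ) :
      ∑ x ∈ piAntidiag (univ : Finset κ) n, x j = ∑ x ∈ piAntidiag univ n, x k := by
    have mem {x : κ → ℕ} (hx : x ∈ piAntidiag univ n) :
        x ∘ Equiv.swap j k ∈ piAntidiag univ n := by
      simp_all [mem_piAntidiag, Function.comp_def, Equiv.sum_comp (Equiv.swap j k) x]
    refine sum_nbij' (· ∘ Equiv.swap j k) (· ∘ Equiv.swap j k) (fun x => mem) (fun x => mem)
      ?_ ?_ ?_ <;> intro x _ <;> simp [Function.comp_assoc, ← Equiv.coe_trans]
  calc Fintype.card κ * ∑ x ∈ piAntidiag univ n, x k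
      = ∑ j, ∑ x ∈ piAntidiag (univ : Finset κ) n, x j := by simp [sum_eq]
    _ = ∑ x ∈ piAntidiag (univ : Finset κ) n, ∑ j, x j := sum_comm
    _ = ∑ _x ∈ piAntidiag (univ : Finset κ) n, n :=
        sum_congr rfl fun x hx => (mem_piAntidiag.1 hx).1
    _ = _ := by rw [sum_const, smul_eq_mul, mul_comm]

variable {ι : Type*} [Fintype ι] [DecidableEq ι]

/-- The exponents of the forms that are homogeneous of degree `d i` in the `i`-th of the triples
of variables indexed by `ι`. -/
def multidegrees (d : ι → ℕ) : Finset (ι → Fin 3 → ℕ) :=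
  Fintype.piFinset fun i => piAntidiag univ (d i)

lemma mem_multidegrees {d : ι → ℕ} {t : ι → Fin 3 → ℕ} :
    t ∈ multidegrees d ↔ ∀ i, t i 0 + t i 1 + t i 2 = d i := by
  simp [multidegrees, mem_piAntidiag, Fin.sum_univ_three]

lemma card_piAntidiag_fin_three_le (n : ℕ) : #(piAntidiag (univ : Finset (Fin 3)) n) ≤ 4 ^ n := by
  calc #(piAntidiag (univ : Finset (Fin 3)) n) ≤ #(range (n + 1) ×ˢ range (n + 1)) := by
        refine card_le_card_of_injOn (fun x => (x 0, x 1)) (fun x hx => ?_) fun x hx y hy hxy => ?_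
        · have := (mem_piAntidiag.1 hx).1
          rw [Fin.sum_univ_three] at this
          simp only [coe_product, Set.mem_prod, coe_range, Set.mem_Iio]
          omega
        · have hx := (mem_piAntidiag.1 hx).1
          have hy := (mem_piAntidiag.1 hy).1
          rw [Fin.sum_univ_three] at hx hy
          rw [Prod.mk.injEq] at hxy
          ext k
          fin_cases k <;> simp <;> omega
    _ = (n + 1) * (n + 1) := by rw [card_product, card_range]
    _ ≤ 2 ^ n * 2 ^ n := Nat.mul_le_mul Nat.lt_two_pow_self Nat.lt_two_pow_self
    _ = 4 ^ n := by rw [← mul_pow]; norm_num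

lemma card_multidegrees_le (d : ι → ℕ) : #(multidegrees d) ≤ 4 ^ ∑ i, d i := by
  rw [multidegrees, Fintype.card_piFinset, ← prod_pow_eq_pow_sum]
  exact prod_le_prod' fun i _ => card_piAntidiag_fin_three_le _

/-- The exponents whose weight in each of the three types of variables almost attains its mean
value over `multidegrees d`. -/
noncomputable def balanced (s : ι → ℝ) (d : ι → ℕ) (D ε : ℝ) : Finset (ι → Fin 3 → ℕ) :=
  {t ∈ multidegrees d | ∀ k, Fintype.card ι * D * (1 / 3 - ε) ≤ ∑ i, s i * t i k}

lemma balanced_subset_multidegrees (s : ι → ℝ) (d : ι → ℕ) (D ε : ℝ) :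
    balanced s d D ε ⊆ multidegrees d :=
  filter_subset _ _

variable {s : ι → ℝ} {d : ι → ℕ} {D ε : ℝ}

lemma card_filter_weight_lt_mul_le [Nonempty ι] (hd : ∀ i, 0 < d i) (hD : 0 < D)
    (hsd : ∀ i, s i * d i = D) (hε : 0 < ε) (k : Fin 3) :
    #{t ∈ multidegrees d | ∑ i, s i * t i k < Fintype.card ι * D * (1 / 3 - ε)} *
      (Fintype.card ι * ε ^ 2) ≤ #(multidegrees d) := by
  have hd' (i : ι) : (0 : ℝ) < d i := by exact_mod_cast hd i
  refine le_trans ?_ (card_filter_sum_lt_mul_le (S := fun i => piAntidiag univ (d i))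
    (f := fun i x => (x k : ℝ) / d i - 1 / 3) (fun i => ?_) (fun i x hx => ?_) hε)
  · gcongr ?_ * _
    norm_cast
    refine card_le_card fun t ht => ?_
    rw [mem_filter] at ht ⊢
    refine ⟨ht.1, ?_⟩
    have hweight : ∑ i, s i * t i k = D * ∑ i, (t i k : ℝ) / d i := by
      rw [mul_sum]
      refine sum_congr rfl fun i _ => ?_
      have := (hd' i).ne'
      rw [← hsd i]
      field_simp
    have hlt : D * ∑ i, (t i k : ℝ) / d i < D * (Fintype.card ι * (1 / 3 - ε)) := by
      linarith [ht.2]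
    have := lt_of_mul_lt_mul_left hlt hD.le
    simp only [sum_sub_distrib, sum_const, card_univ, nsmul_eq_mul]
    linarith
  · have hmean : 3 * ∑ x ∈ piAntidiag (univ : Finset (Fin 3)) (d i), (x k : ℝ) =
        d i * #(piAntidiag (univ : Finset (Fin 3)) (d i)) := by
      exact_mod_cast card_mul_sum_piAntidiag k (d i)
    have := (hd' i).ne'
    simp only [sum_sub_distrib, ← sum_div, sum_const, nsmul_eq_mul]
    field_simp
    linarith
  · have hle : (x k : ℝ) / d i ≤ 1 := by
      rw [div_le_one (hd' i), ← (mem_piAntidiag.1 hx).1]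
      exact_mod_cast single_le_sum (f := x) (fun _ _ => Nat.zero_le _) (mem_univ k)
    have : 0 ≤ (x k : ℝ) / d i := by positivity
    exact abs_le.2 ⟨by linarith, by linarith⟩

lemma card_multidegrees_sdiff_balanced_mul_le [Nonempty ι] (hd : ∀ i, 0 < d i) (hD : 0 < D)
    (hsd : ∀ i, s i * d i = D) (hε : 0 < ε) :
    #(multidegrees d \ balanced s d D ε) * (Fintype.card ι * ε ^ 2) ≤ 3 * #(multidegrees d) := by
  have hsub : multidegrees d \ balanced s d D ε ⊆ univ.biUnion fun k =>
      {t ∈ multidegrees d | ∑ i, s i * t i k < Fintype.card ι * D * (1 / 3 - ε)} := by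
    intro t
    simp [balanced]
    tauto
  have hcard := (card_le_card hsub).trans card_biUnion_le
  calc _ ≤ ((∑ k, #{t ∈ multidegrees d |
            ∑ i, s i * t i k < Fintype.card ι * D * (1 / 3 - ε)} : ℕ) : ℝ) *
          (Fintype.card ι * ε ^ 2) := by gcongr
    _ ≤ ∑ _k : Fin 3, (#(multidegrees d) : ℝ) := by
        rw [Nat.cast_sum, sum_mul]
        exact sum_le_sum fun k _ => card_filter_weight_lt_mul_le hd hD hsd hε k
    _ = 3 * #(multidegrees d) := by simp

lemma card_multidegrees_sdiff_balanced_le [Nonempty ι] (hd : ∀ i, 0 < d i) (hD : 0 < D)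
    (hsd : ∀ i, s i * d i = D) (hε : 0 < ε) {g : ℕ}
    (hg : 3 * (2 * (g : ℝ) + 2) ≤ Fintype.card ι * ε ^ 2) :
    2 * (#(multidegrees d \ balanced s d D ε) * g) ≤ #(balanced s d D ε) ∧
      (balanced s d D ε).Nonempty := by
  have hsum := card_sdiff_add_card_eq_card (balanced_subset_multidegrees s d D ε)
  have hbad : #(multidegrees d \ balanced s d D ε) * (2 * g + 2) ≤ #(multidegrees d) := by
    have h := mul_le_mul_of_nonneg_left hg
      (Nat.cast_nonneg (α := ℝ) #(multidegrees d \ balanced s d D ε))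
    have h' := card_multidegrees_sdiff_balanced_mul_le hd hD hsd hε
    have : (#(multidegrees d \ balanced s d D ε) : ℝ) * (2 * g + 2) ≤ #(multidegrees d) := by
      linarith
    exact_mod_cast this
  have hpos : 0 < #(multidegrees d) :=
    card_pos.2 ⟨fun i => Pi.single 0 (d i), mem_multidegrees.2 fun i => by simp⟩
  refine ⟨by nlinarith, card_pos.1 (Nat.pos_of_ne_zero fun h0 => ?_)⟩
  rw [h0, add_zero] at hsum
  rw [hsum] at hbad
  nlinarith

end Multidegrees

section AuxiliaryForm

variable {ι : Type*} [Fintype ι]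

/-- The binomial factor of the coefficient of `∏ i, x i ^ t' i 0 * y i ^ t' i 1 * z i ^ t' i 2` in
the form `∏ i, (x i + α z i) ^ t i 0 * (y i + α z i) ^ t i 1 * z i ^ t i 2`. -/
def shiftBinom (t t' : ι → Fin 3 → ℕ) : ℕ :=
  ∏ i, (t i 0).choose (t' i 0) * (t i 1).choose (t' i 1)

/-- The exponent of `α` in the coefficient described at `shiftBinom`. -/
def shiftExp (t t' : ι → Fin 3 → ℕ) : ℕ :=
  ∑ i, (t i 0 - t' i 0 + (t i 1 - t' i 1))

/-- The coefficient of exponent `t'` of the form `∑ t ∈ S, p t * x ^ t 0 * y ^ t 1 * z ^ t 2` after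
the substitution `x ↦ x + α z`, `y ↦ y + α z`. -/
def shiftCoeff {R : Type*} [CommRing R] (S : Finset (ι → Fin 3 → ℕ))
    (p : (ι → Fin 3 → ℕ) → ℤ) (α : R) (t' : ι → Fin 3 → ℕ) : R :=
  ∑ t ∈ S, (p t : R) * (shiftBinom t t' * α ^ shiftExp t t')

lemma map_shiftCoeff {R R' : Type*} [CommRing R] [CommRing R'] (φ : R →+* R')
    (S : Finset (ι → Fin 3 → ℕ)) (p : (ι → Fin 3 → ℕ) → ℤ) (α : R) (t' : ι → Fin 3 → ℕ) :
    φ (shiftCoeff S p α t') = shiftCoeff S p (φ α) t' := by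
  simp [shiftCoeff]

lemma shiftCoeff_eq_zero_of_coord {S : Finset (ι → Fin 3 → ℕ)} {p : (ι → Fin 3 → ℕ) → ℤ}
    {α ℓ : ℝ} (hℓ : ℓ ≠ 0) {t' : ι → Fin 3 → ℕ} {g : ℕ} {w : Fin g → ℝ}
    {E : (ι → Fin 3 → ℕ) → Fin g → ℤ}
    (hE : ∀ t ∈ S, ℓ * α ^ shiftExp t t' = ∑ j, (E t j : ℝ) * w j)
    (hp : ∀ j, ∑ t ∈ S, shiftBinom t t' * E t j * p t = 0) :
    shiftCoeff S p α t' = 0 := by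
  refine (mul_eq_zero.1 ?_).resolve_left hℓ
  calc ℓ * shiftCoeff S p α t'
      = ∑ t ∈ S, (p t : ℝ) * (shiftBinom t t' * (ℓ * α ^ shiftExp t t')) := by
        rw [shiftCoeff, mul_sum]
        exact sum_congr rfl fun t _ => by ring
    _ = ∑ t ∈ S, ∑ j, ((shiftBinom t t' * E t j * p t : ℤ) : ℝ) * w j := by
        refine sum_congr rfl fun t ht => ?_
        rw [hE t ht, mul_sum, mul_sum]
        refine sum_congr rfl fun j _ => ?_
        push_cast
        ring
    _ = ∑ j, ((∑ t ∈ S, shiftBinom t t' * E t j * p t : ℤ) : ℝ) * w j := by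
        rw [sum_comm]
        push_cast
        simp_rw [sum_mul]
    _ = 0 := by simp [hp]

variable [DecidableEq ι] {d : ι → ℕ} {t : ι → Fin 3 → ℕ}

lemma shiftBinom_le (ht : t ∈ multidegrees d) (t' : ι → Fin 3 → ℕ) :
    shiftBinom t t' ≤ 2 ^ ∑ i, d i := by
  rw [shiftBinom, ← prod_pow_eq_pow_sum]
  refine prod_le_prod' fun i _ => ?_
  calc _ ≤ 2 ^ t i 0 * 2 ^ t i 1 :=
        Nat.mul_le_mul (Nat.choose_le_two_pow _ _) (Nat.choose_le_two_pow _ _)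
    _ = 2 ^ (t i 0 + t i 1) := (pow_add _ _ _).symm
    _ ≤ 2 ^ d i := Nat.pow_le_pow_right two_pos (by have := mem_multidegrees.1 ht i; omega)

lemma shiftExp_le (ht : t ∈ multidegrees d) (t' : ι → Fin 3 → ℕ) :
    shiftExp t t' ≤ ∑ i, d i :=
  sum_le_sum fun i _ => by have := mem_multidegrees.1 ht i; omega

/-- The form with coefficients `p`, supported on `S`, does not vanish and has coefficients at most
`C ^ ∑ i, d i`, and the substitution `x ↦ x + α z`, `y ↦ y + α z` keeps its support inside `S`. -/
structure IsAuxiliaryForm (d : ι → ℕ) (S : Finset (ι → Fin 3 → ℕ)) (α C : ℝ)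
    (p : (ι → Fin 3 → ℕ) → ℤ) : Prop where
  exists_ne_zero : ∃ t ∈ S, p t ≠ 0
  abs_le : ∀ t, |(p t : ℝ)| ≤ C ^ ∑ i, d i
  shiftCoeff_eq_zero : ∀ t' ∈ multidegrees d \ S, shiftCoeff S p α t' = 0

lemma abs_shiftCoeff_le {S : Finset (ι → Fin 3 → ℕ)} {α C : ℝ} {p : (ι → Fin 3 → ℕ) → ℤ}
    (hS : S ⊆ multidegrees d) (hC : 0 ≤ C) (hp : ∀ t, |(p t : ℝ)| ≤ C ^ ∑ i, d i)
    (t' : ι → Fin 3 → ℕ) :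
    |shiftCoeff S p α t'| ≤ (8 * C * max 1 |α|) ^ ∑ i, d i := by
  set N := ∑ i, d i
  have hpow : ∀ t ∈ S, |α| ^ shiftExp t t' ≤ max 1 |α| ^ N := fun t ht =>
    (pow_le_pow_left₀ (abs_nonneg _) (le_max_right _ _) _).trans
      (pow_le_pow_right₀ (le_max_left _ _) (shiftExp_le (hS ht) t'))
  have hbinom : ∀ t ∈ S, (shiftBinom t t' : ℝ) ≤ 2 ^ N := fun t ht => by
    exact_mod_cast shiftBinom_le (hS ht) t'
  have hcard : (#S : ℝ) ≤ 4 ^ N := by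
    exact_mod_cast (card_le_card hS).trans (card_multidegrees_le d)
  calc |shiftCoeff S p α t'|
      ≤ ∑ t ∈ S, |(p t : ℝ)| * (shiftBinom t t' * |α| ^ shiftExp t t') := by
        refine (abs_sum_le_sum_abs _ _).trans_eq (sum_congr rfl fun t _ => ?_)
        rw [abs_mul, abs_mul, Nat.abs_cast, abs_pow]
    _ ≤ ∑ _t ∈ S, C ^ N * (2 ^ N * max 1 |α| ^ N) := by
        refine sum_le_sum fun t ht => ?_
        gcongr
        exacts [hp t, hbinom t ht, hpow t ht]
    _ = #S * (C ^ N * (2 ^ N * max 1 |α| ^ N)) := by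
        rw [sum_const, nsmul_eq_mul]
    _ ≤ 4 ^ N * (C ^ N * (2 ^ N * max 1 |α| ^ N)) := by gcongr
    _ = (8 * C * max 1 |α|) ^ N := by simp only [← mul_pow]; ring_nf

lemma exists_isAuxiliaryForm_of_card_le {α C : ℝ} {g : ℕ} {w : Fin g → ℝ} {ℓ : ℤ}
    {S : Finset (ι → Fin 3 → ℕ)} (hα : PowerCoordinates α w ℓ C) (hd : 1 ≤ ∑ i, d i)
    (hS : S ⊆ multidegrees d) (hcard : 2 * (#(multidegrees d \ S) * g) ≤ #S) (hne : S.Nonempty) :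
    ∃ p, IsAuxiliaryForm d S α (8 * C) p := by
  set N := ∑ i, d i
  have hC := hα.one_le
  have exists_coord : ∀ t ∈ S, ∀ t', ∃ E : Fin g → ℤ,
      (ℓ : ℝ) ^ N * α ^ shiftExp t t' = ∑ j, (E j : ℝ) * w j ∧ ∀ j, |(E j : ℝ)| ≤ C ^ N :=
    fun t ht t' => hα.exists_coord N _ (shiftExp_le (hS ht) t') hd
  choose! E hE hEC using exists_coord
  have : Nonempty S := hne.to_subtype
  obtain ⟨p, hp0, hp, hpC⟩ := exists_ne_zero_int_solution
    (Matrix.of fun (r : (multidegrees d \ S : Finset _) × Fin g) (t : S) =>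
      (shiftBinom t.1 r.1.1 : ℤ) * E t r.1 r.2) (B := (2 * C) ^ N)
    (one_le_pow₀ (by linarith))
    (fun r t => by
      have := shiftBinom_le (hS t.2) r.1.1
      rw [Matrix.of_apply, Int.cast_mul, Int.cast_natCast, abs_mul, Nat.abs_cast, mul_pow]
      gcongr
      · exact_mod_cast this
      · exact hEC t t.2 r.1 r.2)
    (by simpa using hcard)
  refine ⟨fun t => if ht : t ∈ S then p ⟨t, ht⟩ else 0, ?_, fun t => ?_, fun t' ht' => ?_⟩
  · obtain ⟨t, ht⟩ := Function.ne_iff.1 hp0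
    exact ⟨t, t.2, by simpa using ht⟩
  · split_ifs with ht
    · calc |(p ⟨t, ht⟩ : ℝ)| ≤ Fintype.card S * (2 * C) ^ N := hpC _
        _ ≤ 4 ^ N * (2 * C) ^ N := by
            gcongr
            rw [Fintype.card_coe]
            exact_mod_cast (card_le_card hS).trans (card_multidegrees_le d)
        _ = (8 * C) ^ N := by rw [← mul_pow]; ring_nf
    · simp only [Int.cast_zero, abs_zero]
      positivity
  · refine shiftCoeff_eq_zero_of_coord (pow_ne_zero N (Int.cast_ne_zero.2 hα.ne_zero))
      (fun t ht => hE t ht t') fun j => ?_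
    refine Eq.trans ?_ (congrFun hp (⟨t', ht'⟩, j))
    rw [← sum_coe_sort S]
    exact sum_congr rfl fun t _ => by rw [dif_pos t.2]; rfl

lemma exists_isAuxiliaryForm {α ε : ℝ} (hα : IsAlgebraic ℚ α) (hε : 0 < ε) :
    ∃ m > 0, ∃ C ≥ (1 : ℝ), ∀ (s : Fin m → ℝ) (d : Fin m → ℕ) (D : ℝ), (∀ i, 0 < d i) → 0 < D →
      (∀ i, s i * d i = D) → ∃ p, IsAuxiliaryForm d (balanced s d D ε) α C p := by
  obtain ⟨g, w, ℓ, C, hC⟩ := exists_powerCoordinates hα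
  obtain ⟨m, hm⟩ := exists_nat_ge (3 * (2 * (g : ℝ) + 2) / ε ^ 2)
  rw [div_le_iff₀ (by positivity)] at hm
  have hm0 : 0 < m := Nat.pos_of_ne_zero fun h0 => by
    rw [h0, Nat.cast_zero, zero_mul] at hm
    have : (0 : ℝ) < 3 * (2 * (g : ℝ) + 2) := by positivity
    linarith
  have : Nonempty (Fin m) := ⟨⟨0, hm0⟩⟩
  refine ⟨m, hm0, 8 * C, by linarith [hC.one_le], fun s d D hd hD hsd => ?_⟩
  obtain ⟨hcard, hne⟩ :=
    card_multidegrees_sdiff_balanced_le hd hD hsd hε (g := g) (by simpa using hm)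
  refine exists_isAuxiliaryForm_of_card_le hC ?_ (balanced_subset_multidegrees s d D ε) hcard hne
  exact (hd ⟨0, hm0⟩).trans_le (single_le_sum (fun _ _ => Nat.zero_le _) (mem_univ _))

end AuxiliaryForm

section HasseSum

lemma choose_mul_add_pow_sub {R : Type*} [CommRing R] {a n : ℕ} (hn : a ≤ n) (J : ℕ) (x v : R) :
    a.choose J * (x + v) ^ (a - J) =
      ∑ k ∈ range (n + 1), (a.choose k : R) * k.choose J * x ^ (k - J) * v ^ (a - k) := by
  rw [← sum_subset (range_mono (Nat.succ_le_succ hn)) fun k _ hk => by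
    rw [Nat.choose_eq_zero_of_lt (by simpa using hk)]; simp]
  rcases lt_or_ge a J with hJ | hJ
  · rw [Nat.choose_eq_zero_of_lt hJ, Nat.cast_zero, zero_mul, sum_eq_zero fun k hk => ?_]
    rw [Nat.choose_eq_zero_of_lt ((mem_range_succ_iff.1 hk).trans_lt hJ)]
    simp
  obtain ⟨b, rfl⟩ := Nat.exists_eq_add_of_le hJ
  rw [Nat.succ_eq_add_one, add_assoc, sum_range_add, sum_eq_zero fun k hk => ?_, zero_add,
    Nat.add_sub_cancel_left, add_pow, mul_sum]
  · refine sum_congr rfl fun k _ => ?_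
    have hchoose := Nat.choose_mul (n := J + b) (k := J + k) (s := J) (by omega)
    rw [Nat.add_sub_cancel_left, Nat.add_sub_cancel_left] at hchoose
    have hcast : ((J + b).choose (J + k) : R) * (J + k).choose J =
        (J + b).choose J * b.choose k := by exact_mod_cast congrArg (Nat.cast (R := R)) hchoose
    rw [hcast, Nat.add_sub_cancel_left, Nat.add_sub_add_left]
    ring
  · rw [Nat.choose_eq_zero_of_lt (mem_range.1 hk)]
    simp

variable {ι : Type*} [Fintype ι] {R : Type*} [CommRing R]

/-- The value at `v` of the Hasse derivative of order `J` of the monomial of exponent `t`, in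
triples of variables indexed by `ι`. -/
def hasseTerm (t J : ι → Fin 3 → ℕ) (v : ι → Fin 3 → R) : R :=
  ∏ i, ∏ k, (t i k).choose (J i k) * v i k ^ (t i k - J i k)

/-- The value at `v` of the Hasse derivative of order `J` of the form with coefficients `p`
supported on `S`. -/
def hasseSum (S : Finset (ι → Fin 3 → ℕ)) (p : (ι → Fin 3 → ℕ) → ℤ) (J : ι → Fin 3 → ℕ)
    (v : ι → Fin 3 → R) : R :=
  ∑ t ∈ S, p t * hasseTerm t J v

lemma map_hasseSum {R' : Type*} [CommRing R'] (φ : R →+* R') (S : Finset (ι → Fin 3 → ℕ))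
    (p : (ι → Fin 3 → ℕ) → ℤ) (J : ι → Fin 3 → ℕ) (v : ι → Fin 3 → R) :
    φ (hasseSum S p J v) = hasseSum S p J fun i k => φ (v i k) := by
  simp [hasseSum, hasseTerm]

/-- The coordinates `x - α z`, `y - α z`, `z` of the point `(x, y, z)`. -/
def shear (α : R) (v : Fin 3 → R) : Fin 3 → R :=
  ![v 0 - α * v 2, v 1 - α * v 2, v 2]

lemma prod_choose_mul_pow_eq_sum {n : ℕ} {t J : Fin 3 → ℕ} (ht : t ∈ piAntidiag univ n)
    (hJ : J 2 = 0) (α : R) (v : Fin 3 → R) :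
    ∏ k, ((t k).choose (J k) : R) * v k ^ (t k - J k) =
      ∑ t' ∈ piAntidiag univ n, (((t 0).choose (t' 0) * (t 1).choose (t' 1) : ℕ) : R) *
        α ^ (t 0 - t' 0 + (t 1 - t' 1)) *
        ∏ k, (t' k).choose (J k) * shear α v k ^ (t' k - J k) := by
  have mem_iff {x : Fin 3 → ℕ} : x ∈ piAntidiag univ n ↔ x 0 + x 1 + x 2 = n := by
    simp [mem_piAntidiag, Fin.sum_univ_three]
  rw [mem_iff] at ht
  have hx := choose_mul_add_pow_sub (show t 0 ≤ n by omega) (J 0) (v 0 - α * v 2) (α * v 2)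
  have hy := choose_mul_add_pow_sub (show t 1 ≤ n by omega) (J 1) (v 1 - α * v 2) (α * v 2)
  rw [sub_add_cancel] at hx hy
  rw [Fin.prod_univ_three, hx, hy, sum_mul_sum, ← sum_product', sum_mul]
  symm
  refine sum_of_injOn (fun t' => (t' 0, t' 1)) (fun x hx y hy hxy => ?_) (fun x hx => ?_)
    (fun x _ hx' => ?_) fun t' ht' => ?_
  · have hx := mem_iff.1 hx
    have hy := mem_iff.1 hy
    rw [Prod.mk.injEq] at hxy
    ext k
    fin_cases k <;> simp <;> omega
  · have := mem_iff.1 hx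
    simp only [coe_product, Set.mem_prod, coe_range, Set.mem_Iio]
    omega
  · have hlt : t 0 < x.1 ∨ t 1 < x.2 := by
      by_contra! h
      exact hx' ⟨![x.1, x.2, n - x.1 - x.2], mem_iff.2 (by simp; omega), by simp⟩
    rcases hlt with h | h <;> rw [Nat.choose_eq_zero_of_lt h] <;> simp
  · rw [mem_iff] at ht'
    rcases lt_or_ge (t 0) (t' 0) with h0 | h0
    · simp [Nat.choose_eq_zero_of_lt h0]
    rcases lt_or_ge (t 1) (t' 1) with h1 | h1
    · simp [Nat.choose_eq_zero_of_lt h1]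
    have hz : t' 2 = t 0 - t' 0 + (t 1 - t' 1) + t 2 := by omega
    simp only [shear, Fin.prod_univ_three, Matrix.cons_val_zero, Matrix.cons_val_one,
      Matrix.cons_val, hJ, hz, Nat.choose_zero_right, Nat.sub_zero, Nat.cast_mul, Nat.cast_one,
      pow_add, mul_pow]
    ring

variable [DecidableEq ι]

lemma hasseSum_eq_sum_shiftCoeff_mul {d : ι → ℕ} {S : Finset (ι → Fin 3 → ℕ)}
    (hS : S ⊆ multidegrees d) (p : (ι → Fin 3 → ℕ) → ℤ) {J : ι → Fin 3 → ℕ}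
    (hJ : ∀ i, J i 2 = 0) (α : R) (v : ι → Fin 3 → R) :
    hasseSum S p J v = ∑ t' ∈ multidegrees d, shiftCoeff S p α t' *
      hasseTerm t' J fun i => shear α (v i) := by
  simp_rw [shiftCoeff, sum_mul]
  rw [sum_comm]
  refine sum_congr rfl fun t ht => ?_
  have ht' := Fintype.mem_piFinset.1 (hS ht)
  rw [hasseTerm, prod_congr rfl fun i _ => prod_choose_mul_pow_eq_sum (ht' i) (hJ i) α (v i),
    prod_univ_sum, mul_sum]
  refine sum_congr rfl fun t' _ => ?_
  simp only [prod_mul_distrib, prod_pow_eq_pow_sum, shiftBinom, shiftExp, hasseTerm, Nat.cast_prod,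
    Nat.cast_mul]
  ring

end HasseSum

section Vanishing

variable {ι : Type*} [Fintype ι]

lemma hasseTerm_pow_mul {R : Type*} [CommRing R] (t J e : ι → Fin 3 → ℕ) (b : R)
    (v : ι → Fin 3 → R) :
    hasseTerm t J (fun i k => b ^ e i k * v i k) =
      b ^ (∑ i, ∑ k, e i k * (t i k - J i k)) * hasseTerm t J v := by
  simp only [hasseTerm, ← prod_pow_eq_pow_sum, ← prod_mul_distrib]
  refine prod_congr rfl fun i _ => prod_congr rfl fun k _ => ?_
  rw [mul_pow, ← pow_mul]
  ring

lemma pow_mul_hasseSum_mem_range {R R' : Type*} [CommRing R] [CommRing R'] (φ : R →+* R')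
    {S : Finset (ι → Fin 3 → ℕ)} (p : (ι → Fin 3 → ℕ) → ℤ) (J : ι → Fin 3 → ℕ) {b : R}
    {e : ι → Fin 3 → ℕ} {u : ι → Fin 3 → R} {v : ι → Fin 3 → R'} {E : ℕ}
    (hu : ∀ i k, φ (u i k) = φ b ^ e i k * v i k)
    (hE : ∀ t ∈ S, ∑ i, ∑ k, e i k * t i k ≤ E) :
    φ b ^ E * hasseSum S p J v ∈ φ.range := by
  rw [hasseSum, mul_sum]
  refine sum_mem fun t ht => ⟨b ^ (E - ∑ i, ∑ k, e i k * (t i k - J i k)) *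
    (p t * hasseTerm t J u), ?_⟩
  have hle : ∑ i, ∑ k, e i k * (t i k - J i k) ≤ E := (hE t ht).trans' <|
    sum_le_sum fun i _ => sum_le_sum fun k _ => Nat.mul_le_mul_left _ (Nat.sub_le _ _)
  have hterm : φ (hasseTerm t J u) = hasseTerm t J fun i k => φ b ^ e i k * v i k := by
    simp only [← hu]
    simp [hasseTerm]
  rw [map_mul, map_mul, map_pow, map_intCast, hterm, hasseTerm_pow_mul, mul_left_comm (p t : R'),
    ← mul_assoc, ← pow_add, Nat.sub_add_cancel hle]

lemma eq_zero_of_l1Norm_map_lt_one {σ : Type*} {H : MvPolynomial σ ℤ}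
    (h : l1Norm (map (Int.castRingHom ℝ) H) < 1) : H = 0 := by
  ext A
  have hA := (norm_coeff_le_l1Norm (map (Int.castRingHom ℝ) H) A).trans_lt h
  rw [coeff_map, eq_intCast, Real.norm_eq_abs] at hA
  exact Int.abs_lt_one_iff.1 (by exact_mod_cast hA)

variable {σ : Type*} {s : ι → ℝ} {d : ι → ℕ} {D ε q : ℝ} {γ : Fin 3 → ℝ} {t J : ι → Fin 3 → ℕ}

lemma l1Norm_hasseTerm_le [DecidableEq ι] (hq : 0 < q) (ht : t ∈ multidegrees d)
    {u : ι → Fin 3 → MvPolynomial σ ℝ} (hu : ∀ i k, l1Norm (u i k) ≤ 2 * q ^ (γ k * s i)) :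
    l1Norm (hasseTerm t J u) ≤
      4 ^ (∑ i, d i) * q ^ (∑ k, γ k * (∑ i, s i * t i k - ∑ i, s i * J i k)) := by
  by_cases hJ : ∃ i k, t i k < J i k
  · obtain ⟨i, k, hik⟩ := hJ
    have : hasseTerm t J u = 0 := prod_eq_zero (mem_univ i) <| prod_eq_zero (mem_univ k) <| by
      rw [Nat.choose_eq_zero_of_lt hik, Nat.cast_zero, zero_mul]
    rw [this, l1Norm_zero]
    positivity
  push Not at hJ
  have factor_le (i : ι) (k : Fin 3) :
      l1Norm (((t i k).choose (J i k) : MvPolynomial σ ℝ) * u i k ^ (t i k - J i k)) ≤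
        4 ^ t i k * q ^ (γ k * (s i * t i k - s i * J i k)) := by
    have hchoose : l1Norm ((t i k).choose (J i k) : MvPolynomial σ ℝ) ≤ 2 ^ t i k := by
      rw [← map_natCast C]
      refine (l1Norm_C_le _).trans ?_
      rw [Real.norm_natCast]
      exact_mod_cast Nat.choose_le_two_pow _ _
    calc l1Norm (((t i k).choose (J i k) : MvPolynomial σ ℝ) * u i k ^ (t i k - J i k))
        ≤ 2 ^ t i k * (2 * q ^ (γ k * s i)) ^ (t i k - J i k) :=
          (l1Norm_mul_le _ _).trans <| mul_le_mul hchoose ((l1Norm_pow_le _ _).trans <|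
            pow_le_pow_left₀ (l1Norm_nonneg _) (hu i k) _) (l1Norm_nonneg _) (by positivity)
      _ = 2 ^ t i k * 2 ^ (t i k - J i k) * q ^ (γ k * (s i * t i k - s i * J i k)) := by
          rw [mul_pow, ← Real.rpow_mul_natCast hq.le, Nat.cast_sub (hJ i k), mul_assoc, mul_assoc,
            mul_sub (s i)]
      _ ≤ 2 ^ t i k * 2 ^ t i k * q ^ (γ k * (s i * t i k - s i * J i k)) := by
          gcongr
          · norm_num
          · exact Nat.sub_le _ _
      _ = 4 ^ t i k * q ^ (γ k * (s i * t i k - s i * J i k)) := by rw [← mul_pow]; norm_num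
  calc l1Norm (hasseTerm t J u)
      ≤ ∏ i, ∏ k, (4 ^ t i k * q ^ (γ k * (s i * t i k - s i * J i k))) :=
        (l1Norm_prod_le _ _).trans <| prod_le_prod (fun _ _ => l1Norm_nonneg _) fun i _ =>
          (l1Norm_prod_le _ _).trans <| prod_le_prod (fun _ _ => l1Norm_nonneg _) fun k _ =>
            factor_le i k
    _ = _ := by
        simp only [prod_mul_distrib, prod_pow_eq_pow_sum, ← Real.rpow_sum_of_pos hq]
        rw [sum_comm (f := fun i k => γ k * (s i * t i k - s i * J i k))]
        simp only [← mul_sum, sum_sub_distrib]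
        congr 2
        exact sum_congr rfl fun i _ => by rw [Fin.sum_univ_three, mem_multidegrees.1 ht i]

lemma abs_weight_sub_le [DecidableEq ι] (hsd : ∀ i, s i * d i = D) (ht : t ∈ balanced s d D ε)
    (k : Fin 3) :
    |∑ i, s i * t i k - Fintype.card ι * D / 3| ≤ 2 * ε * (Fintype.card ι * D) := by
  obtain ⟨hdeg, hbal⟩ := mem_filter.1 ht
  have htotal : ∑ k, ∑ i, s i * t i k = Fintype.card ι * D := by
    rw [sum_comm, ← nsmul_eq_mul, ← card_univ, ← sum_const]
    refine sum_congr rfl fun i _ => ?_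
    rw [← mul_sum, ← hsd i, ← mem_multidegrees.1 hdeg i, Fin.sum_univ_three]
    push_cast
    rfl
  rw [Fin.sum_univ_three] at htotal
  have h0 := hbal 0
  have h1 := hbal 1
  have h2 := hbal 2
  rw [abs_le]
  constructor <;> fin_cases k <;> simp only [Fin.zero_eta, Fin.mk_one, Fin.reduceFinMk] <;> linarith

lemma sum_mul_le_of_abs_sub_le {κ : Type*} [Fintype κ] {γ x : κ → ℝ} {a b : ℝ}
    (h : ∀ k, |x k - a| ≤ b) : ∑ k, γ k * x k ≤ (∑ k, γ k) * a + (∑ k, |γ k|) * b := by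
  rw [sum_mul, sum_mul, ← sum_add_distrib]
  refine sum_le_sum fun k _ => ?_
  have : γ k * (x k - a) ≤ |γ k| * b := (le_abs_self _).trans <| by
    rw [abs_mul]; exact mul_le_mul_of_nonneg_left (h k) (abs_nonneg _)
  linarith

variable [DecidableEq ι] {α C₀ : ℝ} {p : (ι → Fin 3 → ℕ) → ℤ}
  {v : ι → Fin 3 → MvPolynomial σ ℝ}

lemma l1Norm_hasseSum_le (hq : 1 ≤ q) (hs : ∀ i, 0 ≤ s i) (hD : 0 ≤ D) (hε : 0 ≤ ε)
    (hsd : ∀ i, s i * d i = D) (hC₀ : 0 ≤ C₀) (hp : IsAuxiliaryForm d (balanced s d D ε) α C₀ p)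
    (hJ₂ : ∀ i, J i 2 = 0) (hJ : ∀ k, ∑ i, s i * J i k ≤ ε * (Fintype.card ι * D))
    (hv : ∀ i k, l1Norm (shear (C α) (v i) k) ≤ 2 * q ^ (γ k * s i)) :
    l1Norm (hasseSum (balanced s d D ε) p J v) ≤ (128 * C₀ * max 1 |α|) ^ (∑ i, d i) *
      q ^ (Fintype.card ι * D * ((∑ k, γ k) / 3 + 3 * ε * ∑ k, |γ k|)) := by
  set N := ∑ i, d i
  set U := Fintype.card ι * D * ((∑ k, γ k) / 3 + 3 * ε * ∑ k, |γ k|)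
  have hS := balanced_subset_multidegrees s d D ε
  have exponent_le : ∀ t ∈ balanced s d D ε,
      ∑ k, γ k * (∑ i, s i * t i k - ∑ i, s i * J i k) ≤ U := fun t ht => by
    have deviation_le (k : Fin 3) :
        |(∑ i, s i * t i k - ∑ i, s i * J i k) - Fintype.card ι * D / 3| ≤
          3 * ε * (Fintype.card ι * D) := by
      have hJ0 : 0 ≤ ∑ i, s i * J i k :=
        sum_nonneg fun i _ => mul_nonneg (hs i) (Nat.cast_nonneg _)
      have hweight := abs_le.1 (abs_weight_sub_le hsd ht k)
      have : 0 ≤ ε * (Fintype.card ι * D) := by positivity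
      exact abs_le.2 ⟨by linarith [hJ k], by linarith [hJ k]⟩
    exact (sum_mul_le_of_abs_sub_le deviation_le).trans_eq (by ring)
  have term_le : ∀ t ∈ multidegrees d,
      l1Norm (shiftCoeff (balanced s d D ε) p (C α) t * hasseTerm t J fun i => shear (C α) (v i)) ≤
        (8 * C₀ * max 1 |α|) ^ N * (4 ^ N * q ^ U) := fun t ht => by
    rw [← map_shiftCoeff]
    by_cases hbal : t ∈ balanced s d D ε
    · refine (l1Norm_mul_le _ _).trans (mul_le_mul ((l1Norm_C_le _).trans
        (abs_shiftCoeff_le hS hC₀ hp.abs_le t)) ?_ (l1Norm_nonneg _) (by positivity))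
      refine (l1Norm_hasseTerm_le (by positivity) ht hv).trans ?_
      gcongr
      exact exponent_le t hbal
    · rw [hp.shiftCoeff_eq_zero t (mem_sdiff.2 ⟨ht, hbal⟩), map_zero, zero_mul, l1Norm_zero]
      positivity
  calc l1Norm (hasseSum (balanced s d D ε) p J v)
      ≤ #(multidegrees d) * ((8 * C₀ * max 1 |α|) ^ N * (4 ^ N * q ^ U)) := by
        rw [hasseSum_eq_sum_shiftCoeff_mul hS p hJ₂ (C α), ← nsmul_eq_mul]
        exact (l1Norm_sum_le _ _).trans (sum_le_card_nsmul _ _ _ term_le)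
    _ ≤ 4 ^ N * ((8 * C₀ * max 1 |α|) ^ N * (4 ^ N * q ^ U)) := by
        gcongr
        exact_mod_cast card_multidegrees_le d
    _ = (128 * C₀ * max 1 |α|) ^ N * q ^ U := by
        rw [← mul_assoc, ← mul_assoc, ← mul_pow, ← mul_pow]
        ring_nf

variable {e : ι → Fin 3 → ℕ} {η : Fin 3 → ℝ}

lemma sum_exponent_mul_le (hsd : ∀ i, s i * d i = D) (hη : ∀ k, 0 ≤ η k)
    (he : ∀ i k, e i k ≤ η k * s i) (ht : t ∈ balanced s d D ε) :
    ∑ i, ∑ k, (e i k * t i k : ℝ) ≤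
      (∑ k, η k) * (Fintype.card ι * D / 3 + 2 * ε * (Fintype.card ι * D)) :=
  calc ∑ i, ∑ k, (e i k * t i k : ℝ) ≤ ∑ i, ∑ k, η k * (s i * t i k) := by
        refine sum_le_sum fun i _ => sum_le_sum fun k _ => ?_
        rw [← mul_assoc]
        exact mul_le_mul_of_nonneg_right (he i k) (Nat.cast_nonneg _)
    _ = ∑ k, η k * ∑ i, s i * t i k := by rw [sum_comm]; simp only [mul_sum]
    _ ≤ (∑ k, η k) * (Fintype.card ι * D / 3) + (∑ k, |η k|) * (2 * ε * (Fintype.card ι * D)) :=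
        sum_mul_le_of_abs_sub_le (abs_weight_sub_le hsd ht)
    _ = _ := by simp only [abs_of_nonneg (hη _), mul_add]

lemma hasseSum_eq_zero {q : ℕ} (hq : 0 < q) (hs : ∀ i, 0 ≤ s i) (hD : 0 ≤ D) (hε : 0 ≤ ε)
    (hsd : ∀ i, s i * d i = D) (hC₀ : 0 ≤ C₀) (hp : IsAuxiliaryForm d (balanced s d D ε) α C₀ p)
    (hJ₂ : ∀ i, J i 2 = 0) (hJ : ∀ k, ∑ i, s i * J i k ≤ ε * (Fintype.card ι * D))
    (hv : ∀ i k, l1Norm (shear (C α) (v i) k) ≤ 2 * q ^ (γ k * s i))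
    {u : ι → Fin 3 → MvPolynomial σ ℤ} (hη : ∀ k, 0 ≤ η k) (he : ∀ i k, e i k ≤ η k * s i)
    (hu : ∀ i k, map (Int.castRingHom ℝ) (u i k) = C ((q : ℝ) ^ e i k) * v i k)
    (hsmall : (128 * C₀ * max 1 |α|) ^ (∑ i, d i) < (q : ℝ) ^ (Fintype.card ι * D *
      (-(∑ k, (γ k + η k)) / 3 - 3 * ε * ∑ k, (|γ k| + η k)))) :
    hasseSum (balanced s d D ε) p J v = 0 := by
  have hq0 : (0 : ℝ) < q := Nat.cast_pos.2 hq
  have hq1 : (1 : ℝ) ≤ q := Nat.one_le_cast.2 hq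
  set M := Fintype.card ι * D
  have : 0 ≤ M := by positivity
  have hη0 : 0 ≤ ∑ k, η k := sum_nonneg fun k _ => hη k
  set E := ⌊(∑ k, η k) * (M / 3 + 2 * ε * M)⌋₊
  have denominator_le : ∀ t ∈ balanced s d D ε, ∑ i, ∑ k, e i k * t i k ≤ E := fun t ht =>
    Nat.le_floor <| by exact_mod_cast sum_exponent_mul_le hsd hη he ht
  obtain ⟨H, hH⟩ := pow_mul_hasseSum_mem_range (map (Int.castRingHom ℝ)) p J (b := C (q : ℤ))
    (u := u) (v := v) (by simpa using hu) denominator_le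
  have hnorm : l1Norm (map (Int.castRingHom ℝ) H) < 1 := by
    set U := M * ((∑ k, γ k) / 3 + 3 * ε * ∑ k, |γ k|)
    set V := M * (-(∑ k, (γ k + η k)) / 3 - 3 * ε * ∑ k, (|γ k| + η k))
    have hE : (E : ℝ) ≤ (∑ k, η k) * (M / 3 + 2 * ε * M) := Nat.floor_le (by positivity)
    have hpos : 0 ≤ ε * M * ∑ k, η k := by positivity
    calc l1Norm (map (Int.castRingHom ℝ) H)
        ≤ (q : ℝ) ^ E * ((128 * C₀ * max 1 |α|) ^ (∑ i, d i) * (q : ℝ) ^ U) := by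
          rw [hH, show map (Int.castRingHom ℝ) (C (q : ℤ)) ^ E = C ((q : ℝ) ^ E) by simp]
          refine (l1Norm_mul_le _ _).trans (mul_le_mul ((l1Norm_C_le _).trans_eq ?_)
            (l1Norm_hasseSum_le hq1 hs hD hε hsd hC₀ hp hJ₂ hJ hv) (l1Norm_nonneg _)
            (by positivity))
          exact Real.norm_of_nonneg (by positivity)
      _ < (q : ℝ) ^ E * ((q : ℝ) ^ V * (q : ℝ) ^ U) := by gcongr
      _ = (q : ℝ) ^ (E + (V + U)) := by
          rw [Real.rpow_add hq0, Real.rpow_add hq0, Real.rpow_natCast]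
      _ ≤ 1 := by
          refine Real.rpow_le_one_of_one_le_of_nonpos hq1 ?_
          simp only [U, V, sum_add_distrib]
          linarith
  rw [eq_zero_of_l1Norm_map_lt_one hnorm, map_zero, eq_comm] at hH
  refine (mul_eq_zero.1 hH).resolve_left (pow_ne_zero _ ?_)
  simpa using by omega

end Vanishing

section LinearForm

variable {ι κ R R' : Type*} [Fintype κ] [CommRing R] [CommRing R']

/-- The linear form `∑ l, a l * X (i, l)` in the block of variables attached to `i`. -/
noncomputable def linearForm (i : ι) : (κ → R) →ₗ[R] MvPolynomial (ι × κ) R :=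
  Fintype.linearCombination R fun l => X (i, l)

lemma linearForm_apply (i : ι) (a : κ → R) : linearForm i a = ∑ l, C (a l) * X (i, l) := by
  simp [linearForm, Fintype.linearCombination_apply, smul_eq_C_mul]

lemma map_linearForm (φ : R →+* R') (i : ι) (a : κ → R) :
    map φ (linearForm i a) = linearForm i fun l => φ (a l) := by
  simp [linearForm_apply]

lemma shear_linearForm (α : R) (i : ι) (x : Fin 3 → κ → R) (k : Fin 3) :
    shear (C α) (fun j => linearForm i (x j)) k =
      linearForm i fun l => shear α (fun j => x j l) k := by
  have hsub (a b : κ → R) :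
      linearForm i a - C α * linearForm i b = linearForm i fun l => a l - α * b l := by
    rw [← smul_eq_C_mul, ← map_smul, ← map_sub]
    rfl
  fin_cases k
  exacts [hsub _ _, hsub _ _, rfl]

lemma l1Norm_linearForm_le (i : ι) {a : κ → ℝ} {B : ℝ} (ha : ∀ l, |a l| ≤ B) :
    l1Norm (linearForm i a) ≤ Fintype.card κ * B := by
  rw [linearForm_apply, ← nsmul_eq_mul]
  refine (l1Norm_sum_le _ _).trans (sum_le_card_nsmul _ _ _ fun l _ => ?_)
  rw [C_mul_X_eq_monomial]
  exact (l1Norm_monomial_le _ _).trans (ha l)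

lemma exists_algHom_linearForm {K : Type*} [Field K] {y z : ι → Fin 2 → K}
    (h : ∀ i, y i 0 * z i 1 - y i 1 * z i 0 ≠ 0) :
    ∃ φ : MvPolynomial (ι × Fin 2) K →ₐ[K] MvPolynomial ι K,
      ∀ i, φ (linearForm i (y i)) = X i ∧ φ (linearForm i (z i)) = 1 := by
  -- Cramer's rule for `y i 0 * u + y i 1 * v = X i`, `z i 0 * u + z i 1 * v = 1`.
  refine ⟨aeval fun il => C (y il.1 0 * z il.1 1 - y il.1 1 * z il.1 0)⁻¹ *
    ![X il.1 * C (z il.1 1) - C (y il.1 1), C (y il.1 0) - X il.1 * C (z il.1 0)] il.2,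
    fun i => ?_⟩
  have hinv : (C (y i 0 * z i 1 - y i 1 * z i 0)⁻¹ : MvPolynomial ι K) *
      (C (y i 0) * C (z i 1) - C (y i 1) * C (z i 0)) = 1 := by
    rw [← map_mul, ← map_mul, ← map_sub, ← map_mul, inv_mul_cancel₀ (h i), C_1]
  simp only [linearForm_apply, Fin.sum_univ_two, map_add, map_mul, aeval_X, algHom_C,
    algebraMap_eq, Matrix.cons_val_zero, Matrix.cons_val_one]
  constructor
  · linear_combination X i * hinv
  · linear_combination hinv

end LinearForm

section Slot

variable {ι : Type*} [Fintype ι]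

/-- The exponents of the `k`-th variable of each block, as a monomial exponent. -/
noncomputable def slot (k : Fin 3) (t : ι → Fin 3 → ℕ) : ι →₀ ℕ :=
  Finsupp.equivFunOnFinite.symm fun i => t i k

lemma slot_apply (k : Fin 3) (t : ι → Fin 3 → ℕ) (i : ι) : slot k t i = t i k := rfl

lemma hasseTerm_affine {R : Type*} [CommRing R] (θ ξ : ι → R) (t : ι → Fin 3 → ℕ) (J : ι →₀ ℕ) :
    hasseTerm t (fun i => Pi.single 0 (J i)) (fun i => ![C (θ i) * X i + C (ξ i), X i, 1]) =
      (∏ i, ((t i 0).choose (J i) : MvPolynomial ι R) *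
        (C (θ i) * X i + C (ξ i)) ^ (t i 0 - J i)) * monomial (slot 1 t) 1 := by
  have hmonomial : (monomial (slot 1 t) 1 : MvPolynomial ι R) = ∏ i, X i ^ t i 1 := by
    rw [monomial_eq, C_1, one_mul, Finsupp.prod_fintype _ _ fun _ => pow_zero _]
    rfl
  rw [hmonomial, hasseTerm, ← prod_mul_distrib]
  simp [Fin.prod_univ_three]

variable [DecidableEq ι]

/-- The polynomial in `x` multiplying `y ^ b` in `∑ t ∈ S, p t * x ^ t 0 * y ^ t 1`. -/
noncomputable def slotPolynomial (S : Finset (ι → Fin 3 → ℕ)) (p : (ι → Fin 3 → ℕ) → ℤ)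
    (b : ι →₀ ℕ) : MvPolynomial ι ℤ :=
  ∑ t ∈ S with slot 1 t = b, monomial (slot 0 t) (p t)

lemma coeff_hasseSum_affine {R : Type*} [CommRing R] {S : Finset (ι → Fin 3 → ℕ)}
    {p : (ι → Fin 3 → ℕ) → ℤ} {b : ι →₀ ℕ} (hb : ∀ t ∈ S, p t ≠ 0 → slot 1 t ≤ b → slot 1 t = b)
    (θ ξ : ι → R) (J : ι →₀ ℕ) :
    coeff b (hasseSum S p (fun i => Pi.single 0 (J i))
      fun i => ![C (θ i) * X i + C (ξ i), X i, 1]) =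
      aeval ξ (hasseDeriv J (slotPolynomial S p b)) := by
  rw [hasseSum, coeff_sum, slotPolynomial, map_sum, map_sum, sum_filter]
  refine sum_congr rfl fun t ht => ?_
  rw [hasseTerm_affine, ← mul_assoc, coeff_mul_monomial', mul_one]
  split_ifs with hle heq heq
  · rw [heq, tsub_self, hasseDeriv_monomial, aeval_monomial, ← constantCoeff_eq]
    simp [multiBinom_eq_prod_univ, prod_mul_distrib, Finsupp.prod_fintype, slot_apply]
    ring
  · have hpt : p t = 0 := by_contra fun hpt => heq (hb t ht hpt hle)
    simp [hpt]
  · exact absurd heq.le hle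
  · rfl

lemma degreeOf_slotPolynomial_le {d : ι → ℕ} {S : Finset (ι → Fin 3 → ℕ)}
    (hS : S ⊆ multidegrees d) (p : (ι → Fin 3 → ℕ) → ℤ) (b : ι →₀ ℕ) (i : ι) :
    (slotPolynomial S p b).degreeOf i ≤ d i := by
  refine (degreeOf_sum_le _ _ _).trans (Finset.sup_le fun t ht => ?_)
  have := mem_multidegrees.1 (hS (mem_of_mem_filter t ht)) i
  refine (degreeOf_le_iff.2 fun A hA => ?_).trans (show t i 0 ≤ d i by omega)
  rw [mem_singleton.1 (support_monomial_subset hA), slot_apply]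

lemma l1Norm_slotPolynomial_le {d : ι → ℕ} {S : Finset (ι → Fin 3 → ℕ)}
    (hS : S ⊆ multidegrees d) {p : (ι → Fin 3 → ℕ) → ℤ} {C₀ : ℝ} (hC₀ : 0 ≤ C₀)
    (hp : ∀ t, |(p t : ℝ)| ≤ C₀ ^ ∑ i, d i) (b : ι →₀ ℕ) :
    l1Norm (slotPolynomial S p b) ≤ (4 * C₀) ^ ∑ i, d i := by
  rw [mul_pow]
  refine (l1Norm_sum_le _ _).trans <| (sum_le_card_nsmul _ _ (C₀ ^ ∑ i, d i) fun t _ =>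
    (l1Norm_monomial_le _ _).trans ((Int.norm_eq_abs _).trans_le (hp t))).trans ?_
  rw [nsmul_eq_mul]
  gcongr
  exact_mod_cast (card_le_card ((filter_subset _ _).trans hS)).trans (card_multidegrees_le d)

lemma slotPolynomial_ne_zero {d : ι → ℕ} {S : Finset (ι → Fin 3 → ℕ)}
    (hS : S ⊆ multidegrees d) {p : (ι → Fin 3 → ℕ) → ℤ} {t : ι → Fin 3 → ℕ} (ht : t ∈ S)
    (hpt : p t ≠ 0) : slotPolynomial S p (slot 1 t) ≠ 0 := by
  refine ne_zero_iff.2 ⟨slot 0 t, ?_⟩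
  rw [slotPolynomial, coeff_sum, sum_eq_single t]
  · rwa [coeff_monomial, if_pos rfl]
  · intro t' ht' hne
    rw [mem_filter] at ht'
    rw [coeff_monomial, if_neg fun h0 => hne ?_]
    ext i k
    have h0i := DFunLike.congr_fun h0 i
    have h1i := DFunLike.congr_fun ht'.2 i
    have := mem_multidegrees.1 (hS ht'.1) i
    have := mem_multidegrees.1 (hS ht) i
    simp only [slot_apply] at h0i h1i
    fin_cases k <;> simp <;> omega
  · simp [ht]

lemma IsAuxiliaryForm.exists_polynomial {d : ι → ℕ} {S : Finset (ι → Fin 3 → ℕ)}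
    {α C₀ : ℝ} {p : (ι → Fin 3 → ℕ) → ℤ} (hp : IsAuxiliaryForm d S α C₀ p)
    (hS : S ⊆ multidegrees d) (hC₀ : 0 ≤ C₀) :
    ∃ P : MvPolynomial ι ℤ, P ≠ 0 ∧ (∀ i, P.degreeOf i ≤ d i) ∧
      l1Norm P ≤ (4 * C₀) ^ (∑ i, d i) ∧ ∀ (θ : ι → ℝ) (ξ : ι → ℚ) (J : ι →₀ ℕ),
        hasseSum S p (fun i => Pi.single 0 (J i))
          (fun i => ![C (θ i) * X i + C (ξ i : ℝ), X i, 1]) = 0 → aeval ξ (hasseDeriv J P) = 0 := by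
  obtain ⟨t, ht, hmin⟩ := exists_minimalFor (fun t : ι → Fin 3 → ℕ => slot 1 t)
    (S.filter fun t => p t ≠ 0)
    (hp.exists_ne_zero.imp fun t ht => mem_filter.2 ht)
  rw [mem_filter] at ht
  refine ⟨slotPolynomial S p (slot 1 t), slotPolynomial_ne_zero hS ht.1 ht.2,
    degreeOf_slotPolynomial_le hS p _, l1Norm_slotPolynomial_le hS hC₀ hp.abs_le _,
    fun θ ξ J h0 => (algebraMap ℚ ℝ).injective ?_⟩
  have hcoeff := coeff_hasseSum_affine
    (fun t' ht' hpt' hle => le_antisymm hle (hmin (mem_filter.2 ⟨ht', hpt'⟩) hle))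
    θ (fun i => (ξ i : ℝ)) J
  rw [h0, coeff_zero] at hcoeff
  rw [← aeval_algebraMap_apply, map_zero]
  exact hcoeff.symm

end Slot

lemma exists_mul_le_log_den {α b c : ℝ} (hirr : Irrational α) (halg : IsAlgebraic ℚ α)
    (hb : 1 < b) (hc : 0 < c) :
    ∃ c' > 0, ∃ S, ∀ s ≥ S, ∀ ξ : ℚ, |ξ - α| ≤ b ^ (-(c * s)) → c' * s ≤ Real.log ξ.den := by
  have hb0 : 0 < b := by linarith
  have hlogb := Real.log_pos hb
  obtain ⟨f, hf0, hfα⟩ := (IsFractionRing.isAlgebraic_iff ℤ ℚ ℝ).2 halg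
  obtain ⟨A, hA, hLiouville⟩ := Liouville.exists_pos_real_of_irrational_root hirr hf0
    (by rwa [Polynomial.eval_map_algebraMap])
  set n := f.natDegree
  refine ⟨c * Real.log b / (2 * (n + 1)), by positivity, 2 * Real.log A / (c * Real.log b),
    fun s hs ξ hξ => ?_⟩
  have hden : (1 : ℝ) ≤ ξ.den := Nat.one_le_cast.2 ξ.pos
  have hpow : 1 ≤ (ξ.den : ℝ) ^ n * (b ^ (-(c * s)) * A) := by
    have := hLiouville ξ.num (ξ.den - 1)
    rw [Nat.cast_sub ξ.pos, Nat.cast_one, sub_add_cancel, ← Rat.cast_def, abs_sub_comm] at this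
    refine this.trans ?_
    gcongr
  have hlog := Real.log_nonneg hpow
  rw [Real.log_mul (by positivity) (by positivity), Real.log_mul (by positivity) (by positivity),
    Real.log_rpow hb0, Real.log_pow] at hlog
  rw [ge_iff_le, div_le_iff₀ (by positivity)] at hs
  rw [div_mul_eq_mul_div, div_le_iff₀ (by positivity)]
  nlinarith [Real.log_nonneg hden]

lemma exists_lacunary_sequence {P : ℕ → Prop} (hP : ∃ᶠ s in atTop, P s) {δ : ℝ} (hδ : 0 < δ)
    (m : ℕ) : ∃ s : Fin m → ℕ, (∀ i, P (s i)) ∧ ∀ i j, i < j → (s j : ℝ) ≤ δ * s i := by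
  induction m with
  | zero => exact ⟨Fin.elim0, fun i => i.elim0, fun i => i.elim0⟩
  | succ m ih =>
    obtain ⟨s, hsP, hs⟩ := ih
    obtain ⟨x, hxP, hx⟩ := (hP.and_eventually
      (tendsto_natCast_atTop_atTop.eventually_ge_atTop ((∑ j, (s j : ℝ)) / δ))).exists
    rw [div_le_iff₀ hδ] at hx
    refine ⟨Fin.cons x s, fun i => Fin.cases hxP hsP i, fun i j => ?_⟩
    cases j using Fin.cases with
    | zero => exact fun h => absurd h (Fin.not_lt_zero i)
    | succ j =>
      cases i using Fin.cases with
      | zero =>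
        intro _
        rw [Fin.cons_zero, Fin.cons_succ, mul_comm]
        exact (single_le_sum (f := fun j => (s j : ℝ)) (fun _ _ => Nat.cast_nonneg _)
          (mem_univ j)).trans hx
      | succ i => exact fun h => hs i j (Fin.succ_lt_succ_iff.1 h)

section PlanePoints

/-- The two points `(v k l / q ^ e k)ₖ` of `ℤ[1/q]³`, for `l = 0, 1`, lie on the plane
`x = θ * y + ξ * z`, project to independent vectors `(y, z)`, and have `k`-th sheared coordinate at
most `q ^ (γ k * s)` and denominators at most `q ^ (η k * s)`; the slope `ξ` is `q ^ (-c * s)`-close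
to `α`. -/
structure PlanePoints (q : ℕ) (α c : ℝ) (η γ : Fin 3 → ℝ) (s : ℕ) (e : Fin 3 → ℕ)
    (v : Fin 3 → Fin 2 → ℤ) (θ : ℝ) (ξ : ℚ) : Prop where
  exponent_le : ∀ k, (e k : ℝ) ≤ η k * s
  det_ne_zero : v 1 0 * v 2 1 - v 1 1 * v 2 0 ≠ 0
  abs_shear_le : ∀ k l, |shear α (fun j => (v j l : ℝ) / (q : ℝ) ^ e j) k| ≤ (q : ℝ) ^ (γ k * s)
  mem_plane : ∀ l, (v 0 l : ℝ) / (q : ℝ) ^ e 0 =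
    θ * ((v 1 l : ℝ) / (q : ℝ) ^ e 1) + ξ * ((v 2 l : ℝ) / (q : ℝ) ^ e 2)
  abs_sub_le : |ξ - α| ≤ (q : ℝ) ^ (-(c * s))

variable {ι : Type*} [Fintype ι] {q : ℕ} {α c ε D C₀ : ℝ} {η γ : Fin 3 → ℝ} {s d : ι → ℕ}
  {e : ι → Fin 3 → ℕ} {v : ι → Fin 3 → Fin 2 → ℤ} {θ : ι → ℝ} {ξ : ι → ℚ}
  {p : (ι → Fin 3 → ℕ) → ℤ}

lemma hasseSum_affine_eq_zero (hq : 0 < q)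
    (hpts : ∀ i, PlanePoints q α c η γ (s i) (e i) (v i) (θ i) (ξ i)) {S : Finset (ι → Fin 3 → ℕ)}
    {J : ι → Fin 3 → ℕ} (hvanish : hasseSum S p J
      (fun i k => linearForm i fun l => (v i k l : ℝ) / (q : ℝ) ^ e i k) = 0) :
    hasseSum S p J (fun i => ![C (θ i) * X i + C (ξ i : ℝ), X i, 1]) = 0 := by
  have : (q : ℝ) ≠ 0 := Nat.cast_ne_zero.2 hq.ne'
  set x : ι → Fin 3 → Fin 2 → ℝ := fun i k l => (v i k l : ℝ) / (q : ℝ) ^ e i k with hx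
  have hdet i : x i 1 0 * x i 2 1 - x i 1 1 * x i 2 0 ≠ 0 := by
    have : x i 1 0 * x i 2 1 - x i 1 1 * x i 2 0 =
        ((v i 1 0 * v i 2 1 - v i 1 1 * v i 2 0 : ℤ) : ℝ) / (q ^ e i 1 * q ^ e i 2) := by
      simp only [hx]
      push_cast
      field_simp
    rw [this]
    exact div_ne_zero (Int.cast_ne_zero.2 (hpts i).det_ne_zero) (by positivity)
  obtain ⟨φ, hφ⟩ := exists_algHom_linearForm hdet
  have hplane i : linearForm i (x i 0) =
      C (θ i) * linearForm i (x i 1) + C (ξ i : ℝ) * linearForm i (x i 2) := by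
    rw [← smul_eq_C_mul, ← smul_eq_C_mul, ← map_smul, ← map_smul, ← map_add]
    exact congrArg _ (funext (hpts i).mem_plane)
  have hφ₀ i : φ (linearForm i (x i 0)) = C (θ i) * X i + C (ξ i : ℝ) := by
    rw [hplane, map_add, map_mul, map_mul, (hφ i).1, (hφ i).2, mul_one, algHom_C, algHom_C]
    rfl
  have hmap := map_hasseSum φ.toRingHom S p J fun i k => linearForm i (x i k)
  rw [hvanish, map_zero] at hmap
  refine Eq.trans ?_ hmap.symm
  congr 1
  ext1 i
  ext1 k
  fin_cases k
  exacts [(hφ₀ i).symm, (hφ i).1.symm, (hφ i).2.symm]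

variable [DecidableEq ι]

lemma IsAuxiliaryForm.hasseSum_linearForm_eq_zero
    (hp : IsAuxiliaryForm d (balanced (fun i => (s i : ℝ)) d D ε) α C₀ p) (hq : 0 < q)
    (hD : 0 ≤ D) (hε : 0 ≤ ε) (hsd : ∀ i, (s i : ℝ) * d i = D) (hC₀ : 0 ≤ C₀)
    (hη : ∀ k, 0 ≤ η k)
    (hpts : ∀ i, PlanePoints q α c η γ (s i) (e i) (v i) (θ i) (ξ i))
    (hsmall : (128 * C₀ * max 1 |α|) ^ (∑ i, d i) < (q : ℝ) ^ (Fintype.card ι * D *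
      (-(∑ k, (γ k + η k)) / 3 - 3 * ε * ∑ k, (|γ k| + η k))))
    {J : ι →₀ ℕ} (hJ : Finsupp.weight (fun i => (s i : ℝ)) J ≤ ε * (Fintype.card ι * D)) :
    hasseSum (balanced (fun i => (s i : ℝ)) d D ε) p (fun i => Pi.single 0 (J i))
      (fun i k => linearForm i fun l => (v i k l : ℝ) / (q : ℝ) ^ e i k) = 0 := by
  have hq0 : (q : ℝ) ≠ 0 := Nat.cast_ne_zero.2 hq.ne'
  refine hasseSum_eq_zero hq (fun i => Nat.cast_nonneg _) hD hε hsd hC₀ hp (fun i => by simp)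
    (fun k => ?_) (fun i k => ?_) hη (fun i k => (hpts i).exponent_le k)
    (u := fun i k => linearForm i (v i k)) (fun i k => ?_) hsmall
  · by_cases hk : k = 0
    · simpa [hk, Finsupp.weight_apply, Finsupp.sum_fintype, mul_comm] using hJ
    · simpa [Pi.single_eq_of_ne hk] using by positivity
  · rw [shear_linearForm]
    simpa using l1Norm_linearForm_le i ((hpts i).abs_shear_le k)
  · rw [map_linearForm, ← smul_eq_C_mul, ← map_smul]
    congr 1
    ext l
    rw [Pi.smul_apply, smul_eq_mul, mul_div_cancel₀ _ (pow_ne_zero _ hq0), eq_intCast]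

end PlanePoints

section EventuallyNoPoints

lemma pow_sum_lt_rpow {ι : Type*} [Fintype ι] [Nonempty ι] {q A a D : ℝ} {s : ι → ℝ} {d : ι → ℕ}
    (hq : 0 ≤ q) (hA : 0 < A) (hd : ∀ i, 0 < d i) (hsd : ∀ i, s i * d i = D)
    (h : ∀ i, A < q ^ (a * s i)) : A ^ (∑ i, d i) < q ^ (Fintype.card ι * D * a) := by
  calc A ^ (∑ i, d i) = ∏ i, A ^ d i := (prod_pow_eq_pow_sum _ _ _).symm
    _ < ∏ _i : ι, q ^ (D * a) := prod_lt_prod_of_nonempty (fun i _ => pow_pos hA _)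
        (fun i _ => ?_) univ_nonempty
    _ = q ^ (Fintype.card ι * D * a) := by
        rw [prod_const, card_univ, ← Real.rpow_natCast, ← Real.rpow_mul hq]
        ring_nf
  calc A ^ d i < (q ^ (a * s i)) ^ d i := pow_lt_pow_left₀ (h i) hA.le (hd i).ne'
    _ = q ^ (D * a) := by
        rw [← Real.rpow_natCast, ← Real.rpow_mul hq, ← hsd i]
        ring_nf

lemma mul_sum_le_of_mul_card_le {ι : Type*} [Fintype ι] [Nonempty ι] {a b D : ℝ} {s : ι → ℝ}
    {d : ι → ℕ} (hsd : ∀ i, s i * d i = D) (h : ∀ i, a * Fintype.card ι ≤ b * s i) :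
    a * ∑ i, (d i : ℝ) ≤ b * D := by
  refine le_of_mul_le_mul_left ?_ (Nat.cast_pos.2 (Fintype.card_pos (α := ι)) : (0 : ℝ) < _)
  calc (Fintype.card ι : ℝ) * (a * ∑ i, (d i : ℝ)) = ∑ i, a * Fintype.card ι * d i := by
        rw [mul_sum, mul_sum]
        exact sum_congr rfl fun i _ => by ring
    _ ≤ ∑ _i : ι, b * D := sum_le_sum fun i _ => by
        rw [← hsd i, ← mul_assoc]
        exact mul_le_mul_of_nonneg_right (h i) (Nat.cast_nonneg _)
    _ = Fintype.card ι * (b * D) := by rw [sum_const, card_univ, nsmul_eq_mul]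

lemma IsAuxiliaryForm.exists_rothHypotheses {m : ℕ} [NeZero m] {s : Fin m → ℝ} {d : Fin m → ℕ}
    {S : Finset (Fin m → Fin 3 → ℕ)} {α C₀ D δ c' : ℝ} {p : (Fin m → Fin 3 → ℕ) → ℤ}
    {ξ : Fin m → ℚ} (hp : IsAuxiliaryForm d S α C₀ p) (hS : S ⊆ multidegrees d) (hC₀ : 1 ≤ C₀)
    (hs : ∀ i, 0 < s i) (hsδ : ∀ i j, i < j → s j ≤ δ * s i) (hδ : 0 ≤ δ) (hD : 0 < D)
    (hsd : ∀ i, s i * d i = D) (hc' : 0 < c') (hden : ∀ i, c' * s i ≤ Real.log (ξ i).den)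
    (hlarge : ∀ i, Real.log (4 * C₀) * m ≤ δ * c' * s i) :
    ∃ P, RothHypotheses δ s d D (Real.log (4 * C₀) * ∑ i, (d i : ℝ)) ξ P ∧
      ∀ (θ : Fin m → ℝ) (J : Fin m →₀ ℕ), hasseSum S p (fun i => Pi.single 0 (J i))
        (fun i => ![C (θ i) * X i + C (ξ i : ℝ), X i, 1]) = 0 → aeval ξ (hasseDeriv J P) = 0 := by
  obtain ⟨P, hP0, hPd, hPC, hPξ⟩ := hp.exists_polynomial hS (zero_le_one.trans hC₀)
  refine ⟨P, ⟨hs, hsδ, hD, fun i => (hsd i).le, ?_, hP0, hPd, hPC.trans_eq ?_, fun i => ?_,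
    fun i => ?_⟩, fun θ J => hPξ θ ξ J⟩
  · have : Real.exp 1 ≤ 4 * C₀ := by linarith [Real.exp_one_lt_d9]
    exact le_mul_of_one_le_left (sum_nonneg fun _ _ => Nat.cast_nonneg _)
      ((Real.le_log_iff_exp_le (by linarith)).2 this)
  · rw [← Nat.cast_sum, mul_comm (Real.log _), Real.exp_nat_mul, Real.exp_log (by linarith)]
  · have hlog : 0 < Real.log (ξ i).den := (mul_pos hc' (hs i)).trans_le (hden i)
    exact_mod_cast (Real.log_pos_iff (Nat.cast_nonneg _)).1 hlog
  · have hsum := mul_sum_le_of_mul_card_le hsd (by simpa using hlarge)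
    calc s i * (Real.log (4 * C₀) * ∑ i, (d i : ℝ)) ≤ s i * (δ * c' * D) :=
          mul_le_mul_of_nonneg_left hsum (hs i).le
      _ = δ * D * (c' * s i) := by ring
      _ ≤ δ * D * Real.log (ξ i).den := mul_le_mul_of_nonneg_left (hden i) (by positivity)

lemma exists_pos_mul_le {σ K : ℝ} (hσ : 0 < σ) (hK : 0 ≤ K) :
    ∃ ε > 0, σ / 12 ≤ σ / 3 - 3 * ε * K := by
  refine ⟨σ / (12 * (K + 1)), by positivity, ?_⟩
  have : σ / (12 * (K + 1)) * (12 * (K + 1)) = σ := div_mul_cancel₀ _ (by positivity)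
  have : 0 < σ / (12 * (K + 1)) := by positivity
  linarith

lemma exists_mul_eq_prod {m : ℕ} {s : Fin m → ℕ} (hs : ∀ i, 0 < s i) :
    ∃ d : Fin m → ℕ, (∀ i, 0 < d i) ∧ ∀ i, (s i : ℝ) * d i = ((∏ j, s j : ℕ) : ℝ) :=
  ⟨fun i => ∏ j ∈ univ.erase i, s j, fun _ => prod_pos fun j _ => hs j, fun i => by
    rw [← Nat.cast_mul, mul_prod_erase _ _ (mem_univ i)]⟩

lemma eventually_large {q a b : ℝ} (hq : 1 < q) (ha : 0 < a) (hb : 0 < b) (S A B : ℝ) :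
    ∀ᶠ s : ℕ in atTop, 0 < s ∧ S ≤ s ∧ A ≤ a * s ∧ B < q ^ (b * s) := by
  have htop : Tendsto (fun s : ℕ => (s : ℝ)) atTop atTop := tendsto_natCast_atTop_atTop
  exact (eventually_gt_atTop 0).and <| (htop.eventually_ge_atTop S).and <|
    ((htop.const_mul_atTop ha).eventually_ge_atTop A).and <|
    ((tendsto_rpow_atTop_of_base_gt_one _ hq).comp (htop.const_mul_atTop hb)).eventually_gt_atTop B

theorem eventually_not_planePoints {q : ℕ} (hq : 2 ≤ q) {α c : ℝ} (hirr : Irrational α)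
    (halg : IsAlgebraic ℚ α) (hc : 0 < c) {η γ : Fin 3 → ℝ} (hη : ∀ k, 0 ≤ η k)
    (hneg : ∑ k, (γ k + η k) < 0) :
    ∀ᶠ s : ℕ in atTop, ∀ e v θ ξ, ¬ PlanePoints q α c η γ s e v θ ξ := by
  by_contra! hfreq
  have hq0 : (0 : ℝ) < q := by positivity
  have hq1 : (1 : ℝ) < q := by exact_mod_cast hq
  obtain ⟨c', hc', S, hS⟩ := exists_mul_le_log_den hirr halg hq1 hc
  have hσ : 0 < -∑ k, (γ k + η k) := neg_pos.2 hneg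
  set σ := -∑ k, (γ k + η k)
  obtain ⟨ε, hε, hεσ⟩ := exists_pos_mul_le hσ
    (sum_nonneg fun k _ => add_nonneg (abs_nonneg (γ k)) (hη k))
  obtain ⟨m, hm, C₀, hC₀, hform⟩ := exists_isAuxiliaryForm halg hε
  have : NeZero m := ⟨hm.ne'⟩
  obtain ⟨δ, hδ, hroth⟩ := roth_lemma m (τ := ε * m) (by positivity)
  obtain ⟨s, hs, hsδ⟩ := exists_lacunary_sequence (hfreq.and_eventually <|
    eventually_large hq1 (mul_pos hδ hc') (by positivity : 0 < σ / 12) S (Real.log (4 * C₀) * m)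
      (128 * C₀ * max 1 |α|)) hδ m
  choose hpts hs0 hsS hsδC hsq using hs
  choose e v θ ξ hpts using hpts
  obtain ⟨d, hd, hsd⟩ := exists_mul_eq_prod hs0
  have hsmall := pow_sum_lt_rpow hq0.le (by positivity) hd hsd hsq
  have hD : (0 : ℝ) < (∏ i, s i : ℕ) := Nat.cast_pos.2 (prod_pos fun i _ => hs0 i)
  obtain ⟨p, hp⟩ := hform (fun i => s i) d _ hd hD hsd
  have hden i : c' * s i ≤ Real.log (ξ i).den := hS _ (hsS i) _ (hpts i).abs_sub_le
  obtain ⟨P, hP, hPθ⟩ := hp.exists_rothHypotheses (balanced_subset_multidegrees _ d _ ε) hC₀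
    (fun i => Nat.cast_pos.2 (hs0 i)) hsδ hδ.le hD hsd hc' hden hsδC
  obtain ⟨J, hJ, hJP⟩ := hroth hP
  exact hJP <| hPθ θ J <| hasseSum_affine_eq_zero (by omega) hpts <|
    hp.hasseSum_linearForm_eq_zero (by omega) hD.le hε.le hsd (by linarith) hη hpts
      (hsmall.trans_le <| Real.rpow_le_rpow_of_exponent_le hq1.le
        (mul_le_mul_of_nonneg_left hεσ (by positivity)))
      (by simpa [mul_assoc] using hJ)

end EventuallyNoPoints

section Repetitions

lemma exists_rat_abs_mul_den_sub_num_lt (β : ℝ) {Q : ℝ} (hQ : 1 ≤ Q) :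
    ∃ a : ℚ, (a.den : ℝ) ≤ Q ∧ |β * a.den - a.num| < Q⁻¹ := by
  obtain ⟨a, ha, hden⟩ := Real.exists_rat_abs_sub_le_and_den_le β (Nat.floor_pos.2 hQ)
  have ha0 : (0 : ℝ) < a.den := by exact_mod_cast a.pos
  refine ⟨a, (Nat.cast_le.2 hden).trans (Nat.floor_le (by positivity)), ?_⟩
  have hnum : (a : ℝ) * a.den = a.num := by exact_mod_cast Rat.mul_den_eq_num a
  calc |β * a.den - a.num| = |β - a| * a.den := by
        rw [← hnum, ← sub_mul, abs_mul, abs_of_pos ha0]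
    _ ≤ 1 / ((⌊Q⌋₊ + 1) * a.den) * a.den := by gcongr
    _ = ((⌊Q⌋₊ : ℝ) + 1)⁻¹ := by field_simp
    _ < Q⁻¹ := inv_strictAnti₀ (by positivity) (Nat.lt_floor_add_one Q)

variable {q : ℕ} {α ρ κ ε : ℝ}

lemma abs_div_pow_sub_mul_le (hq : 1 ≤ q) {v w a b : ℝ} {n : ℕ}
    (h : |α * (q : ℝ) ^ n * w - v| ≤ (q : ℝ) ^ a) (hab : a - n ≤ b) :
    |v / (q : ℝ) ^ n - α * w| ≤ (q : ℝ) ^ b := by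
  have hq0 : (0 : ℝ) < q := by positivity
  have hq1 : (1 : ℝ) ≤ q := by exact_mod_cast hq
  have hqn : (0 : ℝ) < (q : ℝ) ^ n := by positivity
  calc |v / (q : ℝ) ^ n - α * w| = |α * (q : ℝ) ^ n * w - v| / (q : ℝ) ^ n := by
        rw [← abs_of_pos hqn, ← abs_div, abs_of_pos hqn, abs_sub_comm]
        congr 1
        field_simp
    _ ≤ (q : ℝ) ^ a / (q : ℝ) ^ n := by gcongr
    _ = (q : ℝ) ^ (a - n) := by rw [Real.rpow_sub hq0, Real.rpow_natCast]
    _ ≤ (q : ℝ) ^ b := Real.rpow_le_rpow_of_exponent_le hq1 hab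

-- The second point only makes the configuration nondegenerate: its three forms are `0`, the
-- rounding error of `α * w`, and `0`.
lemma planePoints_of_approximation (hq : 1 ≤ q) {s r : ℕ} (hr : ρ * s ≤ r)
    (hr' : (r : ℝ) ≤ (ρ + ε) * s) {w v : ℤ} (hw : 0 < w) (hwκ : (w : ℝ) ≤ (q : ℝ) ^ (κ * s))
    (hv : |α * (q : ℝ) ^ r * w - v| ≤ (q : ℝ) ^ (-((κ + 2 * ε) * s))) :
    PlanePoints q α (ρ + κ + 2 * ε) ![ρ + ε, 0, 0] ![-(ρ + κ + 2 * ε), 0, κ] s ![r, 0, 0]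
      ![![v, 0], ![round (α * w), 1], ![w, 0]] 0 (v / (q ^ r * w)) := by
  have hq0 : (0 : ℝ) < q := by positivity
  have hw0 : (0 : ℝ) < w := by exact_mod_cast hw
  have hw1 : (1 : ℝ) ≤ w := by exact_mod_cast hw
  have hpt : |(v : ℝ) / (q : ℝ) ^ r - α * w| ≤ (q : ℝ) ^ (-(ρ + κ + 2 * ε) * s) :=
    abs_div_pow_sub_mul_le hq hv (by linarith)
  constructor
  case exponent_le => simpa [Fin.forall_fin_succ] using hr'
  case det_ne_zero => simpa using hw.ne'
  case abs_shear_le =>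
    have hround : |round (α * w) - α * w| ≤ 1 := by
      linarith [abs_sub_comm (α * w) (round (α * w)), abs_sub_round (α * w)]
    intro k l
    match k, l with
    | 0, 0 => simpa [shear] using hpt
    | 1, 0 => simpa [shear] using hround
    | 2, 0 => simpa [shear, abs_of_pos hw0] using hwκ
    | 0, 1 | 2, 1 => simpa [shear] using (Real.rpow_pos_of_pos hq0 _).le
    | 1, 1 => simp [shear]
  case mem_plane =>
    intro l
    match l with
    | 0 => simp; field_simp
    | 1 => simp
  case abs_sub_le =>
    have hslope : (v : ℝ) / ((q : ℝ) ^ r * w) - α = (v / (q : ℝ) ^ r - α * w) / w := by field_simp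
    push_cast
    rw [hslope, abs_div, abs_of_pos hw0, ← neg_mul]
    exact (div_le_self (abs_nonneg _) hw1).trans hpt

lemma eventually_lt_abs_mul_pow_mul_sub (hq : 2 ≤ q) (hirr : Irrational α)
    (halg : IsAlgebraic ℚ α) (hρ : 0 ≤ ρ) (hκ : 0 < κ) (hε : 0 < ε) :
    ∀ᶠ s : ℕ in atTop, ∀ r : ℕ, ρ * s ≤ r → (r : ℝ) ≤ (ρ + ε) * s → ∀ w v : ℤ, 0 < w →
      (w : ℝ) ≤ (q : ℝ) ^ (κ * s) →
        (q : ℝ) ^ (-((κ + 2 * ε) * s)) < |α * (q : ℝ) ^ r * w - v| := by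
  have hη : ∀ k, 0 ≤ (![ρ + ε, 0, 0] : Fin 3 → ℝ) k := by
    simpa [Fin.forall_fin_succ] using add_nonneg hρ hε.le
  filter_upwards [eventually_not_planePoints (c := ρ + κ + 2 * ε)
    (γ := ![-(ρ + κ + 2 * ε), 0, κ]) hq hirr halg (by positivity) hη
    (by simp [Fin.sum_univ_three]; linarith)] with s hs r hr hr' w v hw hwκ
  by_contra! hv
  exact hs _ _ _ _ (planePoints_of_approximation (by omega) hr hr' hw hwκ hv)

lemma abs_mul_pow_add_mul_sub_le (hq : 1 ≤ q) (hε : 0 ≤ ε) {s r : ℕ}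
    (hs : 2 ≤ (q : ℝ) ^ (ε * s)) {u v w : ℝ}
    (hu : |α * (q : ℝ) ^ r * ((q : ℝ) ^ s - 1) - u| ≤ (q : ℝ) ^ (-(2 * κ * s)))
    (hw : |w| ≤ (q : ℝ) ^ ((κ + 2 * ε) * s))
    (hv : |α * (q : ℝ) ^ r * w - v| ≤ (q : ℝ) ^ (-(κ * s))) :
    |α * (q : ℝ) ^ (r + s) * w - (v + u * w)| ≤ (q : ℝ) ^ (-((κ - 3 * ε) * s)) := by
  have hq0 : (0 : ℝ) < q := by positivity
  have hq1 : (1 : ℝ) ≤ q := by exact_mod_cast hq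
  calc |α * (q : ℝ) ^ (r + s) * w - (v + u * w)|
      = |(α * (q : ℝ) ^ r * w - v) + w * (α * (q : ℝ) ^ r * ((q : ℝ) ^ s - 1) - u)| := by
        congr 1; ring
    _ ≤ |α * (q : ℝ) ^ r * w - v| + |w| * |α * (q : ℝ) ^ r * ((q : ℝ) ^ s - 1) - u| := by
        rw [← abs_mul]; exact abs_add_le _ _
    _ ≤ (q : ℝ) ^ (-(κ * s)) + (q : ℝ) ^ ((κ + 2 * ε) * s) * (q : ℝ) ^ (-(2 * κ * s)) := by gcongr
    _ ≤ (q : ℝ) ^ (-((κ - 2 * ε) * s)) + (q : ℝ) ^ (-((κ - 2 * ε) * s)) := by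
        rw [← Real.rpow_add hq0]
        gcongr <;> linarith [show 0 ≤ ε * s by positivity]
    _ ≤ (q : ℝ) ^ (ε * s) * (q : ℝ) ^ (-((κ - 2 * ε) * s)) := by rw [← two_mul]; gcongr
    _ = (q : ℝ) ^ (-((κ - 3 * ε) * s)) := by rw [← Real.rpow_add hq0]; congr 1; ring

lemma abs_mul_pow_add_sub_le (hq : 1 ≤ q) (hα : |α| ≤ 1) (hκ : 0 ≤ κ) {s r : ℕ}
    (hs : 2 ≤ (q : ℝ) ^ (ε * s)) {u : ℝ}
    (hu : |α * (q : ℝ) ^ r * ((q : ℝ) ^ s - 1) - u| ≤ (q : ℝ) ^ (-(2 * κ * s))) :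
    |α * (q : ℝ) ^ (r + s) - u| ≤ (q : ℝ) ^ (ε * s + r) := by
  have hq0 : (0 : ℝ) < q := by positivity
  have hq1 : (1 : ℝ) ≤ q := by exact_mod_cast hq
  calc |α * (q : ℝ) ^ (r + s) - u|
      = |(α * (q : ℝ) ^ r * ((q : ℝ) ^ s - 1) - u) + α * (q : ℝ) ^ r| := by congr 1; ring
    _ ≤ 1 + |α| * (q : ℝ) ^ r := by
        refine (abs_add_le _ _).trans (add_le_add (hu.trans ?_) (by simp [abs_mul]))
        exact Real.rpow_le_one_of_one_le_of_nonpos hq1 (neg_nonpos.2 (by positivity))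
    _ ≤ (q : ℝ) ^ r + 1 * (q : ℝ) ^ r := by gcongr; exact one_le_pow₀ hq1
    _ ≤ (q : ℝ) ^ (ε * s) * (q : ℝ) ^ r := by rw [one_mul, ← two_mul]; gcongr
    _ = (q : ℝ) ^ (ε * s + r) := by rw [Real.rpow_add hq0, Real.rpow_natCast]

lemma planePoints_of_repetition (hq : 1 ≤ q) (hα : |α| ≤ 1) (hκ : 0 ≤ κ) (hε : 0 ≤ ε) {s r : ℕ}
    (hs : 2 ≤ (q : ℝ) ^ (ε * s)) (hr : ρ * s ≤ r) (hr' : (r : ℝ) ≤ (ρ + ε) * s) {p : ℤ}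
    (hp : |α * (q : ℝ) ^ r * ((q : ℝ) ^ s - 1) - p| ≤ (q : ℝ) ^ (-(2 * κ * s)))
    {a : Fin 2 → ℚ} (ha : a 0 ≠ a 1) (hden : ∀ l, ((a l).den : ℝ) ≤ (q : ℝ) ^ ((κ + 2 * ε) * s))
    (hnum : ∀ l, |α * (q : ℝ) ^ r * (a l).den - (a l).num| ≤ (q : ℝ) ^ (-(κ * s))) :
    PlanePoints q α (1 - ε) ![ρ + ε + 1, ρ + ε, 0] ![-(κ - 3 * ε + ρ + 1), -(κ + ρ), κ + 2 * ε] s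
      ![r + s, r, 0] ![fun l => (a l).num + p * (a l).den, fun l => (a l).num, fun l => (a l).den]
      (1 / (q : ℝ) ^ s) (p / q ^ (r + s)) := by
  constructor
  case exponent_le =>
    have hrs : (r : ℝ) + s ≤ (ρ + ε + 1) * s := by linarith
    simpa [Fin.forall_fin_succ] using ⟨hrs, hr'⟩
  case det_ne_zero =>
    exact sub_ne_zero.2 fun h => ha (Rat.eq_iff_mul_eq_mul.2 h)
  case abs_shear_le =>
    intro k l
    match k with
    | 0 =>
      have hlong := abs_mul_pow_add_mul_sub_le hq hε hs hp (by simpa using hden l) (hnum l)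
      simpa [shear] using abs_div_pow_sub_mul_le hq hlong (b := -(κ - 3 * ε + ρ + 1) * s)
        (by push_cast; linarith)
    | 1 => simpa [shear] using abs_div_pow_sub_mul_le hq (hnum l) (b := -(κ + ρ) * s) (by linarith)
    | 2 => simpa [shear] using hden l
  case mem_plane =>
    intro l
    simp [pow_add]
    field_simp
  case abs_sub_le =>
    have hslope := abs_mul_pow_add_sub_le hq hα hκ hs hp
    rw [← mul_one (α * _)] at hslope
    simpa using abs_div_pow_sub_mul_le hq hslope (b := -((1 - ε) * s)) (by push_cast; linarith)

-- A near-repetition sends every good approximation `n / d` of `α * q ^ r` to a point of the plane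
-- `v 0 / q ^ (r + s) = (v 1 / q ^ r) / q ^ s + p / q ^ (r + s) * v 2`. Dirichlet's theorem with
-- two bounds on `d` gives two such points, distinct because `n / d` with the smaller bound on `d`
-- cannot be as good as the other.
lemma eventually_lt_abs_mul_pow_mul_pow_sub_one_sub_of_le (hq : 2 ≤ q) (hα : |α| ≤ 1)
    (hirr : Irrational α) (halg : IsAlgebraic ℚ α) (hρ : 0 ≤ ρ) (hε : 0 < ε) (hε1 : ε < 1)
    (hεκ : 7 * ε < κ) :
    ∀ᶠ s : ℕ in atTop, ∀ r : ℕ, ρ * s ≤ r → (r : ℝ) ≤ (ρ + ε) * s → ∀ p : ℤ,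
      (q : ℝ) ^ (-(2 * κ * s)) < |α * (q : ℝ) ^ r * ((q : ℝ) ^ s - 1) - p| := by
  have hκ : 0 < κ := by linarith
  have hq1 : (1 : ℝ) < q := by exact_mod_cast hq
  have hη : ∀ k, 0 ≤ (![ρ + ε + 1, ρ + ε, 0] : Fin 3 → ℝ) k := by
    have := add_nonneg hρ hε.le
    simpa [Fin.forall_fin_succ] using ⟨add_nonneg this zero_le_one, this⟩
  have hpow : ∀ᶠ s : ℕ in atTop, 2 ≤ (q : ℝ) ^ (ε * s) :=
    ((tendsto_rpow_atTop_of_base_gt_one _ hq1).comp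
      (tendsto_natCast_atTop_atTop.const_mul_atTop hε)).eventually_ge_atTop 2
  filter_upwards [hpow, eventually_lt_abs_mul_pow_mul_sub hq hirr halg hρ hκ hε,
    eventually_not_planePoints (c := 1 - ε) (γ := ![-(κ - 3 * ε + ρ + 1), -(κ + ρ), κ + 2 * ε])
      hq hirr halg (by linarith) hη (by simp [Fin.sum_univ_three]; linarith)]
    with s hs hridout hplane r hr hr' p
  by_contra! hp
  have hmono : (q : ℝ) ^ (κ * s) ≤ (q : ℝ) ^ ((κ + 2 * ε) * s) := by
    gcongr
    · exact hq1.le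
    · linarith
  have dirichlet (κ' : ℝ) (hκ' : 0 ≤ κ') : ∃ a : ℚ, (a.den : ℝ) ≤ (q : ℝ) ^ (κ' * s) ∧
      |α * (q : ℝ) ^ r * a.den - a.num| < (q : ℝ) ^ (-(κ' * s)) := by
    rw [Real.rpow_neg (by positivity)]
    exact exists_rat_abs_mul_den_sub_num_lt _ (Real.one_le_rpow hq1.le (by positivity))
  obtain ⟨a, ha, ha'⟩ := dirichlet κ hκ.le
  obtain ⟨b, hb, hb'⟩ := dirichlet (κ + 2 * ε) (by positivity)
  have hab : a ≠ b := by
    rintro rfl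
    exact hb'.not_gt (hridout r hr hr' a.den a.num (by exact_mod_cast a.pos) (by exact_mod_cast ha))
  refine hplane _ _ _ _ (planePoints_of_repetition (a := ![a, b]) (by omega) hα hκ.le hε.le hs hr
    hr' hp hab (Fin.forall_fin_two.2 ⟨ha.trans hmono, hb⟩) (Fin.forall_fin_two.2 ⟨ha'.le, ?_⟩))
  refine hb'.le.trans ?_
  gcongr
  · exact hq1.le
  · linarith

theorem eventually_lt_abs_mul_pow_mul_pow_sub_one_sub (hq : 2 ≤ q) (hα : |α| ≤ 1)
    (hirr : Irrational α) (halg : IsAlgebraic ℚ α) (M : ℝ) (hκ : 0 < κ) :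
    ∀ᶠ s : ℕ in atTop, ∀ r : ℕ, r ≤ M * s → ∀ p : ℤ,
      (q : ℝ) ^ (-(2 * κ * s)) < |α * (q : ℝ) ^ r * ((q : ℝ) ^ s - 1) - p| := by
  obtain ⟨ε, hε, hε1, hεκ⟩ : ∃ ε : ℝ, 0 < ε ∧ ε < 1 ∧ 7 * ε < κ :=
    ⟨min 1 κ / 8, by positivity, by linarith [min_le_left 1 κ],
      by linarith [min_le_right 1 κ, lt_min one_pos hκ]⟩
  have hcells : ∀ᶠ s : ℕ in atTop, ∀ k ∈ range (⌊M / ε⌋₊ + 1), ∀ r : ℕ, k * ε * s ≤ r →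
      (r : ℝ) ≤ (k * ε + ε) * s → ∀ p : ℤ,
        (q : ℝ) ^ (-(2 * κ * s)) < |α * (q : ℝ) ^ r * ((q : ℝ) ^ s - 1) - p| :=
    (eventually_all_finset _).2 fun k _ =>
      eventually_lt_abs_mul_pow_mul_pow_sub_one_sub_of_le hq hα hirr halg (by positivity) hε hε1 hεκ
  filter_upwards [hcells, eventually_gt_atTop 0] with s hs hs0 r hr
  have hlow := Nat.floor_le (show 0 ≤ r / (s * ε) by positivity)
  have hup := Nat.lt_floor_add_one (r / (s * ε))
  rw [le_div_iff₀ (by positivity)] at hlow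
  rw [div_lt_iff₀ (by positivity)] at hup
  refine hs ⌊r / (s * ε)⌋₊ (mem_range_succ_iff.2 (Nat.floor_le_floor ?_)) r (by linarith)
    (by linarith)
  rw [div_le_div_iff₀ (by positivity) hε]
  linear_combination ε * hr

end Repetitions

section Digits

variable {q : ℕ} {x : ℝ}

lemma floor_mul_pow_succ (hq : q ≠ 0) (x : ℝ) (k : ℕ) :
    ⌊x * (q : ℝ) ^ (k + 1)⌋₊ = q * ⌊x * (q : ℝ) ^ k⌋₊ + qdigit q x k := by
  have hdiv : ⌊x * (q : ℝ) ^ k⌋₊ = ⌊x * (q : ℝ) ^ (k + 1)⌋₊ / q := by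
    rw [← Nat.floor_div_natCast, pow_succ, ← mul_assoc, mul_div_cancel_right₀ _ (by positivity)]
  rw [qdigit, Int.floor_toNat, hdiv, Nat.div_add_mod]

lemma floor_mul_pow_add_eq_of_qdigit_eq (hq : q ≠ 0) {r t h : ℕ}
    (heq : ∀ i < h, qdigit q x (r + i) = qdigit q x (t + i)) :
    ⌊x * (q : ℝ) ^ (r + h)⌋₊ + q ^ h * ⌊x * (q : ℝ) ^ t⌋₊ =
      ⌊x * (q : ℝ) ^ (t + h)⌋₊ + q ^ h * ⌊x * (q : ℝ) ^ r⌋₊ := by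
  induction h with
  | zero => simp [add_comm]
  | succ h ih =>
    rw [← add_assoc, ← add_assoc, floor_mul_pow_succ hq, floor_mul_pow_succ hq,
      heq h h.lt_succ_self, pow_succ]
    linear_combination q * ih fun i hi => heq i (hi.trans h.lt_succ_self)

lemma exists_abs_mul_pow_mul_pow_sub_one_sub_le_of_qdigit_eq (hq : q ≠ 0) (hx : 0 ≤ x)
    {r s h : ℕ} (heq : ∀ i < h, qdigit q x (r + i) = qdigit q x (r + s + i)) :
    ∃ p : ℤ, |x * (q : ℝ) ^ r * ((q : ℝ) ^ s - 1) - p| ≤ ((q : ℝ) ^ h)⁻¹ := by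
  have hfloor : (⌊x * (q : ℝ) ^ (r + h)⌋₊ : ℝ) + (q : ℝ) ^ h * ⌊x * (q : ℝ) ^ (r + s)⌋₊ =
      ⌊x * (q : ℝ) ^ (r + s + h)⌋₊ + (q : ℝ) ^ h * ⌊x * (q : ℝ) ^ r⌋₊ := by
    exact_mod_cast floor_mul_pow_add_eq_of_qdigit_eq hq heq
  have hqh : (0 : ℝ) < (q : ℝ) ^ h := by positivity
  have hfract (k : ℕ) : 0 ≤ x * (q : ℝ) ^ k - ⌊x * (q : ℝ) ^ k⌋₊ ∧
      x * (q : ℝ) ^ k - ⌊x * (q : ℝ) ^ k⌋₊ < 1 :=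
    ⟨sub_nonneg.2 (Nat.floor_le (by positivity)), sub_lt_iff_lt_add'.2 (Nat.lt_floor_add_one _)⟩
  refine ⟨⌊x * (q : ℝ) ^ (r + s)⌋₊ - ⌊x * (q : ℝ) ^ r⌋₊, ?_⟩
  rw [← one_div, le_div_iff₀ hqh, ← abs_of_pos hqh, ← abs_mul]
  calc _ = |(x * (q : ℝ) ^ (r + s + h) - ⌊x * (q : ℝ) ^ (r + s + h)⌋₊) -
        (x * (q : ℝ) ^ (r + h) - ⌊x * (q : ℝ) ^ (r + h)⌋₊)| := by
        congr 1
        push_cast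
        linear_combination (exp := 1) -hfloor
    _ ≤ 1 := abs_sub_le_of_nonneg_of_le (hfract _).1 (hfract _).2.le (hfract _).1 (hfract _).2.le

lemma exists_qdigit_eq_of_qComplexity_le (hq : q ≠ 0) {n N : ℕ} (hN : qComplexity q x n ≤ N) :
    ∃ r t : ℕ, r < t ∧ t ≤ N ∧ ∀ i < n, qdigit q x (r + i) = qdigit q x (t + i) := by
  have hfin : {w : Fin n → ℕ | ∃ k : ℕ, ∀ i : Fin n, qdigit q x (k + (i : ℕ)) = w i}.Finite := by
    refine (Set.Finite.pi' fun _ : Fin n => Set.finite_Iio q).subset ?_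
    rintro w ⟨k, hk⟩ i
    exact hk i ▸ Nat.mod_lt _ hq.bot_lt
  have hcard : hfin.toFinset.card < (range (N + 1)).card := by
    rw [card_range, ← Set.ncard_eq_toFinset_card _ hfin]
    exact Nat.lt_succ_of_le hN
  obtain ⟨a, ha, b, hb, hab, heq⟩ := exists_ne_map_eq_of_card_lt_of_maps_to hcard
    (f := fun k (i : Fin n) => qdigit q x (k + i))
    fun k _ => hfin.mem_toFinset.2 ⟨k, fun _ => rfl⟩
  wlog hlt : a < b generalizing a b
  · exact this b hb a ha hab.symm heq.symm (hab.lt_or_gt.resolve_left hlt)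
  exact ⟨a, b, hlt, mem_range_succ_iff.1 hb, fun i hi => congrFun heq ⟨i, hi⟩⟩

end Digits

section Words

variable {X : Type*} {f : ℕ → X} {n s : ℕ}

lemma eq_of_periodic_on (hf : ∀ i < n, f i = f (s + i)) (j i : ℕ) (hij : i + j * s < n + s) :
    f i = f (j * s + i) := by
  induction j with
  | zero => simp
  | succ j ih =>
    rw [Nat.succ_mul] at hij ⊢
    rw [ih (by omega), hf (j * s + i) (by omega)]
    congr 1
    ring

lemma exists_long_period_of_periodic_on (hf : ∀ i < n, f i = f (s + i)) (hs : 0 < s) :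
    ∃ t, n ≤ 4 * t ∧ t ≤ max n s ∧ ∀ i < n - n / 2, f i = f (t + i) := by
  by_cases hns : n ≤ 2 * s
  · exact ⟨s, by omega, le_max_right _ _, fun i hi => hf i (by omega)⟩
  have hlow := Nat.div_mul_le_self n (2 * s)
  have hup := Nat.lt_div_mul_add (a := n) (b := 2 * s) (by omega)
  have hpos : 1 ≤ n / (2 * s) := (Nat.one_le_div_iff (by omega)).2 (by omega)
  set j := n / (2 * s)
  have hmul : j * (2 * s) = 2 * (j * s) := by ring
  have hle : s ≤ j * s := Nat.le_mul_of_pos_left _ hpos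
  exact ⟨j * s, by omega, by omega, fun i hi => eq_of_periodic_on hf j i (by omega)⟩

end Words

section Complexity

variable {q C : ℕ} {x : ℝ}

lemma exists_qdigit_eq_qdigit_add_of_qComplexity_le (hq : q ≠ 0) (hC : 0 < C) {n : ℕ}
    (hN : qComplexity q x n ≤ C * n) :
    ∃ r t : ℕ, n ≤ 4 * t ∧ t ≤ C * n ∧ r ≤ C * n ∧
      ∀ i < n - n / 2, qdigit q x (r + i) = qdigit q x (r + t + i) := by
  obtain ⟨r, u, hru, hu, heq⟩ := exists_qdigit_eq_of_qComplexity_le hq hN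
  obtain ⟨s, rfl⟩ := exists_add_of_le hru.le
  obtain ⟨t, hnt, ht, hper⟩ := exists_long_period_of_periodic_on
    (f := fun i => qdigit q x (r + i)) (fun i hi => by simpa [add_assoc] using heq i hi)
    (by omega : 0 < s)
  refine ⟨r, t, hnt, ht.trans (max_le (Nat.le_mul_of_pos_left n hC) (by omega)), by omega, ?_⟩
  simpa [add_assoc] using hper

lemma exists_abs_mul_pow_mul_pow_sub_one_sub_le_of_qComplexity_le (hq : 1 ≤ q) (hx : 0 ≤ x)
    (hC : 0 < C) {n : ℕ} (hN : qComplexity q x n ≤ C * n) :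
    ∃ r t : ℕ, n ≤ 4 * t ∧ r ≤ 4 * C * t ∧ ∃ p : ℤ,
      |x * (q : ℝ) ^ r * ((q : ℝ) ^ t - 1) - p| ≤ (q : ℝ) ^ (-(2 * (1 / (4 * C)) * t : ℝ)) := by
  obtain ⟨r, t, hnt, ht, hr, heq⟩ :=
    exists_qdigit_eq_qdigit_add_of_qComplexity_le (by omega) hC hN
  obtain ⟨p, hp⟩ := exists_abs_mul_pow_mul_pow_sub_one_sub_le_of_qdigit_eq (by omega) hx heq
  refine ⟨r, t, hnt, ?_, p, hp.trans ?_⟩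
  · calc r ≤ C * n := hr
      _ ≤ C * (4 * t) := Nat.mul_le_mul_left C hnt
      _ = 4 * C * t := by ring
  have hexp : 2 * (1 / (4 * C)) * t ≤ ((n - n / 2 : ℕ) : ℝ) := by
    have hhalf : t ≤ C * (2 * (n - n / 2)) := ht.trans (Nat.mul_le_mul_left C (by omega))
    calc (2 * (1 / (4 * C)) * t : ℝ) = t / (2 * C) := by field_simp; norm_num
      _ ≤ ((n - n / 2 : ℕ) : ℝ) := by
        rw [div_le_iff₀ (by positivity)]
        exact_mod_cast hhalf.trans_eq (by ring)
  rw [← Real.rpow_natCast, ← Real.rpow_neg (by positivity)]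
  exact Real.rpow_le_rpow_of_exponent_le (by exact_mod_cast hq) (neg_le_neg hexp)

theorem eventually_mul_lt_qComplexity (hq : 2 ≤ q) (hx : x ∈ Set.Icc (0 : ℝ) 1)
    (hirr : Irrational x) (halg : IsAlgebraic ℚ x) (hC : 0 < C) :
    ∀ᶠ n in atTop, C * n < qComplexity q x n := by
  have hx1 : |x| ≤ 1 := abs_le.2 ⟨by linarith [hx.1], hx.2⟩
  obtain ⟨S, hS⟩ := eventually_atTop.1 <| eventually_lt_abs_mul_pow_mul_pow_sub_one_sub
    hq hx1 hirr halg (4 * C) (κ := 1 / (4 * C)) (by positivity)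
  filter_upwards [eventually_ge_atTop (4 * S)] with n hn
  by_contra! hN
  obtain ⟨r, t, hnt, hr, p, hp⟩ :=
    exists_abs_mul_pow_mul_pow_sub_one_sub_le_of_qComplexity_le (by omega) hx.1 hC hN
  exact hp.not_gt (hS t (by omega) r (by exact_mod_cast hr) p)

end Complexity

end AdamczewskiBugeaud

/-- **Adamczewski–Bugeaud**: if `x ∈ (0,1)` is an irrational algebraic number, then for every
base `q ≥ 2` the complexity function `p` of its base-`q` digit sequence satisfies
`liminf p n / n = +∞`. -/
theorem adamczewski_bugeaud_complexity (x : ℝ) (hx : x ∈ Set.Ioo (0 : ℝ) 1)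
    (hirr : Irrational x) (halg : IsAlgebraic ℚ x) :
    ∀ q : ℕ, 2 ≤ q →
      Filter.liminf
        (fun n : ℕ => (((qComplexity q x n : ℝ) / (n : ℝ) : ℝ) : EReal)) Filter.atTop = ⊤ := by
  intro q hq
  refine Tendsto.liminf_eq (EReal.tendsto_nhds_top_iff_real.2 fun y => ?_)
  obtain ⟨C, hC⟩ := exists_nat_gt (max y 0)
  have hC0 : 0 < C := by exact_mod_cast (le_max_right y 0).trans_lt hC
  filter_upwards [eventually_gt_atTop 0, AdamczewskiBugeaud.eventually_mul_lt_qComplexity hq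
    (Set.Ioo_subset_Icc_self hx) hirr halg hC0] with n hn hnC
  rw [EReal.coe_lt_coe_iff, lt_div_iff₀ (by exact_mod_cast hn)]
  calc y * n ≤ C * n := by gcongr; exact (le_max_left y 0).trans hC.le
    _ < qComplexity q x n := by exact_mod_cast hnC
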